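/- Suppose b : ℝ → ℝ is positive with b(T) → 0 as T → ∞, and suppose that for all sufficiently large T, every nontrivial zero ρ = β + iγ of the Riemann zeta function with T < γ ≤ 2T satisfies |β − 1/2| < b(T)/(2 log T). Then, as T → ∞, the number of nontrivial zeros ρ = β + iγ of ζ with T < γ ≤ 2T that are simple and satisfy β = 1/2 is at least (1/3 + o(1)) times the total number of nontrivial zeros ρ = β + iγ of ζ with T < γ ≤ 2T (zeros counted with multiplicity). -/

import Mathlib

open Filter Topology MeasureTheory Set

/-- The multiplicity of `ρ` as a zero of the Riemann zeta function:
the least `n` such that the `n`-th iterated derivative of `ζ` is nonzero at `ρ`. -/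
noncomputable def zetaMult (ρ : ℂ) : ℕ :=
  sInf {n : ℕ | iteratedDeriv n riemannZeta ρ ≠ 0}

/-- `ρ` is a nontrivial zero of the Riemann zeta function. -/
def IsNontrivialZero (ρ : ℂ) : Prop :=
  riemannZeta ρ = 0 ∧ 0 < ρ.re ∧ ρ.re < 1

/-- The set of nontrivial zeros `ρ = β + iγ` with `T < γ ≤ 2T`. -/
def zeroBand (T : ℝ) : Set ℂ :=
  {ρ | IsNontrivialZero ρ ∧ T < ρ.im ∧ ρ.im ≤ 2 * T}

/-- Number of nontrivial zeros with `T < γ ≤ 2T`, counted with multiplicity. -/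
noncomputable def Ntot (T : ℝ) : ℝ :=
  ∑ᶠ ρ ∈ zeroBand T, (zetaMult ρ : ℝ)

/-- Number of simple nontrivial zeros with `T < γ ≤ 2T`. -/
noncomputable def Nsimple (T : ℝ) : ℝ :=
  ∑ᶠ ρ ∈ {ρ ∈ zeroBand T | zetaMult ρ = 1}, (1 : ℝ)

/-- Number of nontrivial zeros with `T < γ ≤ 2T` on the critical line, with multiplicity. -/
noncomputable def Nline (T : ℝ) : ℝ :=
  ∑ᶠ ρ ∈ {ρ ∈ zeroBand T | ρ.re = 1/2}, (zetaMult ρ : ℝ)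

/-- Number of simple critical-line nontrivial zeros with `T < γ ≤ 2T`. -/
noncomputable def NlineSimple (T : ℝ) : ℝ :=
  ∑ᶠ ρ ∈ {ρ ∈ zeroBand T | ρ.re = 1/2 ∧ zetaMult ρ = 1}, (1 : ℝ)

/-!
Following Montgomery's pair correlation method, pair the zeros `ρ = 1/2 + x + iγ` with an even test
function supported on `[-A, A]`, where `A = (24/25) log T`. By the explicit formula, the sum of the
resulting kernels `symmKernel A x (γ - t)` over all zeros is, up to a bounded error,
`log t` minus a Dirichlet polynomial of length `e^A ≤ T^(24/25)`. Integrating over `T ≤ t ≤ 2T`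
gives `2π N(T) ~ T log T` for the number `N(T)` of zeros in the band. In the mean square, the
length of the polynomial makes its off-diagonal terms negligible, and Mertens' theorem evaluates
the diagonal.

The same mean square is a double sum over zeros. Since the zeros are within a small multiple of
`1 / log T` of the critical line, the correlations of the kernels are positive, as on the line
itself, and the pairs with `γ = γ'` alone are bounded by the total: their number, with multiplicity,
is at most `5/3 N(T)`. A zero off the line shares its ordinate with its reflection `1 - conj ρ`, and
a multiple zero with itself, so this number is at least `2 N(T)` minus the number of simple
critical zeros, which is therefore at least `N(T) / 3`.
-/

/-! ### Entire functions of order less than two -/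

section EntireFunctions

open Metric

variable {f : ℂ → ℂ}

lemma exists_differentiable_eq_pow_mul (hf : Differentiable ℂ f) {ρ : ℂ} {n : ℕ}
    (hn : analyticOrderAt f ρ = n) :
    ∃ g : ℂ → ℂ, Differentiable ℂ g ∧ g ρ ≠ 0 ∧ ∀ s, f s = (s - ρ) ^ n * g s := by
  induction n generalizing f with
  | zero => exact ⟨f, hf, (hf.analyticAt ρ).analyticOrderAt_eq_zero.1 hn, fun s ↦ by simp⟩
  | succ n ih =>
    have hfρ : f ρ = 0 := by
      by_contra h
      rw [(hf.analyticAt ρ).analyticOrderAt_eq_zero.2 h] at hn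
      exact n.succ_ne_zero (by exact_mod_cast hn.symm)
    have hd : Differentiable ℂ (dslope f ρ) := by
      rw [← differentiableOn_univ] at hf ⊢
      exact (Complex.differentiableOn_dslope univ_mem).2 hf
    have hmul : f = (fun s ↦ s - ρ) * dslope f ρ := by
      ext s
      simpa using (sub_smul_dslope_of_zero hfρ s).symm
    have hord : analyticOrderAt (dslope f ρ) ρ = n := by
      have h := analyticOrderAt_mul (f := fun s ↦ s - ρ) (by fun_prop) (hd.analyticAt ρ)
      have hlin : analyticOrderAt (fun s ↦ s - ρ) ρ = 1 := by
        simp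
      rw [← hmul, hn, hlin, Nat.cast_add_one, add_comm] at h
      exact (ENat.add_right_injective_of_ne_top ENat.one_ne_top h).symm
    obtain ⟨g, hg, hgρ, hfg⟩ := ih hd hord
    refine ⟨g, hg, hgρ, fun s ↦ ?_⟩
    rw [congrFun hmul s, Pi.mul_apply, hfg, pow_succ']
    ring

lemma exists_differentiable_eq_prod_pow_mul (hf : Differentiable ℂ f) (Z : Finset ℂ)
    (htop : ∀ ρ ∈ Z, analyticOrderAt f ρ ≠ ⊤) :
    ∃ g : ℂ → ℂ, Differentiable ℂ g ∧ (∀ ρ ∈ Z, g ρ ≠ 0) ∧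
      ∀ s, f s = (∏ ρ ∈ Z, (s - ρ) ^ analyticOrderNatAt f ρ) * g s := by
  classical
  induction Z using Finset.induction_on with
  | empty => exact ⟨f, hf, by simp, by simp⟩
  | insert a Z ha ih =>
    obtain ⟨g, hg, hgZ, hfg⟩ := ih fun ρ hρ ↦ htop ρ (Finset.mem_insert_of_mem hρ)
    let P : ℂ → ℂ := fun s ↦ ∏ ρ ∈ Z, (s - ρ) ^ analyticOrderNatAt f ρ
    have hP : Differentiable ℂ P := by fun_prop
    have hPa : P a ≠ 0 := Finset.prod_ne_zero_iff.2 fun ρ hρ ↦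
      pow_ne_zero _ (sub_ne_zero.2 (ne_of_mem_of_not_mem hρ ha).symm)
    have hord : analyticOrderAt g a = analyticOrderNatAt f a := by
      have h := analyticOrderAt_mul (hP.analyticAt a) (hg.analyticAt a)
      rw [← show f = P * g from funext hfg,
        (hP.analyticAt a).analyticOrderAt_eq_zero.2 hPa, zero_add] at h
      rw [← h, Nat.cast_analyticOrderNatAt (htop a (Finset.mem_insert_self a Z))]
    obtain ⟨g', hg', hg'a, hgg'⟩ := exists_differentiable_eq_pow_mul hg hord
    refine ⟨g', hg', Finset.forall_mem_insert _ _ _ |>.2 ⟨hg'a, fun ρ hρ h ↦ ?_⟩, fun s ↦ ?_⟩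
    · exact hgZ ρ hρ (by rw [hgg', h, mul_zero])
    · rw [Finset.prod_insert ha, hfg, hgg']
      ring

lemma exists_eq_mul_exp_of_forall_ne_zero {H : ℂ → ℂ} {c : ℂ} {r : ℝ} (hr : 0 < r)
    (hH : DifferentiableOn ℂ H (ball c r)) (hne : ∀ s ∈ ball c r, H s ≠ 0) :
    ∃ l : ℂ → ℂ, (∀ s ∈ ball c r, HasDerivAt l (logDeriv H s) s) ∧ l c = 0 ∧
      ∀ s ∈ ball c r, H s = H c * Complex.exp (l s) := by
  have hc : c ∈ ball c r := mem_ball_self hr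
  have hld : DifferentiableOn ℂ (logDeriv H) (ball c r) :=
    (hH.deriv isOpen_ball).div hH hne
  obtain ⟨l₀, hl₀⟩ := hld.isExactOn_ball
  refine ⟨fun s ↦ l₀ s - l₀ c, fun s hs ↦ (hl₀ s hs).sub_const _, sub_self _, fun s hs ↦ ?_⟩
  have hderiv : ∀ s ∈ ball c r, HasDerivAt (fun s ↦ H s * Complex.exp (-l₀ s)) 0 s := by
    intro s hs
    have h := ((hH s hs).differentiableAt (isOpen_ball.mem_nhds hs)).hasDerivAt.mul
      (hl₀ s hs).neg.cexp
    refine h.congr_deriv ?_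
    rw [logDeriv_apply]
    have := hne s hs
    field_simp
    ring
  have hconst := isOpen_ball.is_const_of_deriv_eq_zero (convex_ball c r).isPreconnected
    (fun z hz ↦ (hderiv z hz).differentiableAt.differentiableWithinAt)
    (fun z hz ↦ (hderiv z hz).deriv) hs hc
  simp only [Complex.exp_neg] at hconst
  rw [Complex.exp_sub]
  have h₁ := Complex.exp_ne_zero (l₀ s)
  have h₂ := Complex.exp_ne_zero (l₀ c)
  field_simp at hconst ⊢
  linear_combination hconst

lemma norm_logDeriv_le_of_forall_ne_zero {H : ℂ → ℂ} {r B : ℝ} (hr : 0 < r) (hB : 0 < B)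
    (hH : DifferentiableOn ℂ H (ball 0 (4 * r))) (hne : ∀ s ∈ ball 0 (4 * r), H s ≠ 0)
    (hbd : ∀ s ∈ ball 0 (4 * r), ‖H s‖ ≤ ‖H 0‖ * Real.exp B) {z : ℂ} (hz : ‖z‖ ≤ r) :
    ‖logDeriv H z‖ ≤ 2 * B / r := by
  obtain ⟨l, hderiv, hl0, hexp⟩ :=
    exists_eq_mul_exp_of_forall_ne_zero (c := 0) (by positivity) hH hne
  have hH0 : 0 < ‖H 0‖ := norm_pos_iff.2 (hne 0 (by simpa))
  have hre : MapsTo l (ball 0 (4 * r)) {w | w.re ≤ B} := by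
    intro w hw
    have h := hbd w hw
    rw [hexp w hw, norm_mul, Complex.norm_exp] at h
    exact Real.exp_le_exp.1 (le_of_mul_le_mul_left h hH0)
  have hl : ∀ w, ‖w‖ ≤ 2 * r → ‖l w‖ ≤ 2 * B := by
    intro w hw
    refine (Complex.borelCaratheodory_zero hB
      (fun s hs ↦ (hderiv s hs).differentiableAt.differentiableWithinAt) hre (by positivity)
      (mem_ball_zero_iff.2 (by linarith)) hl0).trans ?_
    rw [div_le_iff₀ (by linarith)]
    nlinarith
  have hsub : closedBall z r ⊆ closedBall 0 (2 * r) := by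
    intro w hw
    rw [mem_closedBall, dist_eq_norm] at hw
    rw [mem_closedBall_zero_iff]
    linarith [norm_le_norm_add_norm_sub' w z]
  have hlt : closedBall (0 : ℂ) (2 * r) ⊆ ball 0 (4 * r) := closedBall_subset_ball (by linarith)
  rw [← (hderiv z (hlt (hsub (mem_closedBall_self hr.le)))).deriv]
  refine Complex.norm_deriv_le_of_forall_mem_sphere_norm_le hr
    (DifferentiableOn.diffContOnCl fun w hw ↦ ?_)
    fun w hw ↦ hl w (mem_closedBall_zero_iff.1 (hsub (sphere_subset_closedBall hw)))
  exact (hderiv w (hlt (hsub (closure_ball_subset_closedBall hw)))).differentiableAt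
    |>.differentiableWithinAt

lemma norm_logDeriv_sub_le_of_forall_ne_zero {H : ℂ → ℂ} {r B : ℝ} (hr : 0 < r) (hB : 0 < B)
    (hH : DifferentiableOn ℂ H (ball 0 (8 * r))) (hne : ∀ s ∈ ball 0 (8 * r), H s ≠ 0)
    (hbd : ∀ s ∈ ball 0 (8 * r), ‖H s‖ ≤ ‖H 0‖ * Real.exp B) {s₁ s₂ : ℂ}
    (h₁ : ‖s₁‖ ≤ r) (h₂ : ‖s₂‖ ≤ r) :
    ‖logDeriv H s₁ - logDeriv H s₂‖ ≤ B / r ^ 2 * ‖s₁ - s₂‖ := by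
  have hld : DifferentiableOn ℂ (logDeriv H) (ball 0 (8 * r)) :=
    (hH.deriv isOpen_ball).div hH hne
  have hball : ball (0 : ℂ) (4 * (2 * r)) = ball 0 (8 * r) := by ring_nf
  have hlog : ∀ w ∈ closedBall (0 : ℂ) (2 * r), ‖logDeriv H w‖ ≤ B / r := by
    intro w hw
    refine (norm_logDeriv_le_of_forall_ne_zero (r := 2 * r) (by positivity) hB (hball ▸ hH)
      (hball ▸ hne) (hball ▸ hbd) (mem_closedBall_zero_iff.1 hw)).trans_eq ?_
    field_simp
  have hsub : ∀ z ∈ closedBall (0 : ℂ) r, closedBall z r ⊆ closedBall 0 (2 * r) := by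
    intro z hz w hw
    rw [mem_closedBall, dist_eq_norm] at hw
    rw [mem_closedBall_zero_iff] at hz ⊢
    linarith [norm_le_norm_add_norm_sub' w z]
  have hlt : closedBall (0 : ℂ) (2 * r) ⊆ ball 0 (8 * r) := closedBall_subset_ball (by linarith)
  have hderiv : ∀ z ∈ closedBall (0 : ℂ) r, ‖deriv (logDeriv H) z‖ ≤ B / r ^ 2 := by
    intro z hz
    refine (Complex.norm_deriv_le_of_forall_mem_sphere_norm_le hr
      (DifferentiableOn.diffContOnCl (hld.mono fun w hw ↦
        hlt (hsub z hz (closure_ball_subset_closedBall hw))))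
      fun w hw ↦ hlog w (hsub z hz (sphere_subset_closedBall hw))).trans_eq ?_
    field_simp
  refine (convex_closedBall (0 : ℂ) r).norm_image_sub_le_of_norm_deriv_le (fun z hz ↦ ?_) hderiv
    (mem_closedBall_zero_iff.2 h₂) (mem_closedBall_zero_iff.2 h₁)
  exact hld.differentiableAt (isOpen_ball.mem_nhds (hlt (hsub z hz
    (mem_closedBall_self hr.le))))

lemma analyticOrderAt_ne_top_of_ne_zero (hf : Differentiable ℂ f) {w : ℂ} (hw : f w ≠ 0) (ρ : ℂ) :
    analyticOrderAt f ρ ≠ ⊤ := by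
  intro h
  have hfreq : ∃ᶠ z in 𝓝[≠] ρ, f z = 0 :=
    ((analyticOrderAt_eq_top.1 h).filter_mono nhdsWithin_le_nhds).frequently
  exact hw (AnalyticOnNhd.eqOn_zero_of_preconnected_of_frequently_eq_zero
    (fun z _ ↦ hf.analyticAt z) isPreconnected_univ (mem_univ ρ) hfreq (mem_univ w))

lemma finite_zeros_closedBall (hf : Differentiable ℂ f) {w : ℂ} (hw : f w ≠ 0) (R : ℝ) :
    {s ∈ closedBall (0 : ℂ) R | f s = 0}.Finite := by
  by_contra hinf
  obtain ⟨z, -, hacc⟩ := (Set.not_finite.1 hinf).exists_accPt_of_subset_isCompact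
    (isCompact_closedBall (0 : ℂ) R) (fun s hs ↦ hs.1)
  have hfreq : ∃ᶠ z in 𝓝[≠] z, f z = 0 :=
    (accPt_iff_frequently_nhdsNE.1 hacc).mono fun w hw ↦ hw.2
  exact hw (AnalyticOnNhd.eqOn_zero_of_preconnected_of_frequently_eq_zero
    (fun z _ ↦ hf.analyticAt z) isPreconnected_univ (mem_univ z) hfreq (mem_univ w))

lemma logDeriv_prod_sub_pow_mul {Z : Finset ℂ} {m : ℂ → ℕ} {g : ℂ → ℂ} {s : ℂ}
    (hg : DifferentiableAt ℂ g s) (hgs : g s ≠ 0) (hs : s ∉ Z) :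
    logDeriv (fun z ↦ (∏ ρ ∈ Z, (z - ρ) ^ m ρ) * g z) s =
      ∑ ρ ∈ Z, (m ρ : ℂ) * (1 / (s - ρ)) + logDeriv g s := by
  have hsZ : ∀ ρ ∈ Z, (s - ρ) ^ m ρ ≠ 0 := fun ρ hρ ↦
    pow_ne_zero _ (sub_ne_zero.2 (ne_of_mem_of_not_mem hρ hs).symm)
  rw [logDeriv_mul (f := fun z ↦ ∏ ρ ∈ Z, (z - ρ) ^ m ρ) s (Finset.prod_ne_zero_iff.2 hsZ) hgs
    (by fun_prop) hg, logDeriv_prod hsZ (by fun_prop)]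
  congr 1
  refine Finset.sum_congr rfl fun ρ _ ↦ ?_
  rw [logDeriv_fun_pow (by fun_prop), logDeriv_apply]
  simp

lemma one_le_norm_one_sub_div {s ρ : ℂ} (hρ : ρ ≠ 0) (h : 2 * ‖ρ‖ ≤ ‖s‖) : 1 ≤ ‖1 - s / ρ‖ := by
  have h2 : 2 ≤ ‖s / ρ‖ := by rwa [norm_div, le_div_iff₀ (norm_pos_iff.2 hρ)]
  have := norm_sub_norm_le (s / ρ) 1
  rw [norm_one, norm_sub_rev] at this
  linarith

/-- The zeros of a nonzero entire function in the closed ball of radius `R` about the origin. -/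
noncomputable def zerosInBall (hf : Differentiable ℂ f) {w : ℂ} (hw : f w ≠ 0) (R : ℝ) :
    Finset ℂ :=
  (finite_zeros_closedBall hf hw R).toFinset

lemma mem_zerosInBall (hf : Differentiable ℂ f) {w : ℂ} (hw : f w ≠ 0) {R : ℝ} {ρ : ℂ} :
    ρ ∈ zerosInBall hf hw R ↔ ‖ρ‖ ≤ R ∧ f ρ = 0 := by
  simp [zerosInBall]

lemma prod_sub_pow_eq_prod_one_sub_div_pow_mul {Z : Finset ℂ} (hZ : ∀ ρ ∈ Z, ρ ≠ 0) (m : ℂ → ℕ)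
    (s : ℂ) :
    ∏ ρ ∈ Z, (s - ρ) ^ m ρ = (∏ ρ ∈ Z, (1 - s / ρ) ^ m ρ) * ∏ ρ ∈ Z, (-ρ) ^ m ρ := by
  rw [← Finset.prod_mul_distrib]
  refine Finset.prod_congr rfl fun ρ hρ ↦ ?_
  have hρ0 := hZ ρ hρ
  rw [← mul_pow]
  congr 1
  field_simp
  ring

lemma exists_zero_free_factor (hf : Differentiable ℂ f) (h0 : f 0 ≠ 0) {R : ℝ} (hR : 0 < R)
    {M : ℝ} (hM : ∀ s, ‖s‖ = 2 * R → ‖f s‖ ≤ M) :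
    ∃ H : ℂ → ℂ, Differentiable ℂ H ∧ H 0 = f 0 ∧ (∀ s ∈ ball 0 R, H s ≠ 0) ∧
      (∀ s ∈ ball 0 R, ‖H s‖ ≤ M) ∧ ∀ s, f s ≠ 0 →
        logDeriv f s = ∑ ρ ∈ zerosInBall hf h0 R,
          (analyticOrderNatAt f ρ : ℂ) * (1 / (s - ρ)) + logDeriv H s := by
  set Z := zerosInBall hf h0 R
  have hZ : ∀ {ρ}, ρ ∈ Z ↔ ‖ρ‖ ≤ R ∧ f ρ = 0 := mem_zerosInBall hf h0
  have hZ0 : ∀ ρ ∈ Z, ρ ≠ 0 := fun ρ hρ h ↦ h0 (h ▸ (hZ.1 hρ).2)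
  obtain ⟨g, hg, hgZ, hfg⟩ := exists_differentiable_eq_prod_pow_mul hf Z
    fun ρ _ ↦ analyticOrderAt_ne_top_of_ne_zero hf h0 ρ
  set c : ℂ := ∏ ρ ∈ Z, (-ρ) ^ analyticOrderNatAt f ρ
  have hc : c ≠ 0 :=
    Finset.prod_ne_zero_iff.2 fun ρ hρ ↦ pow_ne_zero _ (neg_ne_zero.2 (hZ0 ρ hρ))
  have hf_eq : ∀ s, f s = (∏ ρ ∈ Z, (1 - s / ρ) ^ analyticOrderNatAt f ρ) * (c * g s) := fun s ↦ by
    rw [hfg s, prod_sub_pow_eq_prod_one_sub_div_pow_mul hZ0, mul_assoc]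
  have hsphere : ∀ s, ‖s‖ = 2 * R → ‖c * g s‖ ≤ M := by
    intro s hs
    refine le_trans ?_ (hM s hs)
    rw [hf_eq s, norm_mul _ (c * g s), norm_prod]
    refine le_mul_of_one_le_left (norm_nonneg _) (Finset.one_le_prod fun ρ hρ ↦ ?_)
    rw [norm_pow]
    exact one_le_pow₀ (one_le_norm_one_sub_div (hZ0 ρ hρ) (by rw [hs]; linarith [(hZ.1 hρ).1]))
  refine ⟨fun s ↦ c * g s, hg.const_mul c, by simpa using (hf_eq 0).symm, ?_, ?_, ?_⟩
  · intro s hs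
    refine mul_ne_zero hc fun h ↦ hgZ s (hZ.2 ⟨(mem_ball_zero_iff.1 hs).le, ?_⟩) h
    rw [hfg, h, mul_zero]
  · intro s hs
    refine Complex.norm_le_of_forall_mem_frontier_norm_le (U := ball 0 (2 * R)) isBounded_ball
      (hg.const_mul c).diffContOnCl (fun z hz ↦ hsphere z ?_)
      (subset_closure (ball_subset_ball (by linarith) hs))
    rwa [frontier_ball _ (by positivity), mem_sphere_zero_iff_norm] at hz
  · intro s hs
    have hgs : g s ≠ 0 := fun h ↦ hs (by rw [hfg, h, mul_zero])
    rw [logDeriv_const_mul _ _ hc, ← logDeriv_prod_sub_pow_mul (hg s) hgs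
      fun h ↦ hs (hZ.1 h).2]
    exact congrArg (logDeriv · s) (funext hfg)

-- The quotient of `f` by the linear factors of its zeros in the ball of radius `8 k` is zero free
-- there and has logarithmic derivative varying by `O(k ^ (α - 2))` on compact sets.
theorem tendsto_sum_zeros_logDeriv_sub (hf : Differentiable ℂ f) (h0 : f 0 = 1) {C α : ℝ}
    (hC : 0 < C) (hα : α < 2)
    (hgrowth : ∀ R : ℝ, 1 ≤ R → ∀ s, ‖s‖ ≤ R → ‖f s‖ ≤ Real.exp (C * R ^ α))
    {s₁ s₂ : ℂ} (h₁ : f s₁ ≠ 0) (h₂ : f s₂ ≠ 0) :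
    Tendsto (fun k : ℕ ↦ ∑ ρ ∈ zerosInBall hf (w := 0) (by simp [h0]) (8 * k),
      (analyticOrderNatAt f ρ : ℂ) * (1 / (s₁ - ρ) - 1 / (s₂ - ρ))) atTop
      (𝓝 (logDeriv f s₁ - logDeriv f s₂)) := by
  have herr : Tendsto (fun k : ℕ ↦ C * 16 ^ α * ‖s₁ - s₂‖ * (k : ℝ) ^ (-(2 - α))) atTop (𝓝 0) := by
    simpa using ((tendsto_rpow_neg_atTop (sub_pos.2 hα)).comp
      tendsto_natCast_atTop_atTop).const_mul (C * 16 ^ α * ‖s₁ - s₂‖)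
  rw [tendsto_iff_norm_sub_tendsto_zero]
  refine squeeze_zero' (.of_forall fun _ ↦ norm_nonneg _) ?_ herr
  filter_upwards [tendsto_natCast_atTop_atTop.eventually_ge_atTop ‖s₁‖,
    tendsto_natCast_atTop_atTop.eventually_ge_atTop ‖s₂‖, eventually_ge_atTop 1] with k hk₁ hk₂ hk
  have hk0 : (1 : ℝ) ≤ k := by exact_mod_cast hk
  obtain ⟨H, hH, hH0, hHne, hHbd, hlog⟩ := exists_zero_free_factor hf (by simp [h0])
    (R := 8 * k) (by positivity) fun s hs ↦ hgrowth (16 * k) (by linarith) s (by linarith)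
  have hlip := norm_logDeriv_sub_le_of_forall_ne_zero (r := k) (by positivity)
    (B := C * (16 * k) ^ α) (by positivity) hH.differentiableOn hHne
    (by simpa [hH0, h0] using hHbd) hk₁ hk₂
  calc _ = ‖logDeriv H s₁ - logDeriv H s₂‖ := by
        rw [hlog s₁ h₁, hlog s₂ h₂, norm_sub_rev]
        simp only [mul_sub, Finset.sum_sub_distrib]
        congr 1
        ring
    _ ≤ C * (16 * k) ^ α / k ^ 2 * ‖s₁ - s₂‖ := hlip
    _ = _ := by
        rw [Real.mul_rpow (by norm_num) (by positivity), neg_sub, Real.rpow_sub (by positivity),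
          Real.rpow_two]
        ring

end EntireFunctions

/-! ### The completed zeta function and its zeros -/

/-- Riemann's entire function `ξ`, in the normalisation `s (s - 1) Λ(s)` with `ξ(0) = 1`. The
entire part `Λ₀` of `Λ` is used so that no case distinction is needed at the poles `0` and `1`. -/
noncomputable def riemannXi (s : ℂ) : ℂ := s * (s - 1) * completedRiemannZeta₀ s + 1

lemma differentiable_riemannXi : Differentiable ℂ riemannXi := by
  have := differentiable_completedZeta₀
  unfold riemannXi
  fun_prop

lemma riemannXi_zero : riemannXi 0 = 1 := by simp [riemannXi]

lemma riemannXi_one : riemannXi 1 = 1 := by simp [riemannXi]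

lemma riemannXi_one_sub (s : ℂ) : riemannXi (1 - s) = riemannXi s := by
  unfold riemannXi
  rw [completedRiemannZeta₀_one_sub]
  ring

lemma riemannXi_eq_mul_zeta {s : ℂ} (h0 : 0 < s.re) (h1 : s ≠ 1) :
    riemannXi s = s * (s - 1) * Complex.Gammaℝ s * riemannZeta s := by
  have hs : s ≠ 0 := fun h ↦ by simp [h] at h0
  have hs1 : 1 - s ≠ 0 := sub_ne_zero.2 h1.symm
  have hΓ := Complex.Gammaℝ_ne_zero_of_re_pos h0
  rw [riemannZeta_def_of_ne_zero hs, mul_assoc (s * (s - 1)), mul_div_cancel₀ _ hΓ,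
    completedRiemannZeta_eq, riemannXi]
  field_simp
  ring

lemma riemannXi_conj (s : ℂ) : riemannXi (starRingEnd ℂ s) = starRingEnd ℂ (riemannXi s) := by
  have right_half : ∀ {z : ℂ}, 0 < z.re →
      riemannXi (starRingEnd ℂ z) = starRingEnd ℂ (riemannXi z) := fun {z} hz ↦ by
    rcases eq_or_ne z 1 with rfl | hz1
    · simp [riemannXi_one]
    have hz1' : starRingEnd ℂ z ≠ 1 := fun h ↦ hz1 (by simpa using congrArg (starRingEnd ℂ) h)
    have hπ : (Real.pi : ℂ) ^ (-starRingEnd ℂ z / 2) =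
        starRingEnd ℂ ((Real.pi : ℂ) ^ (-z / 2)) := by
      have hπ_arg : (Real.pi : ℂ).arg ≠ Real.pi := by
        rw [Complex.arg_ofReal_of_nonneg Real.pi_pos.le]
        exact Real.pi_pos.ne
      have := Complex.cpow_conj (Real.pi : ℂ) (-z / 2) hπ_arg
      rw [Complex.conj_ofReal] at this
      rw [← this, map_div₀, map_neg, Complex.conj_ofNat]
    have hΓ : Complex.Gamma (starRingEnd ℂ z / 2) = starRingEnd ℂ (Complex.Gamma (z / 2)) := by
      rw [← Complex.Gamma_conj, map_div₀, Complex.conj_ofNat]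
    rw [riemannXi_eq_mul_zeta hz hz1, riemannXi_eq_mul_zeta (by simpa using hz) hz1',
      Complex.Gammaℝ_def, Complex.Gammaℝ_def, hπ, hΓ, riemannZeta_conj]
    simp
  rcases lt_or_ge 0 s.re with hs | hs
  · exact right_half hs
  · rw [← riemannXi_one_sub, ← riemannXi_one_sub s, ← right_half (by simp; linarith)]
    simp

lemma norm_mellin_le_of_mem_Icc {E : Type*} [NormedAddCommGroup E] [NormedSpace ℂ E] {f : ℝ → E}
    {a b : ℝ} (ha : MellinConvergent f a) (hb : MellinConvergent f b) {s : ℂ}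
    (hs : s.re ∈ Icc a b) :
    ‖mellin f s‖ ≤ ∫ t in Ioi (0 : ℝ), (‖(t : ℂ) ^ ((a : ℂ) - 1) • f t‖ +
      ‖(t : ℂ) ^ ((b : ℂ) - 1) • f t‖) := by
  refine norm_integral_le_of_norm_le (ha.norm.add hb.norm) ?_
  refine (ae_restrict_mem measurableSet_Ioi).mono fun t ht ↦ ?_
  have ht' : (0 : ℝ) < t := ht
  simp only [norm_smul, ← add_mul, Complex.norm_cpow_eq_rpow_re_of_pos ht', Complex.sub_re,
    Complex.ofReal_re, Complex.one_re]
  gcongr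
  rcases le_total 1 t with h | h
  · exact (Real.rpow_le_rpow_of_exponent_le h (by linarith [hs.2])).trans
      (le_add_of_nonneg_left (Real.rpow_nonneg ht'.le _))
  · exact (Real.rpow_le_rpow_of_exponent_ge ht' h (by linarith [hs.1])).trans
      (le_add_of_nonneg_right (Real.rpow_nonneg ht'.le _))

lemma exists_norm_completedRiemannZeta₀_le (a b : ℝ) :
    ∃ M : ℝ, ∀ s : ℂ, s.re ∈ Icc a b → ‖completedRiemannZeta₀ s‖ ≤ M := by
  have hconv (x : ℝ) : MellinConvergent (HurwitzZeta.hurwitzEvenFEPair 0).f_modif x :=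
    ((HurwitzZeta.hurwitzEvenFEPair 0).isStrongFEPair_toStrongFEPair.hasMellin x).1
  obtain ⟨M, hM⟩ : ∃ M, ∀ s : ℂ, s.re ∈ Icc (a / 2) (b / 2) →
      ‖mellin (HurwitzZeta.hurwitzEvenFEPair 0).f_modif s‖ ≤ M :=
    ⟨_, fun s hs ↦ norm_mellin_le_of_mem_Icc (hconv _) (hconv _) hs⟩
  refine ⟨M / 2, fun s hs ↦ ?_⟩
  have hs' : (s / 2).re ∈ Icc (a / 2) (b / 2) := by
    simpa using And.intro (div_le_div_of_nonneg_right hs.1 (zero_le_two (α := ℝ)))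
      (div_le_div_of_nonneg_right hs.2 (zero_le_two (α := ℝ)))
  have hmellin : completedRiemannZeta₀ s =
    mellin (HurwitzZeta.hurwitzEvenFEPair 0).f_modif (s / 2) / 2 := rfl
  rw [hmellin, norm_div, Complex.norm_ofNat]
  gcongr
  exact hM _ hs'

lemma norm_riemannZeta_le {σ : ℝ} (hσ : 1 < σ) {s : ℂ} (hs : σ ≤ s.re) :
    ‖riemannZeta s‖ ≤ ∑' n : ℕ, 1 / ((n : ℝ) + 1) ^ σ := by
  have hsum : Summable fun n : ℕ ↦ 1 / ((n : ℝ) + 1) ^ σ := by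
    simpa using (summable_nat_add_iff 1).2 (Real.summable_one_div_nat_rpow.2 hσ)
  rw [zeta_eq_tsum_one_div_nat_add_one_cpow (by linarith)]
  refine tsum_of_norm_bounded hsum.hasSum fun n ↦ ?_
  rw [norm_div, norm_one, ← Nat.cast_add_one, Complex.norm_natCast_cpow_of_pos n.succ_pos,
    Nat.cast_add_one]
  gcongr
  simp

lemma norm_Gamma_le_Gamma_re {s : ℂ} (hs : 0 < s.re) : ‖Complex.Gamma s‖ ≤ Real.Gamma s.re := by
  rw [Complex.Gamma_eq_integral hs, Real.Gamma_eq_integral hs]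
  refine (norm_integral_le_integral_norm _).trans_eq
    (setIntegral_congr_fun measurableSet_Ioi fun t ht ↦ ?_)
  simp [Complex.norm_cpow_eq_rpow_re_of_pos ht, Complex.norm_exp]

lemma Gamma_le_add_one_rpow {x : ℝ} (hx : 1 ≤ x) : Real.Gamma x ≤ (x + 1) ^ (x + 1) := by
  have hceil : (⌈x⌉₊ : ℝ) ≤ x + 1 := (Nat.ceil_lt_add_one (by linarith)).le
  have hmono : Real.Gamma (x + 1) ≤ Real.Gamma (⌈x⌉₊ + 1) :=
    Real.Gamma_strictMonoOn_Ici.monotoneOn (by simp; linarith) (by simp; linarith [Nat.le_ceil x])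
      (by linarith [Nat.le_ceil x])
  calc Real.Gamma x ≤ x * Real.Gamma x :=
        le_mul_of_one_le_left (Real.Gamma_pos_of_pos (by linarith)).le hx
    _ = Real.Gamma (x + 1) := (Real.Gamma_add_one (by linarith)).symm
    _ ≤ (⌈x⌉₊.factorial : ℝ) := by rwa [Real.Gamma_nat_eq_factorial] at hmono
    _ ≤ (⌈x⌉₊ : ℝ) ^ ⌈x⌉₊ := by exact_mod_cast Nat.factorial_le_pow _
    _ ≤ (x + 1) ^ ⌈x⌉₊ := by gcongr
    _ ≤ (x + 1) ^ (x + 1) := by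
      rw [← Real.rpow_natCast]
      exact Real.rpow_le_rpow_of_exponent_le (by linarith) hceil

lemma Gamma_le_exp_rpow {x R : ℝ} (hx : 1 ≤ x) (hxR : x ≤ R) :
    Real.Gamma x ≤ Real.exp (8 * R ^ (3 / 2 : ℝ)) := by
  have hlog : Real.log (x + 1) ≤ 2 * (x + 1) ^ (1 / 2 : ℝ) := by
    have := Real.log_le_rpow_div (x := x + 1) (by linarith) (show (0 : ℝ) < 1 / 2 by norm_num)
    linarith
  have htwo : (2 : ℝ) * 2 ^ (3 / 2 : ℝ) ≤ 8 := by
    have h : (2 : ℝ) ^ (3 / 2 : ℝ) ≤ 2 ^ (2 : ℝ) :=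
      Real.rpow_le_rpow_of_exponent_le one_le_two (by norm_num)
    norm_num at h
    linarith
  refine (Gamma_le_add_one_rpow hx).trans ?_
  rw [Real.rpow_def_of_pos (by linarith), Real.exp_le_exp]
  calc Real.log (x + 1) * (x + 1) ≤ 2 * (x + 1) ^ (1 / 2 : ℝ) * (x + 1) := by gcongr
    _ = 2 * (x + 1) ^ (3 / 2 : ℝ) := by
      rw [mul_assoc, ← Real.rpow_add_one (by linarith)]
      norm_num
    _ ≤ 2 * (2 * R) ^ (3 / 2 : ℝ) := by gcongr; linarith
    _ = 2 * 2 ^ (3 / 2 : ℝ) * R ^ (3 / 2 : ℝ) := by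
      rw [Real.mul_rpow two_pos.le (by linarith), mul_assoc]
    _ ≤ 8 * R ^ (3 / 2 : ℝ) := mul_le_mul_of_nonneg_right htwo (Real.rpow_nonneg (by linarith) _)

lemma norm_Gammaℝ_le_exp_rpow {s : ℂ} {R : ℝ} (hs : 2 ≤ s.re) (hR : ‖s‖ ≤ R) :
    ‖Complex.Gammaℝ s‖ ≤ Real.exp (8 * R ^ (3 / 2 : ℝ)) := by
  have hre : (s / 2).re = s.re / 2 := by simp
  have hπ : ‖(Real.pi : ℂ) ^ (-s / 2)‖ ≤ 1 := by
    rw [Complex.norm_cpow_eq_rpow_re_of_pos Real.pi_pos]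
    refine Real.rpow_le_one_of_one_le_of_nonpos (by linarith [Real.pi_gt_three]) ?_
    simp only [neg_div, Complex.neg_re, hre]
    linarith
  have hΓ : ‖Complex.Gamma (s / 2)‖ ≤ Real.exp (8 * R ^ (3 / 2 : ℝ)) :=
    (norm_Gamma_le_Gamma_re (by linarith)).trans
      (Gamma_le_exp_rpow (by linarith) (by linarith [Complex.re_le_norm s]))
  rw [Complex.Gammaℝ_def, norm_mul]
  exact (mul_le_of_le_one_left (norm_nonneg _) hπ).trans hΓ

lemma norm_mul_sub_one_le_exp {s : ℂ} {R : ℝ} (hR : 1 ≤ R) (hs : ‖s‖ ≤ R) :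
    ‖s * (s - 1)‖ + 1 ≤ Real.exp (2 * R ^ (3 / 2 : ℝ)) := by
  have hRpow : R ≤ R ^ (3 / 2 : ℝ) := Real.self_le_rpow_of_one_le hR (by norm_num)
  have hsub : ‖s - 1‖ ≤ 2 * R := by linarith [norm_sub_le s 1, norm_one (α := ℂ)]
  calc ‖s * (s - 1)‖ + 1 ≤ R * (2 * R) + 1 := by rw [norm_mul]; gcongr
    _ ≤ Real.exp (2 * R) := by
      nlinarith [Real.quadratic_le_exp_of_nonneg (show 0 ≤ 2 * R by linarith)]
    _ ≤ Real.exp (2 * R ^ (3 / 2 : ℝ)) := by gcongr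

lemma exists_norm_riemannXi_le_of_half_le_re : ∃ C : ℝ, 0 < C ∧ ∀ R : ℝ, 1 ≤ R → ∀ s : ℂ,
    ‖s‖ ≤ R → 1 / 2 ≤ s.re → ‖riemannXi s‖ ≤ Real.exp (C * R ^ (3 / 2 : ℝ)) := by
  obtain ⟨M, hM⟩ := exists_norm_completedRiemannZeta₀_le (1 / 2) 2
  set Z : ℝ := ∑' n : ℕ, 1 / ((n : ℝ) + 1) ^ (2 : ℝ)
  have hZ : 0 ≤ Z := tsum_nonneg fun n ↦ by positivity
  refine ⟨10 + |M| + Z, by positivity, fun R hR s hs hre ↦ ?_⟩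
  have hP := norm_mul_sub_one_le_exp hR hs
  set E := R ^ (3 / 2 : ℝ)
  have hE : 1 ≤ E := Real.one_le_rpow hR (by norm_num)
  have hle_exp {x : ℝ} (hx : 0 ≤ x) : x + 1 ≤ Real.exp (x * E) :=
    (Real.add_one_le_exp x).trans (Real.exp_le_exp.2 (le_mul_of_one_le_right hx hE))
  rcases le_total s.re 2 with h2 | h2
  · have hL : ‖completedRiemannZeta₀ s‖ ≤ |M| := (hM s ⟨hre, h2⟩).trans (le_abs_self M)
    calc ‖riemannXi s‖ ≤ ‖s * (s - 1)‖ * ‖completedRiemannZeta₀ s‖ + 1 := by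
          rw [riemannXi, ← norm_mul]
          simpa using norm_add_le (s * (s - 1) * completedRiemannZeta₀ s) 1
      _ ≤ (‖s * (s - 1)‖ + 1) * (|M| + 1) := by
        nlinarith [norm_nonneg (s * (s - 1)), abs_nonneg M]
      _ ≤ Real.exp (2 * E) * Real.exp (|M| * E) := by gcongr; exact hle_exp (abs_nonneg M)
      _ ≤ Real.exp ((10 + |M| + Z) * E) := by
        rw [← Real.exp_add, Real.exp_le_exp]
        nlinarith
  · have hs1 : s ≠ 1 := fun h ↦ by norm_num [h] at h2
    calc ‖riemannXi s‖ = ‖s * (s - 1)‖ * ‖Complex.Gammaℝ s‖ * ‖riemannZeta s‖ := by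
          rw [riemannXi_eq_mul_zeta (by linarith) hs1, norm_mul, norm_mul]
      _ ≤ Real.exp (2 * E) * Real.exp (8 * E) * Real.exp (Z * E) := by
        gcongr
        · linarith
        · exact norm_Gammaℝ_le_exp_rpow h2 hs
        · linarith [norm_riemannZeta_le one_lt_two h2, hle_exp hZ]
      _ ≤ Real.exp ((10 + |M| + Z) * E) := by
        rw [← Real.exp_add, ← Real.exp_add, Real.exp_le_exp]
        nlinarith [abs_nonneg M]

theorem exists_norm_riemannXi_le : ∃ C : ℝ, 0 < C ∧ ∀ R : ℝ, 1 ≤ R → ∀ s, ‖s‖ ≤ R →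
    ‖riemannXi s‖ ≤ Real.exp (C * R ^ (3 / 2 : ℝ)) := by
  obtain ⟨C, hC, hright⟩ := exists_norm_riemannXi_le_of_half_le_re
  refine ⟨C * 2 ^ (3 / 2 : ℝ), by positivity, fun R hR s hs ↦ ?_⟩
  rw [mul_assoc, ← Real.mul_rpow two_pos.le (by linarith)]
  rcases le_total (1 / 2) s.re with h | h
  · exact hright (2 * R) (by linarith) s (by linarith) h
  · rw [← riemannXi_one_sub]
    refine hright (2 * R) (by linarith) (1 - s) ?_ (by simp; linarith)
    linarith [norm_sub_le 1 s, norm_one (α := ℂ)]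

lemma riemannXi_ne_zero_of_one_le_re {s : ℂ} (hs : 1 ≤ s.re) : riemannXi s ≠ 0 := by
  rcases eq_or_ne s 1 with rfl | h1
  · simp [riemannXi_one]
  have h0 : s ≠ 0 := fun h ↦ by norm_num [h] at hs
  rw [riemannXi_eq_mul_zeta (by linarith) h1]
  exact mul_ne_zero (mul_ne_zero (mul_ne_zero h0 (sub_ne_zero.2 h1))
    (Complex.Gammaℝ_ne_zero_of_re_pos (by linarith))) (riemannZeta_ne_zero_of_one_le_re hs)

lemma riemannXi_ne_zero_of_re_nonpos {s : ℂ} (hs : s.re ≤ 0) : riemannXi s ≠ 0 := by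
  rw [← riemannXi_one_sub]
  exact riemannXi_ne_zero_of_one_le_re (by simpa using hs)

theorem riemannXi_eq_zero_iff {s : ℂ} : riemannXi s = 0 ↔ IsNontrivialZero s := by
  by_cases h : 0 < s.re ∧ s.re < 1
  · obtain ⟨h0, h1⟩ := h
    have hs1 : s ≠ 1 := fun h ↦ by norm_num [h] at h1
    have hs0 : s ≠ 0 := fun h ↦ by norm_num [h] at h0
    simp [riemannXi_eq_mul_zeta h0 hs1, IsNontrivialZero, h0, h1, hs0, sub_ne_zero.2 hs1,
      Complex.Gammaℝ_ne_zero_of_re_pos h0]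
  · refine iff_of_false ?_ fun hs ↦ h hs.2
    rcases le_or_gt s.re 0 with h0 | h0
    · exact riemannXi_ne_zero_of_re_nonpos h0
    · exact riemannXi_ne_zero_of_one_le_re (not_lt.1 fun h1 ↦ h ⟨h0, h1⟩)

/-- The multiplicity `m_ρ` of `ρ` as a zero of `ξ`, equal to `0` off the zeros, so that sums over
nontrivial zeros become sums over all of `ℂ`. -/
noncomputable def xiMult (ρ : ℂ) : ℕ := analyticOrderNatAt riemannXi ρ

lemma analyticOrderAt_riemannXi (ρ : ℂ) : analyticOrderAt riemannXi ρ = xiMult ρ :=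
  (Nat.cast_analyticOrderNatAt (analyticOrderAt_ne_top_of_ne_zero differentiable_riemannXi
    (w := 0) (by simp [riemannXi_zero]) ρ)).symm

lemma xiMult_ne_zero_iff {ρ : ℂ} : xiMult ρ ≠ 0 ↔ IsNontrivialZero ρ := by
  rw [← riemannXi_eq_zero_iff, ← Nat.cast_ne_zero (R := ℕ∞), ← analyticOrderAt_riemannXi, ne_eq,
    (differentiable_riemannXi.analyticAt ρ).analyticOrderAt_eq_zero, not_not]

lemma re_mem_Ioo_of_xiMult_ne_zero {ρ : ℂ} (h : xiMult ρ ≠ 0) : ρ.re ∈ Ioo (0 : ℝ) 1 :=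
  (xiMult_ne_zero_iff.1 h).2

lemma xiMult_eq_of_factorization {ρ : ℂ} {n : ℕ} {g : ℂ → ℂ} (hg : Differentiable ℂ g)
    (hρ : g ρ ≠ 0) (h : ∀ s, riemannXi s = (s - ρ) ^ n * g s) : xiMult ρ = n := by
  have : analyticOrderAt riemannXi ρ = n :=
    (differentiable_riemannXi.analyticAt ρ).analyticOrderAt_eq_natCast.2
      ⟨g, hg.analyticAt ρ, hρ, Eventually.of_forall fun s ↦ by rw [h s, smul_eq_mul]⟩
  rw [analyticOrderAt_riemannXi] at this
  exact_mod_cast this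

lemma xiMult_one_sub (ρ : ℂ) : xiMult (1 - ρ) = xiMult ρ := by
  obtain ⟨g, hg, hρ, h⟩ :=
    exists_differentiable_eq_pow_mul differentiable_riemannXi (analyticOrderAt_riemannXi ρ)
  refine xiMult_eq_of_factorization (g := fun s ↦ (-1) ^ xiMult ρ * g (1 - s))
    ((hg.comp (by fun_prop : Differentiable ℂ fun s : ℂ ↦ 1 - s)).const_mul _)
    (by simpa using hρ) fun s ↦ ?_
  rw [← riemannXi_one_sub, h, ← mul_assoc, ← mul_pow]
  congr 2
  ring

lemma xiMult_conj (ρ : ℂ) : xiMult (starRingEnd ℂ ρ) = xiMult ρ := by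
  obtain ⟨g, hg, hρ, h⟩ :=
    exists_differentiable_eq_pow_mul differentiable_riemannXi (analyticOrderAt_riemannXi ρ)
  refine xiMult_eq_of_factorization (g := fun s ↦ starRingEnd ℂ (g (starRingEnd ℂ s)))
    (fun s ↦ ?_) (by simpa using hρ) fun s ↦ ?_
  · simpa [Function.comp_def] using (hg (starRingEnd ℂ s)).conj_conj
  · rw [← Complex.conj_conj (riemannXi s), ← riemannXi_conj, h]
    simp

lemma sInf_iteratedDeriv_ne_zero_eq {f : ℂ → ℂ} {z : ℂ} {n : ℕ} (hf : AnalyticAt ℂ f z)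
    (hn : analyticOrderAt f z = n) : sInf {k : ℕ | iteratedDeriv k f z ≠ 0} = n := by
  have hlow : ∀ i < n, iteratedDeriv i f z = 0 :=
    (natCast_le_analyticOrderAt_iff_iteratedDeriv_eq_zero hf).1 hn.ge
  have hne : iteratedDeriv n f z ≠ 0 := fun h ↦ by
    have : ((n + 1 : ℕ) : ℕ∞) ≤ analyticOrderAt f z :=
      (natCast_le_analyticOrderAt_iff_iteratedDeriv_eq_zero hf).2 fun i hi ↦
        (Nat.lt_succ_iff_lt_or_eq.1 hi).elim (hlow i) fun h' ↦ h' ▸ h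
    rw [hn] at this
    exact n.lt_irrefl (by exact_mod_cast this)
  exact le_antisymm (Nat.sInf_le hne)
    (le_csInf ⟨n, hne⟩ fun k hk ↦ not_lt.1 fun hkn ↦ hk (hlow k hkn))

lemma differentiableAt_Gammaℝ {s : ℂ} (hs : 0 < s.re) : DifferentiableAt ℂ Complex.Gammaℝ s := by
  simpa only [Pi.inv_def, inv_inv] using (Complex.differentiable_Gammaℝ_inv s).inv
    (inv_ne_zero (Complex.Gammaℝ_ne_zero_of_re_pos hs))

theorem zetaMult_eq_xiMult {ρ : ℂ} (hρ : IsNontrivialZero ρ) : zetaMult ρ = xiMult ρ := by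
  obtain ⟨-, h0, h1⟩ := hρ
  have hs1 : ρ ≠ 1 := fun h ↦ by norm_num [h] at h1
  have hs0 : ρ ≠ 0 := fun h ↦ by norm_num [h] at h0
  set U : Set ℂ := {s | 0 < s.re ∧ s ≠ 1}
  have hU : U ∈ 𝓝 ρ := ((isOpen_lt continuous_const Complex.continuous_re).inter
    isOpen_ne).mem_nhds ⟨h0, hs1⟩
  set g : ℂ → ℂ := fun s ↦ s * (s - 1) * Complex.Gammaℝ s
  have hζ : AnalyticAt ℂ riemannZeta ρ := DifferentiableOn.analyticAt (s := U)
    (fun s hs ↦ (differentiableAt_riemannZeta hs.2).differentiableWithinAt) hU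
  have hg : AnalyticAt ℂ g ρ := by
    refine DifferentiableOn.analyticAt (s := U) (fun s hs ↦ ?_) hU
    have := differentiableAt_Gammaℝ hs.1
    exact (by fun_prop : DifferentiableAt ℂ g s).differentiableWithinAt
  have hgρ : g ρ ≠ 0 := mul_ne_zero (mul_ne_zero hs0 (sub_ne_zero.2 hs1))
    (Complex.Gammaℝ_ne_zero_of_re_pos h0)
  have hξ : riemannXi =ᶠ[𝓝 ρ] g * riemannZeta := by
    filter_upwards [hU] with s hs using riemannXi_eq_mul_zeta hs.1 hs.2
  refine sInf_iteratedDeriv_ne_zero_eq hζ ?_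
  rw [← analyticOrderAt_riemannXi, analyticOrderAt_congr hξ, analyticOrderAt_mul hg hζ,
    hg.analyticOrderAt_eq_zero.2 hgρ, zero_add]

lemma hasSum_of_tendsto_sum_of_monotone {ι : Type*} {f : ι → ℝ} (hf : ∀ i, 0 ≤ f i)
    {Z : ℕ → Finset ι} (hZ : Monotone Z) (hex : ∀ i, f i ≠ 0 → ∃ k, i ∈ Z k) {a : ℝ}
    (h : Tendsto (fun k ↦ ∑ i ∈ Z k, f i) atTop (𝓝 a)) : HasSum f a := by
  have hmono : Monotone fun k ↦ ∑ i ∈ Z k, f i := fun j k hjk ↦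
    Finset.sum_le_sum_of_subset_of_nonneg (hZ hjk) fun i _ _ ↦ hf i
  refine hasSum_of_isLUB_of_nonneg a hf ⟨?_, fun b hb ↦ le_of_tendsto' h fun k ↦ hb ⟨Z k, rfl⟩⟩
  rintro _ ⟨F, rfl⟩
  choose! k hk using hex
  refine le_trans ?_ (hmono.ge_of_tendsto h (F.sup k))
  simp only [← Finset.sum_filter_ne_zero F]
  refine Finset.sum_le_sum_of_subset_of_nonneg (fun i hi ↦ ?_) fun i _ _ ↦ hf i
  rw [Finset.mem_filter] at hi
  exact hZ (Finset.le_sup hi.1) (hk i hi.2)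

/-- The unnormalised Poisson kernel `b / (b² + y²)` of the half plane, the real part of
`1 / (b + i y)`. -/
noncomputable def poissonKer (b y : ℝ) : ℝ := b / (b ^ 2 + y ^ 2)

lemma poissonKer_nonneg {b : ℝ} (hb : 0 ≤ b) (y : ℝ) : 0 ≤ poissonKer b y := by
  unfold poissonKer
  positivity

lemma logDeriv_riemannXi_one_sub (s : ℂ) :
    logDeriv riemannXi (1 - s) = -logDeriv riemannXi s := by
  have hd := HasDerivAt.comp_const_sub 1 s (differentiable_riemannXi (1 - s)).hasDerivAt
  simp only [riemannXi_one_sub] at hd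
  rw [logDeriv_apply, logDeriv_apply, hd.deriv, riemannXi_one_sub]
  ring

lemma logDeriv_riemannXi_conj (s : ℂ) :
    logDeriv riemannXi (starRingEnd ℂ s) = starRingEnd ℂ (logDeriv riemannXi s) := by
  have hd := (differentiable_riemannXi s).hasDerivAt.conj_conj
  have hconj : starRingEnd ℂ ∘ riemannXi ∘ starRingEnd ℂ = riemannXi :=
    funext fun s ↦ by simp [riemannXi_conj]
  rw [hconj] at hd
  rw [logDeriv_apply, logDeriv_apply, hd.deriv, riemannXi_conj, map_div₀]

lemma logDeriv_riemannXi_neg_one_add (t : ℝ) : logDeriv riemannXi (-1 + t * Complex.I) =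
    -starRingEnd ℂ (logDeriv riemannXi (2 + t * Complex.I)) := by
  rw [← logDeriv_riemannXi_conj, ← logDeriv_riemannXi_one_sub, map_add, map_mul,
    Complex.conj_ofNat, Complex.conj_ofReal, Complex.conj_I]
  ring_nf

lemma re_inv_sub_inv_eq_poissonKer_add (a b t : ℝ) (ρ : ℂ) :
    (1 / (a + t * Complex.I - ρ) - 1 / (-b + t * Complex.I - ρ)).re =
      poissonKer (a - ρ.re) (ρ.im - t) + poissonKer (b + ρ.re) (ρ.im - t) := by
  simp only [Complex.sub_re, one_div, Complex.inv_re, Complex.normSq_apply, poissonKer]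
  simp only [Complex.add_re, Complex.neg_re, Complex.ofReal_re, Complex.re_ofReal_mul,
    Complex.I_re, Complex.add_im, Complex.sub_im, Complex.neg_im, Complex.ofReal_im,
    Complex.im_ofReal_mul, Complex.I_im]
  rw [sub_eq_add_neg, ← neg_div]
  congr 2 <;> ring

theorem hasSum_xiMult_mul_poissonKer (t : ℝ) :
    HasSum (fun ρ : ℂ ↦ (xiMult ρ : ℝ) *
        (poissonKer (2 - ρ.re) (ρ.im - t) + poissonKer (1 + ρ.re) (ρ.im - t)))
      (2 * (logDeriv riemannXi (2 + t * Complex.I)).re) := by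
  have hξ := differentiable_riemannXi
  have hξ0 : riemannXi 0 ≠ 0 := by simp [riemannXi_zero]
  obtain ⟨C, hC, hgrowth⟩ := exists_norm_riemannXi_le
  have hlim := tendsto_sum_zeros_logDeriv_sub hξ riemannXi_zero hC (by norm_num) hgrowth
    (s₁ := 2 + t * Complex.I) (s₂ := -1 + t * Complex.I)
    (riemannXi_ne_zero_of_one_le_re (by simp)) (riemannXi_ne_zero_of_re_nonpos (by simp))
  refine hasSum_of_tendsto_sum_of_monotone (Z := fun k : ℕ ↦ zerosInBall hξ hξ0 (8 * k))
    (fun ρ ↦ ?_) (fun j k hjk ρ hρ ↦ ?_) (fun ρ h ↦ ?_) ?_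
  · by_cases h : xiMult ρ = 0
    · simp [h]
    · obtain ⟨h0, h1⟩ := re_mem_Ioo_of_xiMult_ne_zero h
      exact mul_nonneg (Nat.cast_nonneg _) (add_nonneg (poissonKer_nonneg (by linarith) _)
        (poissonKer_nonneg (by linarith) _))
  · have : (j : ℝ) ≤ k := by exact_mod_cast hjk
    rw [mem_zerosInBall] at hρ ⊢
    exact ⟨by linarith [hρ.1], hρ.2⟩
  · have hm : xiMult ρ ≠ 0 := fun h' ↦ h (by simp [h'])
    obtain ⟨k, hk⟩ := exists_nat_ge ‖ρ‖
    exact ⟨k, (mem_zerosInBall _ _).2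
      ⟨by linarith [norm_nonneg ρ], riemannXi_eq_zero_iff.2 (xiMult_ne_zero_iff.1 hm)⟩⟩
  · rw [logDeriv_riemannXi_neg_one_add, sub_neg_eq_add, Complex.add_conj] at hlim
    refine ((Complex.continuous_re.tendsto _).comp hlim).congr fun k ↦ ?_
    rw [Function.comp_apply, Complex.re_sum]
    refine Finset.sum_congr rfl fun ρ _ ↦ ?_
    rw [← Complex.ofReal_natCast, Complex.re_ofReal_mul]
    congr 1
    simpa using re_inv_sub_inv_eq_poissonKer_add 2 1 t ρ

/-! ### The logarithmic derivative of `ξ` to the right of the critical strip -/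

open scoped ArithmeticFunction.vonMangoldt

lemma tendsto_deriv_of_tendsto_of_norm_le {ι : Type*} {l : Filter ι} [l.IsCountablyGenerated]
    {f : ι → ℂ → ℂ} {g : ℂ → ℂ} {c : ℂ} {r C : ℝ} (hr : 0 < r)
    (hf : ∀ᶠ i in l, DifferentiableOn ℂ (f i) (Metric.closedBall c r))
    (hg : DifferentiableOn ℂ g (Metric.closedBall c r))
    (hC : ∀ᶠ i in l, ∀ z ∈ Metric.sphere c r, ‖f i z‖ ≤ C)
    (hlim : ∀ z ∈ Metric.sphere c r, Tendsto (fun i ↦ f i z) l (𝓝 (g z))) :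
    Tendsto (fun i ↦ deriv (f i) c) l (𝓝 (deriv g c)) := by
  have hmem : ∀ θ, circleMap c r θ ∈ Metric.sphere c r := circleMap_mem_sphere c hr.le
  have hderiv : Continuous (deriv (circleMap c r)) := by
    rw [show deriv (circleMap c r) = fun θ ↦ circleMap 0 r θ * Complex.I from
      funext (deriv_circleMap c r)]
    fun_prop
  have hker : Continuous fun θ ↦ 1 / (circleMap c r θ - c) ^ 2 :=
    continuous_const.div (by fun_prop) fun θ ↦ pow_ne_zero 2 (by simp [circleMap, hr.ne'])
  have hlim' : Tendsto (fun i ↦ ∮ z in C(c, r), (1 / (z - c) ^ 2) • f i z) l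
      (𝓝 (∮ z in C(c, r), (1 / (z - c) ^ 2) • g z)) := by
    refine intervalIntegral.tendsto_integral_filter_of_dominated_convergence
      (fun _ ↦ r⁻¹ * C) ?_ ?_ intervalIntegrable_const ?_
    · filter_upwards [hf] with i hi
      have hcont : Continuous fun θ ↦ f i (circleMap c r θ) :=
        hi.continuousOn.comp_continuous (continuous_circleMap c r)
          fun θ ↦ Metric.sphere_subset_closedBall (hmem θ)
      exact (hderiv.smul (hker.smul hcont)).aestronglyMeasurable
    · filter_upwards [hC] with i hi
      refine Eventually.of_forall fun θ _ ↦ ?_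
      have hnorm : ‖deriv (circleMap c r) θ • (1 / (circleMap c r θ - c) ^ 2) •
          f i (circleMap c r θ)‖ = r⁻¹ * ‖f i (circleMap c r θ)‖ := by
        simp only [norm_smul, norm_div, norm_pow, norm_one, deriv_circleMap, norm_mul,
          Complex.norm_I, circleMap_sub_center, norm_circleMap_zero, abs_of_pos hr]
        field_simp
      rw [hnorm]
      gcongr
      exact hi _ (hmem θ)
    · exact Eventually.of_forall fun θ _ ↦ ((hlim _ (hmem θ)).const_smul _).const_smul _
  rw [hg.deriv_eq_smul_circleIntegral hr] at hlim'
  have hc : 2 * (Real.pi : ℂ) * Complex.I ≠ 0 := Complex.two_pi_I_ne_zero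
  have h := hlim'.const_smul (2 * (Real.pi : ℂ) * Complex.I)⁻¹
  rw [inv_smul_smul₀ hc] at h
  refine h.congr' ?_
  filter_upwards [hf] with i hi
  rw [hi.deriv_eq_smul_circleIntegral hr, inv_smul_smul₀ hc]

lemma ne_neg_natCast_of_re_pos {z : ℂ} (hz : 0 < z.re) (m : ℕ) : z ≠ -m := fun h ↦ by
  rw [h] at hz
  simp only [Complex.neg_re, Complex.natCast_re, Left.neg_pos_iff] at hz
  linarith [m.cast_nonneg (α := ℝ)]

lemma rpow_mul_factorial_div_prod_le_Gamma {x : ℝ} (hx : 0 < x) {n : ℕ} (hn : n ≠ 0) :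
    (n : ℝ) ^ x * n.factorial / ∏ j ∈ Finset.range (n + 1), (x + j) ≤ Real.Gamma x := by
  have hn0 : (0 : ℝ) < n := by positivity
  have hlog := Real.BohrMollerup.ge_logGammaSeq Real.convexOn_log_Gamma (fun {y} hy ↦ by
    rw [Function.comp_apply, Function.comp_apply, Real.Gamma_add_one hy.ne',
      Real.log_mul hy.ne' (Real.Gamma_pos_of_pos hy).ne', add_comm]) hx hn
  rw [Function.comp_apply, Function.comp_apply, Real.Gamma_one, Real.log_one, zero_add,
    Real.le_log_iff_exp_le (Real.Gamma_pos_of_pos hx), Real.BohrMollerup.logGammaSeq, Real.exp_sub,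
    Real.exp_add, Real.exp_sum, mul_comm x, Real.exp_mul, Real.exp_log hn0,
    Real.exp_log (by positivity)] at hlog
  refine hlog.trans' (le_of_eq ?_)
  congr 1
  exact Finset.prod_congr rfl fun j _ ↦ (Real.exp_log (by positivity)).symm

lemma norm_GammaSeq_le {z : ℂ} (hz : 0 < z.re) {n : ℕ} (hn : n ≠ 0) :
    ‖Complex.GammaSeq z n‖ ≤ Real.Gamma z.re := by
  refine le_trans ?_ (rpow_mul_factorial_div_prod_le_Gamma hz hn)
  rw [Complex.GammaSeq, norm_div, norm_mul, norm_prod,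
    Complex.norm_natCast_cpow_of_pos (Nat.pos_of_ne_zero hn), Complex.norm_natCast]
  have hre : ∀ j : ℕ, z.re + j ≤ ‖z + j‖ := fun j ↦ by simpa using Complex.re_le_norm (z + j)
  refine div_le_div_of_nonneg_left (by positivity)
    (Finset.prod_pos fun j _ ↦ by positivity) ?_
  exact Finset.prod_le_prod (fun j _ ↦ by positivity) fun j _ ↦ hre j

lemma differentiableAt_GammaSeq {n : ℕ} (hn : n ≠ 0) {z : ℂ} (hz : 0 < z.re) :
    DifferentiableAt ℂ (fun z ↦ Complex.GammaSeq z n) z := by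
  unfold Complex.GammaSeq
  refine DifferentiableAt.div ?_ (by fun_prop) (Finset.prod_ne_zero_iff.2 fun j _ ↦ ?_)
  · exact (differentiableAt_id.const_cpow (Or.inl (by exact_mod_cast hn))).mul_const _
  · exact fun h ↦ ne_neg_natCast_of_re_pos hz j (eq_neg_of_add_eq_zero_left h)

lemma tendsto_deriv_GammaSeq {s : ℂ} (hs : 0 < s.re) :
    Tendsto (fun n : ℕ ↦ deriv (fun z ↦ Complex.GammaSeq z n) s) atTop
      (𝓝 (deriv Complex.Gamma s)) := by
  have hr : 0 < s.re / 2 := half_pos hs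
  have hre : ∀ z ∈ Metric.closedBall s (s.re / 2), 0 < z.re := fun z hz ↦ by
    have := (Complex.abs_re_le_norm (z - s)).trans (mem_closedBall_iff_norm.1 hz)
    rw [abs_le, Complex.sub_re] at this
    linarith
  have hcont : ContinuousOn (fun z : ℂ ↦ Real.Gamma z.re) (Metric.sphere s (s.re / 2)) :=
    fun z hz ↦ by
    have hΓ : ContinuousAt Real.Gamma z.re := (Real.differentiableAt_Gamma fun m h ↦
      ne_neg_natCast_of_re_pos (z := (z.re : ℂ)) (hre z (Metric.sphere_subset_closedBall hz)) m
        (by exact_mod_cast congrArg Complex.ofReal h)).continuousAt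
    exact (ContinuousAt.comp (f := Complex.re) hΓ
      Complex.continuous_re.continuousAt).continuousWithinAt
  obtain ⟨C, hC⟩ := ((isCompact_sphere s (s.re / 2)).image_of_continuousOn hcont).bddAbove
  refine tendsto_deriv_of_tendsto_of_norm_le (C := C) hr ?_ ?_ ?_ fun z _ ↦
    Complex.GammaSeq_tendsto_Gamma z
  · filter_upwards [eventually_ne_atTop 0] with n hn z hz
    exact (differentiableAt_GammaSeq hn (hre z hz)).differentiableWithinAt
  · exact fun z hz ↦ (Complex.differentiableAt_Gamma _
      (ne_neg_natCast_of_re_pos (hre z hz))).differentiableWithinAt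
  · filter_upwards [eventually_ne_atTop 0] with n hn z hz
    exact (norm_GammaSeq_le (hre z (Metric.sphere_subset_closedBall hz)) hn).trans
      (hC (mem_image_of_mem _ hz))

lemma logDeriv_GammaSeq {n : ℕ} (hn : n ≠ 0) {s : ℂ} (hs : 0 < s.re) :
    logDeriv (fun z ↦ Complex.GammaSeq z n) s =
      Complex.log n - ∑ j ∈ Finset.range (n + 1), 1 / (s + j) := by
  have hn' : (n : ℂ) ≠ 0 := by exact_mod_cast hn
  have hpow : (n : ℂ) ^ s ≠ 0 := by simp [Complex.cpow_eq_zero_iff, hn']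
  have hfact : (n.factorial : ℂ) ≠ 0 := by exact_mod_cast n.factorial_ne_zero
  have hj : ∀ j : ℕ, s + j ≠ 0 := fun j h ↦
    ne_neg_natCast_of_re_pos hs j (eq_neg_of_add_eq_zero_left h)
  have hd : HasDerivAt (fun z : ℂ ↦ (n : ℂ) ^ z) ((n : ℂ) ^ s * Complex.log n) s := by
    simpa using (hasDerivAt_id s).const_cpow (c := (n : ℂ)) (Or.inl hn')
  unfold Complex.GammaSeq
  rw [logDeriv_div (f := fun z ↦ (n : ℂ) ^ z * (n.factorial : ℂ))
    (g := fun z ↦ ∏ j ∈ Finset.range (n + 1), (z + j)) s (mul_ne_zero hpow hfact)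
    (Finset.prod_ne_zero_iff.2 fun j _ ↦ hj j) (hd.differentiableAt.mul_const _) (by fun_prop),
    logDeriv_mul_const _ _ hfact, logDeriv_apply, hd.deriv, mul_div_cancel_left₀ _ hpow,
    logDeriv_prod (fun j _ ↦ hj j) fun j _ ↦ by fun_prop]
  congr 1
  exact Finset.sum_congr rfl fun j _ ↦ by simp [logDeriv_apply]

theorem tendsto_log_sub_sum_digamma {s : ℂ} (hs : 0 < s.re) :
    Tendsto (fun n : ℕ ↦ Complex.log n - ∑ j ∈ Finset.range (n + 1), 1 / (s + j)) atTop
      (𝓝 (Complex.digamma s)) := by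
  have h : Tendsto (fun n : ℕ ↦ logDeriv (fun z ↦ Complex.GammaSeq z n) s) atTop
      (𝓝 (Complex.digamma s)) :=
    (tendsto_deriv_GammaSeq hs).div (Complex.GammaSeq_tendsto_Gamma s)
      (Complex.Gamma_ne_zero_of_re_pos hs)
  refine h.congr' ?_
  filter_upwards [eventually_ne_atTop 0] with n hn using logDeriv_GammaSeq hn hs

/-- The terms of the series `2 ∑ (1 / (2n + 2) - Re (1 / (2n + 2 + iτ)))` for the real part of
`ψ(1 + iτ/2) - ψ(1)`, with `ψ` the digamma function. -/
noncomputable def digammaTerm (τ : ℝ) (n : ℕ) : ℝ :=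
  2 / (2 * (n : ℝ) + 2) - 2 * poissonKer (2 * n + 2) τ

lemma digammaTerm_nonneg (τ : ℝ) (n : ℕ) : 0 ≤ digammaTerm τ n := by
  rw [digammaTerm, poissonKer, sub_nonneg, ← mul_div_assoc,
    div_le_div_iff₀ (by positivity) (by positivity)]
  nlinarith [mul_nonneg (n.cast_nonneg (α := ℝ)) (sq_nonneg τ), sq_nonneg τ]

lemma re_one_div_sub_eq_digammaTerm (τ : ℝ) (n : ℕ) :
    (1 / (1 + (n : ℂ)) - 1 / (1 + (τ / 2 : ℝ) * Complex.I + n)).re = digammaTerm τ n := by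
  have h1 : (1 / (1 + (n : ℂ))).re = 2 / (2 * (n : ℝ) + 2) := by
    rw [show 1 / (1 + (n : ℂ)) = ((1 / (1 + (n : ℝ)) : ℝ) : ℂ) by push_cast; rfl,
      Complex.ofReal_re]
    field_simp
    ring
  rw [Complex.sub_re, h1, digammaTerm, poissonKer, one_div, Complex.inv_re, Complex.normSq_apply]
  simp only [Complex.add_re, Complex.one_re, Complex.re_ofReal_mul, Complex.I_re, mul_zero,
    add_zero, Complex.natCast_re, Complex.add_im, Complex.one_im, Complex.im_ofReal_mul,
    Complex.I_im, mul_one, zero_add, Complex.natCast_im]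
  field_simp
  ring

theorem hasSum_digammaTerm (τ : ℝ) : HasSum (digammaTerm τ)
    ((Complex.digamma (1 + (τ / 2 : ℝ) * Complex.I)).re + Real.eulerMascheroniConstant) := by
  have hlim := (Complex.continuous_re.tendsto _).comp
    ((tendsto_log_sub_sum_digamma (s := 1 + (τ / 2 : ℝ) * Complex.I) (by simp)).sub
      (tendsto_log_sub_sum_digamma (s := 1) (by simp)))
  rw [Complex.digamma_one, sub_neg_eq_add, Complex.add_re, Complex.ofReal_re] at hlim
  rw [hasSum_iff_tendsto_nat_of_nonneg (digammaTerm_nonneg τ), ← tendsto_add_atTop_iff_nat 1]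
  refine hlim.congr fun n ↦ ?_
  rw [Function.comp_apply, sub_sub_sub_cancel_left, ← Finset.sum_sub_distrib, Complex.re_sum]
  exact Finset.sum_congr rfl fun j _ ↦ re_one_div_sub_eq_digammaTerm τ j

theorem hasSum_vonMangoldt_mul_cos {σ : ℝ} (hσ : 1 < σ) (τ : ℝ) :
    HasSum (fun n : ℕ ↦ Λ n / (n : ℝ) ^ σ * Real.cos (τ * Real.log n))
      (-(logDeriv riemannZeta (σ + τ * Complex.I))).re := by
  have hs : 1 < (σ + τ * Complex.I).re := by simpa using hσ
  have h := Complex.hasSum_re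
    (ArithmeticFunction.LSeriesSummable_vonMangoldt hs).LSeriesHasSum
  rw [ArithmeticFunction.LSeries_vonMangoldt_eq_deriv_riemannZeta_div hs, neg_div,
    ← logDeriv_apply] at h
  convert h using 1
  ext n
  rcases eq_or_ne n 0 with rfl | hn
  · simp
  have hn0 : (0 : ℝ) < n := by positivity
  have hpow : (n : ℂ) ^ (σ + τ * Complex.I) =
      ((n : ℝ) ^ σ : ℝ) * Complex.exp ((τ * Real.log n : ℝ) * Complex.I) := by
    rw [Complex.cpow_add _ _ (by exact_mod_cast hn), Complex.ofReal_cpow hn0.le,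
      Complex.ofReal_natCast, Complex.cpow_def_of_ne_zero (y := τ * Complex.I)
        (by exact_mod_cast hn), ← Complex.natCast_log]
    push_cast
    ring_nf
  rw [LSeries.term_of_ne_zero hn, hpow, div_mul_eq_div_div, ← Complex.ofReal_div,
    div_eq_mul_inv _ (Complex.exp _), ← Complex.exp_neg, ← neg_mul, ← Complex.ofReal_neg,
    Complex.re_ofReal_mul, Complex.exp_ofReal_mul_I_re, Real.cos_neg]

lemma logDeriv_Gammaℝ {s : ℂ} (hs : 0 < s.re) :
    logDeriv Complex.Gammaℝ s = -Real.log Real.pi / 2 + Complex.digamma (s / 2) / 2 := by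
  have hπ : (Real.pi : ℂ) ≠ 0 := by exact_mod_cast Real.pi_ne_zero
  have hpow : (Real.pi : ℂ) ^ (-s / 2) ≠ 0 := by simp [Complex.cpow_eq_zero_iff, hπ]
  have hre : 0 < (s / 2).re := by simpa using hs
  have hdΓ : DifferentiableAt ℂ Complex.Gamma (s / 2) :=
    Complex.differentiableAt_Gamma _ (ne_neg_natCast_of_re_pos hre)
  have hhalf : HasDerivAt (fun s : ℂ ↦ s / 2) (1 / 2) s := (hasDerivAt_id s).div_const 2
  have hdpow : HasDerivAt (fun s : ℂ ↦ (Real.pi : ℂ) ^ (-s / 2))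
      ((Real.pi : ℂ) ^ (-s / 2) * Complex.log Real.pi * (-1 / 2)) s :=
    ((hasDerivAt_id s).neg.div_const 2).const_cpow (Or.inl hπ)
  rw [show Complex.Gammaℝ = fun s ↦ (Real.pi : ℂ) ^ (-s / 2) * Complex.Gamma (s / 2) from
    funext Complex.Gammaℝ_def,
    logDeriv_mul (g := fun s ↦ Complex.Gamma (s / 2)) s hpow
      (Complex.Gamma_ne_zero_of_re_pos hre) hdpow.differentiableAt
      (hdΓ.comp s hhalf.differentiableAt),
    show (fun s ↦ Complex.Gamma (s / 2)) = Complex.Gamma ∘ fun s ↦ s / 2 from rfl,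
    logDeriv_comp (g := fun s ↦ s / 2) hdΓ hhalf.differentiableAt, hhalf.deriv, logDeriv_apply,
    hdpow.deriv, ← Complex.ofReal_log Real.pi_pos.le, ← Complex.digamma_def, mul_assoc,
    mul_div_cancel_left₀ _ hpow]
  ring

lemma logDeriv_riemannXi {s : ℂ} (hs : 1 < s.re) :
    logDeriv riemannXi s =
      1 / s + 1 / (s - 1) + logDeriv Complex.Gammaℝ s + logDeriv riemannZeta s := by
  have hs0 : s ≠ 0 := fun h ↦ by norm_num [h] at hs
  have hs1 : s ≠ 1 := fun h ↦ by norm_num [h] at hs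
  have hs1' : s - 1 ≠ 0 := sub_ne_zero.2 hs1
  have hpos : 0 < s.re := zero_lt_one.trans hs
  have hΓ := Complex.Gammaℝ_ne_zero_of_re_pos hpos
  have hdΓ := differentiableAt_Gammaℝ hpos
  have hξ : riemannXi =ᶠ[𝓝 s] fun s ↦ s * (s - 1) * Complex.Gammaℝ s * riemannZeta s := by
    filter_upwards [(isOpen_lt continuous_const Complex.continuous_re).mem_nhds hs] with z hz
    exact riemannXi_eq_mul_zeta (zero_lt_one.trans hz) fun h ↦ by norm_num [h] at hz
  have hsub : logDeriv (fun s : ℂ ↦ s - 1) s = 1 / (s - 1) := by simp [logDeriv_apply]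
  rw [(logDeriv_congr_nhds hξ).eq_of_nhds,
    logDeriv_mul (f := fun s ↦ s * (s - 1) * Complex.Gammaℝ s) (g := riemannZeta) s
      (mul_ne_zero (mul_ne_zero hs0 hs1') hΓ) (riemannZeta_ne_zero_of_one_le_re hs.le)
      (by fun_prop) (differentiableAt_riemannZeta hs1),
    logDeriv_mul (f := fun s ↦ s * (s - 1)) (g := Complex.Gammaℝ) s (mul_ne_zero hs0 hs1') hΓ
      (by fun_prop) hdΓ,
    logDeriv_mul (f := fun s ↦ s) (g := fun s ↦ s - 1) s hs0 hs1' (by fun_prop) (by fun_prop),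
    logDeriv_id', hsub]

/-- The constant `-γ - log π` contributed by the archimedean factor to `2 Re ξ'/ξ(2 + iτ)`. -/
noncomputable def archimedeanConst : ℝ := -Real.eulerMascheroniConstant - Real.log Real.pi

/-- `∑ Λ(n) n⁻² cos (τ log n) = -Re ζ'/ζ(2 + iτ)`. -/
noncomputable def primeCosSum (τ : ℝ) : ℝ := ∑' n : ℕ, Λ n / (n : ℝ) ^ 2 * Real.cos (τ * Real.log n)

/-- The real part of `ψ(1 + iτ/2) - ψ(1)`, as a series. -/
noncomputable def digammaSum (τ : ℝ) : ℝ := ∑' n, digammaTerm τ n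

lemma re_one_div_ofReal_add_mul_I (b τ : ℝ) :
    (1 / ((b : ℂ) + τ * Complex.I)).re = poissonKer b τ := by
  rw [one_div, Complex.inv_re, Complex.normSq_apply, poissonKer]
  simp [sq]

theorem two_mul_re_logDeriv_riemannXi (τ : ℝ) :
    2 * (logDeriv riemannXi (2 + τ * Complex.I)).re =
      2 * poissonKer 2 τ + 2 * poissonKer 1 τ + archimedeanConst + digammaSum τ
        - 2 * primeCosSum τ := by
  have h2 : (1 / (2 + τ * Complex.I)).re = poissonKer 2 τ := by
    simpa using re_one_div_ofReal_add_mul_I 2 τ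
  have h1 : (1 / (2 + τ * Complex.I - 1)).re = poissonKer 1 τ := by
    rw [← re_one_div_ofReal_add_mul_I]
    congr 2
    push_cast
    ring
  have hΓ : (logDeriv Complex.Gammaℝ (2 + τ * Complex.I)).re = -Real.log Real.pi / 2 +
      (Complex.digamma (1 + (τ / 2 : ℝ) * Complex.I)).re / 2 := by
    rw [logDeriv_Gammaℝ (by simp), Complex.add_re, ← Complex.ofReal_neg, Complex.div_ofNat_re,
      Complex.div_ofNat_re, Complex.ofReal_re]
    congr 4
    push_cast
    ring
  have hψ := (hasSum_digammaTerm τ).tsum_eq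
  have hζ := (hasSum_vonMangoldt_mul_cos one_lt_two τ).tsum_eq
  simp only [Real.rpow_two, Complex.neg_re, Complex.ofReal_ofNat] at hζ
  rw [logDeriv_riemannXi (by simp)]
  simp only [Complex.add_re, h2, h1, hΓ, archimedeanConst, digammaSum, primeCosSum, hψ, hζ]
  ring

theorem hasSum_xiMult_mul_poissonKer_eq (τ : ℝ) :
    HasSum (fun ρ : ℂ ↦ (xiMult ρ : ℝ) *
        (poissonKer (2 - ρ.re) (ρ.im - τ) + poissonKer (1 + ρ.re) (ρ.im - τ)))
      (2 * poissonKer 2 τ + 2 * poissonKer 1 τ + archimedeanConst + digammaSum τ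
        - 2 * primeCosSum τ) := by
  rw [← two_mul_re_logDeriv_riemannXi]
  exact hasSum_xiMult_mul_poissonKer τ

/-! ### The test kernel and its Fourier transform -/

/-- The polynomial profile `(1 - v)(1 + v / 4)` on `[0, 1]` from which the test kernel is built. -/
noncomputable def testProfile (v : ℝ) : ℝ := (1 - v) * (1 + v / 4)

/-- The even, compactly supported extension of `testProfile` from `[0, 1]` to `ℝ`. -/
noncomputable def testBump (v : ℝ) : ℝ := max 0 (testProfile |v|)

/-- The test function `u ↦ testBump (u / A) e^{-l|u|}`, supported on `[-A, A]`. -/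
noncomputable def testWindow (A l u : ℝ) : ℝ := testBump (u / A) * Real.exp (-l * |u|)

/-- The test kernel: half the cosine transform of `testWindow A l`. -/
noncomputable def testKernel (A l y : ℝ) : ℝ :=
  ∫ u in (0 : ℝ)..A, testProfile (u / A) * Real.exp (-l * u) * Real.cos (u * y)

lemma continuous_testProfile : Continuous testProfile := by
  unfold testProfile; fun_prop

lemma hasDerivAt_testProfile (u : ℝ) : HasDerivAt testProfile (-(3 / 4 + u / 2)) u :=
  (((hasDerivAt_id u).const_sub 1).mul
    (((hasDerivAt_id u).div_const 4).const_add 1)).congr_deriv (by simp only [id]; ring)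

lemma testProfile_mem_Icc {v : ℝ} (hv : v ∈ Icc (0 : ℝ) 1) : testProfile v ∈ Icc (0 : ℝ) 1 := by
  obtain ⟨h₀, h₁⟩ := hv
  unfold testProfile; constructor <;> nlinarith

lemma continuous_testBump : Continuous testBump :=
  continuous_const.max (continuous_testProfile.comp continuous_abs)

lemma testBump_eq_testProfile {v : ℝ} (hv : v ∈ Icc (0 : ℝ) 1) : testBump v = testProfile v := by
  rw [testBump, abs_of_nonneg hv.1, max_eq_right (testProfile_mem_Icc hv).1]

lemma testBump_eq_zero {v : ℝ} (h : 1 ≤ |v|) : testBump v = 0 := by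
  rw [testBump, max_eq_left]; unfold testProfile; nlinarith

lemma testBump_nonneg (v : ℝ) : 0 ≤ testBump v := le_max_left _ _

lemma testBump_le_one (v : ℝ) : testBump v ≤ 1 := by
  rcases le_total 1 |v| with h | h
  · exact (testBump_eq_zero h).trans_le zero_le_one
  · exact max_le zero_le_one (testProfile_mem_Icc ⟨abs_nonneg v, h⟩).2

lemma sq_mul_integral_mul_cos {p p' p'' : ℝ → ℝ} (hp : ∀ u, HasDerivAt p (p' u) u)
    (hp' : ∀ u, HasDerivAt p' (p'' u) u) (hp'' : Continuous p'') (A y : ℝ) :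
    y ^ 2 * ∫ u in (0 : ℝ)..A, p u * Real.cos (u * y) =
      p A * (y * Real.sin (A * y)) + p' A * Real.cos (A * y) - p' 0 -
        ∫ u in (0 : ℝ)..A, p'' u * Real.cos (u * y) := by
  have hpc : Continuous p := continuous_iff_continuousAt.2 fun u ↦ (hp u).continuousAt
  have hprim (u : ℝ) :
      HasDerivAt (fun u ↦ p u * (y * Real.sin (u * y)) + p' u * Real.cos (u * y))
        (y ^ 2 * (p u * Real.cos (u * y)) + p'' u * Real.cos (u * y)) u := by
    have hu : HasDerivAt (fun u : ℝ ↦ u * y) y u := by simpa using (hasDerivAt_id u).mul_const y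
    exact (((hp u).mul (hu.sin.const_mul y)).add ((hp' u).mul hu.cos)).congr_deriv (by ring)
  have hftc := intervalIntegral.integral_eq_sub_of_hasDerivAt (a := 0) (b := A)
    (fun u _ ↦ hprim u) (Continuous.intervalIntegrable (by fun_prop) _ _)
  rw [intervalIntegral.integral_add (Continuous.intervalIntegrable (by fun_prop) _ _)
    (Continuous.intervalIntegrable (by fun_prop) _ _), intervalIntegral.integral_const_mul] at hftc
  simp only [zero_mul, Real.sin_zero, Real.cos_zero, mul_zero, mul_one, zero_add] at hftc
  linarith

lemma exp_neg_mul_le_exp_mul_abs {A u : ℝ} (l : ℝ) (hu : u ∈ Icc 0 A) :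
    Real.exp (-l * u) ≤ Real.exp (A * |l|) := by
  refine Real.exp_le_exp.2 ?_
  nlinarith [neg_le_abs l, abs_nonneg l, hu.1, hu.2]

lemma hasDerivAt_mul_exp_neg_mul {q : ℝ → ℝ} {q' u : ℝ} (hq : HasDerivAt q q' u) (l : ℝ) :
    HasDerivAt (fun u ↦ q u * Real.exp (-l * u)) ((q' - l * q u) * Real.exp (-l * u)) u := by
  have hexp : HasDerivAt (fun u ↦ Real.exp (-l * u)) (Real.exp (-l * u) * -l) u :=
    (hasDerivAt_const_mul (-l)).exp
  exact (hq.mul hexp).congr_deriv (by ring)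

lemma testKernel_eq_mul_testKernel_one {A : ℝ} (hA : A ≠ 0) (l y : ℝ) :
    testKernel A l y = A * testKernel 1 (A * l) (A * y) := by
  have h := intervalIntegral.mul_integral_comp_mul_left (a := 0) (b := 1) (c := A)
    (f := fun u ↦ testProfile (u / A) * Real.exp (-l * u) * Real.cos (u * y))
  rw [mul_zero, mul_one] at h
  rw [testKernel, ← h, testKernel]
  congr 2 with v
  rw [mul_div_cancel_left₀ v hA, div_one]
  ring_nf

lemma abs_integral_mul_exp_mul_cos_le {q : ℝ → ℝ} {C : ℝ} (hq : ∀ v ∈ Icc (0 : ℝ) 1, |q v| ≤ C)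
    (l y : ℝ) :
    |∫ u in (0 : ℝ)..1, q u * Real.exp (-l * u) * Real.cos (u * y)| ≤ C * Real.exp |l| := by
  have h := intervalIntegral.norm_integral_le_of_norm_le_const (a := 0) (b := 1)
    (C := C * Real.exp |l|)
    (f := fun u ↦ q u * Real.exp (-l * u) * Real.cos (u * y)) fun u hu ↦ ?_
  · simpa using h
  rw [uIoc_of_le zero_le_one] at hu
  have hqu := hq u (Ioc_subset_Icc_self hu)
  have hexp := exp_neg_mul_le_exp_mul_abs l (Ioc_subset_Icc_self hu)
  rw [one_mul] at hexp
  rw [norm_mul, norm_mul, Real.norm_of_nonneg (Real.exp_pos _).le]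
  calc |q u| * Real.exp (-l * u) * |Real.cos (u * y)|
      ≤ C * Real.exp |l| * 1 := by
        have := (abs_nonneg _).trans hqu
        gcongr
        exact Real.abs_cos_le_one _
    _ = C * Real.exp |l| := mul_one _

lemma abs_testKernel_one_le (l y : ℝ) : |testKernel 1 l y| ≤ Real.exp |l| := by
  have h := abs_integral_mul_exp_mul_cos_le (q := testProfile) (C := 1) (fun v hv ↦ by
    rw [abs_of_nonneg (testProfile_mem_Icc hv).1]; exact (testProfile_mem_Icc hv).2) l y
  simpa [testKernel] using h

lemma sq_mul_testKernel_one (l y : ℝ) :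
    y ^ 2 * testKernel 1 l y =
      -(5 / 4) * Real.exp (-l) * Real.cos y + (3 / 4 + l) -
        ∫ u in (0 : ℝ)..1, (-(1 / 2) + 2 * l * (3 / 4 + u / 2) + l ^ 2 * testProfile u) *
          Real.exp (-l * u) * Real.cos (u * y) := by
  have hprofile' (u : ℝ) : HasDerivAt (fun u : ℝ ↦ -(3 / 4 + u / 2) - l * testProfile u)
      (-(1 / 2) - l * -(3 / 4 + u / 2)) u :=
    (((hasDerivAt_id u).div_const 2).const_add (3 / 4)).neg.sub
      ((hasDerivAt_testProfile u).const_mul l)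
  have hcont := continuous_testProfile
  have h := sq_mul_integral_mul_cos
    (fun u ↦ hasDerivAt_mul_exp_neg_mul (hasDerivAt_testProfile u) l)
    (fun u ↦ hasDerivAt_mul_exp_neg_mul (hprofile' u) l) (by fun_prop) 1 y
  have hinteg (u : ℝ) : -(1 / 2) - l * -(3 / 4 + u / 2) - l * (-(3 / 4 + u / 2) - l * testProfile u)
      = -(1 / 2) + 2 * l * (3 / 4 + u / 2) + l ^ 2 * testProfile u := by ring
  simp only [hinteg] at h
  simp only [testKernel, div_one, h]
  simp only [testProfile, mul_zero, Real.exp_zero, mul_one, one_mul]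
  ring

lemma abs_testKernel_one_le_div (l y : ℝ) :
    |testKernel 1 l y| ≤ 4 * Real.exp |l| * (1 + |l|) ^ 2 / (1 + y ^ 2) := by
  have hexp : 1 ≤ Real.exp |l| := Real.one_le_exp (abs_nonneg l)
  have hint := abs_integral_mul_exp_mul_cos_le (C := 1 / 2 + 5 / 2 * |l| + |l| ^ 2)
    (q := fun u ↦ -(1 / 2) + 2 * l * (3 / 4 + u / 2) + l ^ 2 * testProfile u) (fun v hv ↦ by
      obtain ⟨hp₀, hp₁⟩ := testProfile_mem_Icc hv
      obtain ⟨h₀, h₁⟩ := hv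
      refine (abs_add_three _ _ _).trans (add_le_add_three (by norm_num) ?_ ?_)
      · rw [abs_mul, abs_mul, abs_two, abs_of_nonneg (by positivity : 0 ≤ 3 / 4 + v / 2)]
        nlinarith [abs_nonneg l]
      · rw [abs_mul, abs_pow, abs_of_nonneg hp₀]
        exact mul_le_of_le_one_right (by positivity) hp₁) l y
  have hright : |-(5 / 4) * Real.exp (-l) * Real.cos y| ≤ 5 / 4 * Real.exp |l| := by
    rw [abs_mul, abs_mul, abs_neg, Real.abs_exp, abs_of_pos (by norm_num : (0 : ℝ) < 5 / 4)]
    exact (mul_le_of_le_one_right (by positivity) (Real.abs_cos_le_one y)).trans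
      (by gcongr; exact neg_le_abs l)
  have hleft : |3 / 4 + l| ≤ (3 / 4 + |l|) * Real.exp |l| := by
    have h : |3 / 4 + l| ≤ 3 / 4 + |l| := (abs_add_le _ _).trans_eq (by norm_num)
    nlinarith [abs_nonneg l]
  have hsq : y ^ 2 * |testKernel 1 l y| ≤
      Real.exp |l| * (5 / 2 + 7 / 2 * |l| + |l| ^ 2) := by
    rw [← abs_sq y, ← abs_mul, sq_mul_testKernel_one]
    refine ((abs_sub _ _).trans (add_le_add_left (abs_add_le _ _) _)).trans ?_
    linarith
  have hbase := abs_testKernel_one_le l y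
  rw [le_div_iff₀ (by positivity)]
  nlinarith [abs_nonneg l, mul_nonneg (Real.exp_pos |l|).le (abs_nonneg l),
    mul_nonneg (Real.exp_pos |l|).le (sq_nonneg |l|)]

lemma abs_testKernel_le_div {A : ℝ} (hA : 0 < A) (l y : ℝ) :
    |testKernel A l y| ≤
      4 * A * Real.exp (A * |l|) * (1 + A * |l|) ^ 2 / (1 + (A * y) ^ 2) := by
  have h := abs_testKernel_one_le_div (A * l) (A * y)
  rw [abs_mul A l, abs_of_pos hA] at h
  rw [testKernel_eq_mul_testKernel_one hA.ne', abs_mul, abs_of_pos hA]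
  refine (mul_le_mul_of_nonneg_left h hA.le).trans_eq ?_
  ring

lemma continuous_testKernel (A l : ℝ) : Continuous (testKernel A l) := by
  have := continuous_testProfile
  unfold testKernel
  exact intervalIntegral.continuous_parametric_intervalIntegral_of_continuous' (by fun_prop) 0 A

lemma testKernel_neg (A l y : ℝ) : testKernel A l (-y) = testKernel A l y := by
  simp [testKernel]

lemma integrable_div_one_add_mul_sq {A : ℝ} (hA : A ≠ 0) (C : ℝ) :
    Integrable fun y : ℝ ↦ C / (1 + (A * y) ^ 2) := by
  simpa [div_eq_mul_inv] using (integrable_inv_one_add_sq.comp_mul_left' hA).const_mul C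

lemma integrable_testKernel {A : ℝ} (hA : 0 < A) (l : ℝ) : Integrable (testKernel A l) :=
  (integrable_div_one_add_mul_sq hA.ne' _).mono' (continuous_testKernel A l).aestronglyMeasurable
    (Eventually.of_forall fun y ↦ abs_testKernel_le_div hA l y)

lemma setIntegral_Ioi_eq_intervalIntegral {A : ℝ} (hA : 0 ≤ A) {f : ℝ → ℝ}
    (hf : ∀ u, A < u → f u = 0) : ∫ u in Ioi (0 : ℝ), f u = ∫ u in (0 : ℝ)..A, f u := by
  rw [intervalIntegral.integral_of_le hA]
  refine setIntegral_eq_of_subset_of_forall_sdiff_eq_zero measurableSet_Ioi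
    Ioc_subset_Ioi_self fun u hu ↦ hf u ?_
  by_contra! h
  exact hu.2 ⟨hu.1, h⟩

lemma testBump_div_eq_zero {A u : ℝ} (hA : 0 < A) (hu : A < u) : testBump (u / A) = 0 :=
  testBump_eq_zero (((one_le_div hA).2 hu.le).trans (le_abs_self _))

lemma div_mem_Icc_zero_one {A u : ℝ} (hA : 0 ≤ A) (hu : u ∈ Icc 0 A) : u / A ∈ Icc (0 : ℝ) 1 :=
  ⟨div_nonneg hu.1 hA, div_le_one_of_le₀ hu.2 hA⟩

lemma testWindow_of_nonneg (A l : ℝ) {u : ℝ} (hu : 0 ≤ u) :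
    testWindow A l u = testBump (u / A) * Real.exp (-l * u) := by
  rw [testWindow, abs_of_nonneg hu]

lemma testWindow_neg (A l u : ℝ) : testWindow A l (-u) = testWindow A l u := by
  simp [testWindow, testBump, neg_div]

lemma setIntegral_testWindow_mul_cos {A : ℝ} (hA : 0 < A) (l y : ℝ) :
    ∫ u in Ioi (0 : ℝ), testWindow A l u * Real.cos (u * y) = testKernel A l y := by
  rw [setIntegral_Ioi_eq_intervalIntegral hA.le fun u hu ↦ by
    rw [testWindow, testBump_div_eq_zero hA hu, zero_mul, zero_mul]]
  refine intervalIntegral.integral_congr fun u hu ↦ ?_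
  rw [uIcc_of_le hA.le] at hu
  simp only [testWindow_of_nonneg A l hu.1, testBump_eq_testProfile (div_mem_Icc_zero_one hA.le hu)]

lemma continuous_testWindow (A l : ℝ) : Continuous (testWindow A l) := by
  have := continuous_testBump
  unfold testWindow; fun_prop

lemma integrable_testWindow {A : ℝ} (hA : 0 < A) (l : ℝ) : Integrable (testWindow A l) := by
  refine (continuous_testWindow A l).integrable_of_hasCompactSupport
    (HasCompactSupport.intro (isCompact_Icc (a := -A) (b := A)) fun u hu ↦ ?_)
  rw [testWindow, testBump_eq_zero, zero_mul]
  rw [abs_div, abs_of_pos hA, one_le_div hA]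
  exact not_lt.1 fun h ↦ hu (abs_le.1 h.le)

lemma integral_testWindow_mul_cos {A : ℝ} (hA : 0 < A) (l y : ℝ) :
    ∫ u, testWindow A l u * Real.cos (u * y) = 2 * testKernel A l y := by
  rw [← setIntegral_testWindow_mul_cos hA l y,
    ← integral_comp_abs (f := fun u ↦ testWindow A l u * Real.cos (u * y))]
  congr with u
  rcases abs_choice u with h | h <;> simp [h, testWindow_neg]

lemma integrable_mul_cos {E : ℝ → ℝ} (hE : Integrable E) (c d : ℝ) :
    Integrable fun v ↦ E v * Real.cos (c * v + d) :=
  hE.mul_bdd (c := 1) (by fun_prop) (Eventually.of_forall fun _ ↦ Real.abs_cos_le_one _)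

lemma integral_mul_sin_eq_zero {E : ℝ → ℝ} (hE : E.Even) (c : ℝ) :
    ∫ v, E v * Real.sin (c * v) = 0 := by
  have h := integral_neg_eq_self (fun v ↦ E v * Real.sin (c * v)) volume
  simp only [hE _, mul_neg, Real.sin_neg, integral_neg] at h
  linarith

open FourierTransform in
lemma fourier_ofReal_of_even {E : ℝ → ℝ} (hi : Integrable E) (he : E.Even) (w : ℝ) :
    𝓕 (fun u ↦ (E u : ℂ)) w = ((∫ v, E v * Real.cos (2 * Real.pi * w * v) : ℝ) : ℂ) := by
  have hexp (v : ℝ) : Complex.exp (↑(-2 * Real.pi * v * w) * Complex.I) • (E v : ℂ) =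
      ((E v * Real.cos (2 * Real.pi * w * v) : ℝ) : ℂ) -
        ((E v * Real.sin (2 * Real.pi * w * v) : ℝ) : ℂ) * Complex.I := by
    rw [Complex.exp_mul_I, ← Complex.ofReal_cos, ← Complex.ofReal_sin,
      show -2 * Real.pi * v * w = -(2 * Real.pi * w * v) by ring, Real.cos_neg, Real.sin_neg,
      smul_eq_mul]
    push_cast; ring
  have hcos : Integrable fun v ↦ E v * Real.cos (2 * Real.pi * w * v) := by
    simpa using integrable_mul_cos hi (2 * Real.pi * w) 0
  have hsin : Integrable fun v ↦ E v * Real.sin (2 * Real.pi * w * v) :=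
    hi.mul_bdd (c := 1) (by fun_prop) (Eventually.of_forall fun _ ↦ Real.abs_sin_le_one _)
  simp only [Real.fourier_real_eq_integral_exp_smul, hexp]
  rw [integral_sub hcos.ofReal (hsin.ofReal.mul_const _), integral_mul_const,
    integral_complex_ofReal, integral_complex_ofReal, integral_mul_sin_eq_zero he]
  simp

open FourierTransform in
theorem integral_cosTransform_mul_cos {E K : ℝ → ℝ} (hc : Continuous E) (hi : Integrable E)
    (he : E.Even) (hK : Integrable K) (hEK : ∀ y, ∫ v, E v * Real.cos (y * v) = K y) (u : ℝ) :
    ∫ y, K y * Real.cos (u * y) = 2 * Real.pi * E u := by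
  have hF : 𝓕 (fun u ↦ (E u : ℂ)) = fun w ↦ (K (2 * Real.pi * w) : ℂ) := by
    ext w
    rw [fourier_ofReal_of_even hi he, hEK]
  have hKπ : Integrable fun w ↦ (K (2 * Real.pi * w) : ℂ) :=
    (hK.comp_mul_left' (by positivity)).ofReal
  have hinv := congrFun ((Complex.continuous_ofReal.comp hc).fourierInv_fourier_eq
    (f := fun u ↦ (E u : ℂ)) hi.ofReal (hF ▸ hKπ)) u
  rw [Real.fourierInv_eq', hF] at hinv
  have hre := congrArg Complex.re hinv
  rw [← Complex.reCLM_apply, ← ContinuousLinearMap.integral_comp_comm] at hre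
  · have hcos (v : ℝ) : Complex.reCLM (Complex.exp (↑(2 * Real.pi * inner ℝ v u) * Complex.I) •
          (K (2 * Real.pi * v) : ℂ)) =
        (fun y ↦ K y * Real.cos (u * y)) (2 * Real.pi * v) := by
      rw [Complex.reCLM_apply, smul_eq_mul, Complex.re_mul_ofReal, Complex.exp_ofReal_mul_I_re,
        show inner ℝ v u = u * v by simp [inner], mul_comm, mul_left_comm _ u]
    simp only [hcos] at hre
    rw [Measure.integral_comp_mul_left fun y ↦ K y * Real.cos (u * y), abs_of_pos (by positivity),
      smul_eq_mul, Complex.ofReal_re, inv_mul_eq_iff_eq_mul₀ (by positivity)] at hre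
    exact hre
  · exact hKπ.bdd_mul (c := 1) (by fun_prop)
      (Eventually.of_forall fun v ↦ (Complex.norm_exp_ofReal_mul_I _).le)

lemma integral_testKernel_mul_cos {A : ℝ} (hA : 0 < A) (l u : ℝ) :
    ∫ y, testKernel A l y * Real.cos (u * y) = Real.pi * testWindow A l u := by
  have h := integral_cosTransform_mul_cos (continuous_testWindow A l) (integrable_testWindow hA l)
    (testWindow_neg A l) ((integrable_testKernel hA l).const_mul 2)
    (fun y ↦ by simpa only [mul_comm y] using integral_testWindow_mul_cos hA l y) u
  simp only [mul_assoc, integral_const_mul] at h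
  exact mul_left_cancel₀ two_ne_zero h

lemma integral_testKernel_mul_cos_add {A : ℝ} (hA : 0 < A) (l u c : ℝ) :
    ∫ y, testKernel A l y * Real.cos (u * (y + c)) =
      Real.pi * testWindow A l u * Real.cos (u * c) := by
  have hK := integrable_testKernel hA l
  have hcos : Integrable fun y ↦ testKernel A l y * Real.cos (u * y) := by
    simpa using integrable_mul_cos hK u 0
  have hsin : Integrable fun y ↦ testKernel A l y * Real.sin (u * y) :=
    hK.mul_bdd (c := 1) (by fun_prop) (Eventually.of_forall fun _ ↦ Real.abs_sin_le_one _)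
  simp only [mul_add, Real.cos_add, mul_sub, ← mul_assoc]
  rw [integral_sub (hcos.mul_const _) (hsin.mul_const _), integral_mul_const, integral_mul_const,
    integral_testKernel_mul_cos hA, integral_mul_sin_eq_zero (testKernel_neg A l), zero_mul,
    sub_zero]

lemma integral_exp_neg_mul_mul_cos {b : ℝ} (hb : 0 < b) (y : ℝ) :
    ∫ v in Ioi (0 : ℝ), Real.exp (-b * v) * Real.cos (v * y) = poissonKer b y := by
  have hre : (-(b : ℂ) + y * Complex.I).re < 0 := by simpa using hb
  have h := congrArg Complex.re (integral_exp_mul_complex_Ioi hre 0)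
  rw [← Complex.reCLM_apply, ← ContinuousLinearMap.integral_comp_comm _
    (integrableOn_exp_mul_complex_Ioi hre 0)] at h
  have hexp (v : ℝ) : Complex.reCLM (Complex.exp ((-(b : ℂ) + y * Complex.I) * v)) =
      Real.exp (-b * v) * Real.cos (v * y) := by
    simp [Complex.exp_re, mul_comm]
  simp only [hexp] at h
  rw [h]
  simp [poissonKer, Complex.div_re, Complex.normSq]
  ring_nf

lemma integral_testKernel_mul_setIntegral_mul_cos {A : ℝ} (hA : 0 < A) (l c : ℝ) {F : ℝ → ℝ}
    (hF : IntegrableOn F (Ioi 0)) :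
    ∫ y, testKernel A l y * (∫ v in Ioi (0 : ℝ), F v * Real.cos (v * (y + c))) =
      Real.pi * ∫ v in Ioi (0 : ℝ), F v * testWindow A l v * Real.cos (v * c) := by
  simp only [← integral_const_mul]
  rw [integral_integral_swap]
  · congr with v
    calc ∫ y, testKernel A l y * (F v * Real.cos (v * (y + c)))
        = F v * ∫ y, testKernel A l y * Real.cos (v * (y + c)) := by
          rw [← integral_const_mul]; congr with y; ring
      _ = Real.pi * (F v * testWindow A l v * Real.cos (v * c)) := by
          rw [integral_testKernel_mul_cos_add hA]; ring
  · refine (((integrable_testKernel hA l).mul_prod hF).mul_bdd (c := 1)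
      (g := fun z : ℝ × ℝ ↦ Real.cos (z.2 * (z.1 + c))) (by fun_prop)
      (Eventually.of_forall fun _ ↦ Real.abs_cos_le_one _)).congr
      (Eventually.of_forall fun z ↦ ?_)
    simp only [Function.uncurry]; ring

theorem integral_testKernel_mul_poissonKer {A : ℝ} (hA : 0 < A) (l : ℝ) {b : ℝ} (hb : 0 < b)
    (y : ℝ) :
    ∫ t, testKernel A l t * poissonKer b (y - t) = Real.pi * testKernel A (l + b) y := by
  have h := integral_testKernel_mul_setIntegral_mul_cos hA l (-y)
    (integrableOn_exp_mul_Ioi (neg_neg_of_pos hb) 0)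
  have hpoisson (t : ℝ) :
      ∫ v in Ioi (0 : ℝ), Real.exp (-b * v) * Real.cos (v * (t + -y)) = poissonKer b (y - t) := by
    rw [integral_exp_neg_mul_mul_cos hb]; unfold poissonKer; congr 2; ring
  simp only [hpoisson] at h
  rw [h, ← setIntegral_testWindow_mul_cos hA (l + b) y]
  congr 1
  refine setIntegral_congr_fun measurableSet_Ioi fun v (hv : 0 < v) ↦ ?_
  simp only [testWindow_of_nonneg A _ hv.le, mul_neg, Real.cos_neg,
    show -(l + b) * v = -b * v + -l * v by ring, Real.exp_add]
  ring

theorem integral_testKernel_mul_testKernel {A : ℝ} (hA : 0 < A) (l m a b : ℝ) :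
    ∫ t, testKernel A l (a - t) * testKernel A m (b - t) =
      Real.pi * ∫ u in (0 : ℝ)..A,
        testProfile (u / A) ^ 2 * Real.exp (-(l + m) * u) * Real.cos (u * (a - b)) := by
  have h := integral_testKernel_mul_setIntegral_mul_cos hA l (b - a)
    (integrable_testWindow hA m).integrableOn
  simp only [setIntegral_testWindow_mul_cos hA] at h
  rw [← integral_sub_left_eq_self _ volume a] at h
  simp only [sub_add_sub_cancel'] at h
  rw [h, setIntegral_Ioi_eq_intervalIntegral hA.le fun u hu ↦ by
    rw [testWindow, testBump_div_eq_zero hA hu]; simp only [zero_mul]]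
  congr 1
  refine intervalIntegral.integral_congr fun u hu ↦ ?_
  rw [uIcc_of_le hA.le] at hu
  simp only [testWindow_of_nonneg A _ hu.1, testBump_eq_testProfile (div_mem_Icc_zero_one hA.le hu),
    ← neg_sub a b, mul_neg, Real.cos_neg, show -(l + m) * u = -m * u + -l * u by ring, Real.exp_add]
  ring

/-- The kernel `testKernel A x + testKernel A (-x)`, which a zero `1/2 + x + iγ` and its reflection
`1/2 - x + iγ` in the critical line contribute jointly to the explicit formula. -/
noncomputable def symmKernel (A x y : ℝ) : ℝ := testKernel A x y + testKernel A (-x) y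

/-- The correlation `∫₀^A testProfile (u / A)² cosh (z u) cos (c u) du`, which expresses the `L²`
inner products of the kernels `symmKernel`. -/
noncomputable def kernelCorrelation (A z c : ℝ) : ℝ :=
  ∫ u in (0 : ℝ)..A, testProfile (u / A) ^ 2 * Real.cosh (z * u) * Real.cos (u * c)

lemma integrable_symmKernel {A : ℝ} (hA : 0 < A) (x : ℝ) : Integrable (symmKernel A x) :=
  (integrable_testKernel hA x).add (integrable_testKernel hA (-x))

lemma integral_symmKernel {A : ℝ} (hA : 0 < A) (x : ℝ) : ∫ y, symmKernel A x y = 2 * Real.pi := by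
  have htest (l : ℝ) : ∫ y, testKernel A l y = Real.pi := by
    simpa [testWindow, testBump, testProfile] using integral_testKernel_mul_cos hA l 0
  unfold symmKernel
  rw [integral_add (integrable_testKernel hA x) (integrable_testKernel hA (-x)), htest, htest,
    two_mul]

lemma abs_symmKernel_le_div {A : ℝ} (hA : 0 < A) (x y : ℝ) :
    |symmKernel A x y| ≤
      8 * A * Real.exp (A * |x|) * (1 + A * |x|) ^ 2 / (1 + (A * y) ^ 2) := by
  have hpos := abs_testKernel_le_div hA x y
  have hneg := abs_testKernel_le_div hA (-x) y
  rw [abs_neg] at hneg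
  exact ((abs_add_le _ _).trans (add_le_add hpos hneg)).trans_eq (by ring)

lemma integrable_testKernel_mul_testKernel {A : ℝ} (hA : 0 < A) (l m a b : ℝ) :
    Integrable fun t ↦ testKernel A l (a - t) * testKernel A m (b - t) := by
  have hcont := continuous_testKernel A m
  refine ((integrable_testKernel hA l).comp_sub_left a).mul_bdd
    (c := 4 * A * Real.exp (A * |m|) * (1 + A * |m|) ^ 2) (by fun_prop)
    (Eventually.of_forall fun t ↦ (abs_testKernel_le_div hA m _).trans ?_)
  exact div_le_self (by positivity) (le_add_of_nonneg_right (sq_nonneg _))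

lemma integrable_symmKernel_mul_symmKernel {A : ℝ} (hA : 0 < A) (x x' a b : ℝ) :
    Integrable fun t ↦ symmKernel A x (a - t) * symmKernel A x' (b - t) := by
  have hmul (l m : ℝ) := integrable_testKernel_mul_testKernel hA l m a b
  refine (((hmul x x').add (hmul x (-x'))).add ((hmul (-x) x').add (hmul (-x) (-x')))).congr
    (Eventually.of_forall fun t ↦ ?_)
  simp only [symmKernel, Pi.add_apply]; ring

lemma integral_exp_neg_add_integral_exp_eq_kernelCorrelation (A z c : ℝ) :
    (∫ u in (0 : ℝ)..A, testProfile (u / A) ^ 2 * Real.exp (-z * u) * Real.cos (u * c)) +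
        ∫ u in (0 : ℝ)..A, testProfile (u / A) ^ 2 * Real.exp (-(-z) * u) * Real.cos (u * c) =
      2 * kernelCorrelation A z c := by
  have hcont := continuous_testProfile
  rw [← intervalIntegral.integral_add (Continuous.intervalIntegrable (by fun_prop) _ _)
    (Continuous.intervalIntegrable (by fun_prop) _ _), kernelCorrelation,
    ← intervalIntegral.integral_const_mul]
  congr with u
  rw [Real.cosh_eq]; ring_nf

theorem integral_symmKernel_mul_symmKernel {A : ℝ} (hA : 0 < A) (x x' a b : ℝ) :
    ∫ t, symmKernel A x (a - t) * symmKernel A x' (b - t) =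
      2 * Real.pi *
        (kernelCorrelation A (x + x') (a - b) + kernelCorrelation A (x - x') (a - b)) := by
  let F (l m t : ℝ) : ℝ := testKernel A l (a - t) * testKernel A m (b - t)
  have hF (l m : ℝ) : Integrable (F l m) := integrable_testKernel_mul_testKernel hA l m a b
  have hexpand : (fun t ↦ symmKernel A x (a - t) * symmKernel A x' (b - t)) =
      (F x x' + F (-x) (-x')) + (F x (-x') + F (-x) x') := by
    ext t
    simp only [symmKernel, F, Pi.add_apply]; ring
  rw [hexpand, integral_add' ((hF _ _).add (hF _ _)) ((hF _ _).add (hF _ _)),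
    integral_add' (hF _ _) (hF _ _), integral_add' (hF _ _) (hF _ _)]
  simp only [F, integral_testKernel_mul_testKernel hA]
  have hadd := integral_exp_neg_add_integral_exp_eq_kernelCorrelation A (x + x') (a - b)
  have hsub := integral_exp_neg_add_integral_exp_eq_kernelCorrelation A (x - x') (a - b)
  rw [show -x + -x' = -(x + x') by ring, show x + -x' = x - x' by ring,
    show -x + x' = -(x - x') by ring]
  linear_combination Real.pi * hadd + Real.pi * hsub

lemma kernelCorrelation_eq_mul {A : ℝ} (hA : A ≠ 0) (z c : ℝ) :
    kernelCorrelation A z c = A * kernelCorrelation 1 (A * z) (A * c) := by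
  have h := intervalIntegral.mul_integral_comp_mul_left (a := 0) (b := 1) (c := A)
    (f := fun u ↦ testProfile (u / A) ^ 2 * Real.cosh (z * u) * Real.cos (u * c))
  rw [mul_zero, mul_one] at h
  rw [kernelCorrelation, ← h, kernelCorrelation]
  congr 2 with v
  rw [mul_div_cancel_left₀ v hA, div_one]
  ring_nf

lemma integral_testProfile_sq : ∫ u in (0 : ℝ)..1, testProfile u ^ 2 = 181 / 480 := by
  have hexpand (v : ℝ) : testProfile v ^ 2 =
      1 - 3 / 2 * v ^ 1 + 1 / 16 * v ^ 2 + 3 / 8 * v ^ 3 + 1 / 16 * v ^ 4 := by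
    unfold testProfile; ring
  simp only [hexpand]
  rw [intervalIntegral.integral_add, intervalIntegral.integral_add, intervalIntegral.integral_add,
    intervalIntegral.integral_sub]
  · simp only [intervalIntegral.integral_const_mul, integral_pow, intervalIntegral.integral_const]
    norm_num
  all_goals exact Continuous.intervalIntegrable (by fun_prop) _ _

lemma le_kernelCorrelation_zero {A : ℝ} (hA : 0 < A) (z : ℝ) :
    A * (181 / 480) ≤ kernelCorrelation A z 0 := by
  have hcont := continuous_testProfile
  rw [kernelCorrelation_eq_mul hA.ne', mul_zero, ← integral_testProfile_sq, kernelCorrelation]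
  refine mul_le_mul_of_nonneg_left (intervalIntegral.integral_mono_on zero_le_one
    (Continuous.intervalIntegrable (by fun_prop) _ _)
    (Continuous.intervalIntegrable (by fun_prop) _ _) fun u _ ↦ ?_) hA.le
  rw [mul_zero, Real.cos_zero, mul_one, div_one]
  exact le_mul_of_one_le_right (sq_nonneg _) (Real.one_le_cosh _)

-- After two integrations by parts, the integral is `∫ p'' (1 - cos) / y²`.
lemma integral_mul_cos_nonneg_of_convex {p p' p'' : ℝ → ℝ} (hp : ∀ u, HasDerivAt p (p' u) u)
    (hp' : ∀ u, HasDerivAt p' (p'' u) u) (hp'' : Continuous p'') {A : ℝ} (hA : 0 ≤ A)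
    (hpA : p A = 0) (hpA' : p' A = 0) (hconvex : ∀ u ∈ Icc 0 A, 0 ≤ p'' u) {y : ℝ} (hy : y ≠ 0) :
    0 ≤ ∫ u in (0 : ℝ)..A, p u * Real.cos (u * y) := by
  have hparts := sq_mul_integral_mul_cos hp hp' hp'' A y
  have hftc := intervalIntegral.integral_eq_sub_of_hasDerivAt (a := 0) (b := A) (fun u _ ↦ hp' u)
    (hp''.intervalIntegrable _ _)
  have hle : ∫ u in (0 : ℝ)..A, p'' u * Real.cos (u * y) ≤ ∫ u in (0 : ℝ)..A, p'' u :=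
    intervalIntegral.integral_mono_on hA (Continuous.intervalIntegrable (by fun_prop) _ _)
      (hp''.intervalIntegrable _ _) fun u hu ↦
        mul_le_of_le_one_right (hconvex u hu) (Real.cos_le_one _)
  rw [hpA, hpA'] at hparts
  rw [hpA'] at hftc
  refine nonneg_of_mul_nonneg_right (a := y ^ 2) ?_ (by positivity)
  linarith

lemma abs_sinh_le_cosh (x : ℝ) : |Real.sinh x| ≤ Real.cosh x :=
  (Real.abs_sinh x).trans_le ((Real.sinh_lt_cosh _).le.trans_eq (Real.cosh_abs x))

lemma kernelCorrelation_one_nonneg {z c : ℝ} (hz : |z| ≤ 1 / 50) (hc : c ≠ 0) :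
    0 ≤ kernelCorrelation 1 z c := by
  let q' : ℝ → ℝ := fun u ↦ -2 * testProfile u * (3 / 4 + u / 2)
  let q'' : ℝ → ℝ := fun u ↦ 1 / 8 + 9 / 4 * u + 3 / 4 * u ^ 2
  have hcont := continuous_testProfile
  have hq (u : ℝ) : HasDerivAt (fun u ↦ testProfile u ^ 2) (q' u) u :=
    ((hasDerivAt_testProfile u).pow 2).congr_deriv (by simp only [q']; ring)
  have hq' (u : ℝ) : HasDerivAt q' (q'' u) u :=
    (((hasDerivAt_testProfile u).const_mul (-2)).mul
      (((hasDerivAt_id u).div_const 2).const_add (3 / 4))).congr_deriv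
        (by simp only [q'', testProfile, id]; ring)
  have hcosh (u : ℝ) : HasDerivAt (fun u ↦ Real.cosh (z * u)) (z * Real.sinh (z * u)) u :=
    (hasDerivAt_const_mul z).cosh.congr_deriv (mul_comm _ _)
  have hsinh (u : ℝ) : HasDerivAt (fun u ↦ z * Real.sinh (z * u)) (z ^ 2 * Real.cosh (z * u)) u :=
    ((hasDerivAt_const_mul z).sinh.const_mul z).congr_deriv (by ring)
  have h := integral_mul_cos_nonneg_of_convex (A := 1) (y := c)
    (fun u ↦ (hq u).mul (hcosh u))
    (fun u ↦ ((hq' u).mul (hcosh u)).add ((hq u).mul (hsinh u))) (by fun_prop) zero_le_one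
    (by simp [testProfile]) (by simp [q', testProfile]) (fun u hu ↦ ?_) hc
  · simpa only [kernelCorrelation, div_one, Pi.mul_apply] using h
  obtain ⟨hp₀, hp₁⟩ := testProfile_mem_Icc hu
  obtain ⟨h₀, h₁⟩ := hu
  have hq'_le : |q' u| ≤ 5 / 2 := by
    simp only [q']
    rw [abs_mul, abs_mul, abs_of_nonneg hp₀, abs_of_nonneg (by positivity : 0 ≤ 3 / 4 + u / 2)]
    norm_num
    nlinarith
  have hq''_ge : 1 / 8 ≤ q'' u := by simp only [q'']; nlinarith [mul_nonneg h₀ h₀]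
  have hcross : |q' u * (z * Real.sinh (z * u))| ≤ 5 / 2 * (1 / 50 * Real.cosh (z * u)) := by
    rw [abs_mul (q' u), abs_mul z]
    exact mul_le_mul hq'_le (mul_le_mul hz (abs_sinh_le_cosh _) (abs_nonneg _) (by norm_num))
      (by positivity) (by norm_num)
  have hlast : 0 ≤ testProfile u ^ 2 * (z ^ 2 * Real.cosh (z * u)) := by positivity
  have := Real.cosh_pos (z * u)
  nlinarith [neg_le_of_abs_le hcross]

lemma kernelCorrelation_nonneg {A z : ℝ} (hA : 0 < A) (hz : A * |z| ≤ 1 / 50) (c : ℝ) :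
    0 ≤ kernelCorrelation A z c := by
  rcases eq_or_ne c 0 with rfl | hc
  · exact (le_kernelCorrelation_zero hA z).trans' (by positivity)
  rw [kernelCorrelation_eq_mul hA.ne']
  refine mul_nonneg hA.le (kernelCorrelation_one_nonneg ?_ (mul_ne_zero hA.ne' hc))
  rwa [abs_mul, abs_of_pos hA]

theorem integral_symmKernel_mul_symmKernel_nonneg {A x x' : ℝ} (hA : 0 < A)
    (hx : A * |x| ≤ 1 / 100) (hx' : A * |x'| ≤ 1 / 100) (a b : ℝ) :
    0 ≤ ∫ t, symmKernel A x (a - t) * symmKernel A x' (b - t) := by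
  rw [integral_symmKernel_mul_symmKernel hA]
  have hadd := kernelCorrelation_nonneg (z := x + x') hA
    (by nlinarith [abs_add_le x x']) (a - b)
  have hsub := kernelCorrelation_nonneg (z := x - x') hA
    (by nlinarith [abs_sub x x']) (a - b)
  positivity

theorem le_integral_symmKernel_mul_symmKernel_self {A : ℝ} (hA : 0 < A) (x x' a : ℝ) :
    4 * Real.pi * (A * (181 / 480)) ≤ ∫ t, symmKernel A x (a - t) * symmKernel A x' (a - t) := by
  rw [integral_symmKernel_mul_symmKernel hA, sub_self]
  nlinarith [le_kernelCorrelation_zero hA (x + x'), le_kernelCorrelation_zero hA (x - x'),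
    Real.pi_pos]

/-! ### The explicit formula -/

lemma integral_testKernel {A : ℝ} (hA : 0 < A) (l : ℝ) : ∫ y, testKernel A l y = Real.pi := by
  simpa [testWindow, testBump, testProfile] using integral_testKernel_mul_cos hA l 0

lemma continuous_poissonKer {b : ℝ} (hb : 0 < b) : Continuous (poissonKer b) := by
  unfold poissonKer
  exact Continuous.div (by fun_prop) (by fun_prop) fun y ↦ by positivity

lemma poissonKer_pos {b : ℝ} (hb : 0 < b) (y : ℝ) : 0 < poissonKer b y := by
  unfold poissonKer
  positivity

lemma poissonKer_le_one_div {b : ℝ} (hb : 0 < b) (y : ℝ) : poissonKer b y ≤ 1 / b := by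
  rw [poissonKer, div_le_div_iff₀ (by positivity) hb]
  nlinarith [sq_nonneg y]

lemma integrable_testKernel_mul_poissonKer {A : ℝ} (hA : 0 < A) (l : ℝ) {b : ℝ} (hb : 0 < b)
    (y : ℝ) : Integrable fun t ↦ testKernel A l t * poissonKer b (y - t) := by
  have hcont := continuous_poissonKer hb
  refine (integrable_testKernel hA l).mul_bdd (c := 1 / b) (by fun_prop)
    (Eventually.of_forall fun t ↦ ?_)
  rw [Real.norm_eq_abs, abs_of_nonneg (poissonKer_nonneg hb.le _)]
  exact poissonKer_le_one_div hb _

lemma poissonKer_add (b s t : ℝ) : poissonKer b (s + t) = poissonKer b (-t - s) := by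
  unfold poissonKer
  congr 2
  ring

lemma hasSum_integral_mul_of_nonneg {α ι : Type*} [MeasurableSpace α] {μ : Measure α} [Countable ι]
    {K F : α → ℝ} {f : ι → α → ℝ} (hK : AEStronglyMeasurable K μ)
    (hf : ∀ i, AEStronglyMeasurable (f i) μ) (hf0 : ∀ i s, 0 ≤ f i s)
    (hF : ∀ s, HasSum (fun i ↦ f i s) (F s)) (hint : Integrable (fun s ↦ K s * F s) μ) :
    HasSum (fun i ↦ ∫ s, K s * f i s ∂μ) (∫ s, K s * F s ∂μ) := by
  refine hasSum_integral_of_dominated_convergence (fun i s ↦ ‖K s‖ * f i s)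
    (fun i ↦ hK.mul (hf i)) (fun i ↦ Eventually.of_forall fun s ↦ ?_)
    (Eventually.of_forall fun s ↦ (hF s).summable.mul_left _) ?_
    (Eventually.of_forall fun s ↦ (hF s).mul_left _)
  · rw [norm_mul, Real.norm_of_nonneg (hf0 i s)]
  · refine hint.norm.congr (Eventually.of_forall fun s ↦ ?_)
    simp only [norm_mul, tsum_mul_left, (hF s).tsum_eq,
      Real.norm_of_nonneg ((hF s).nonneg fun i ↦ hf0 i s)]

lemma digammaTerm_le (τ : ℝ) (n : ℕ) :
    digammaTerm τ n ≤ √|τ| * (1 / ((n : ℝ) + 1) ^ (3 / 2 : ℝ)) := by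
  set x := √|τ|
  set w := √((n : ℝ) + 1)
  have hx : 0 ≤ x := Real.sqrt_nonneg _
  have hw : 0 < w := Real.sqrt_pos.2 (by positivity)
  have hτ : τ ^ 2 = x ^ 4 := by
    rw [← sq_abs, ← Real.sq_sqrt (abs_nonneg τ), ← pow_mul]
  have hn : (n : ℝ) + 1 = w ^ 2 := (Real.sq_sqrt (by positivity)).symm
  have hpow : ((n : ℝ) + 1) ^ (3 / 2 : ℝ) = w ^ 3 := by
    rw [hn, ← Real.rpow_natCast_mul hw.le, ← Real.rpow_natCast w 3]
    norm_num
  have heq : digammaTerm τ n = x ^ 4 / (w ^ 2 * (4 * w ^ 4 + x ^ 4)) := by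
    rw [digammaTerm, poissonKer, show 2 * (n : ℝ) + 2 = 2 * w ^ 2 by rw [← hn]; ring, hτ]
    field_simp
    ring
  have hxw : x ^ 3 * w ≤ 4 * w ^ 4 + x ^ 4 := by
    rcases le_total x w with h | h
    · nlinarith [pow_le_pow_left₀ hx h 3, pow_pos hw 4, pow_nonneg hx 4]
    · nlinarith [pow_pos hw 4, pow_nonneg hx 3]
  rw [hpow, heq, mul_one_div, div_le_div_iff₀ (by positivity) (by positivity)]
  nlinarith [mul_nonneg hx (sq_nonneg w)]

lemma summable_one_div_nat_add_one_rpow :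
    Summable fun n : ℕ ↦ 1 / ((n : ℝ) + 1) ^ (3 / 2 : ℝ) := by
  simpa using (summable_nat_add_iff 1).2
    (Real.summable_one_div_nat_rpow (p := 3 / 2).2 (by norm_num))

lemma digammaSum_nonneg (τ : ℝ) : 0 ≤ digammaSum τ := tsum_nonneg (digammaTerm_nonneg τ)

lemma digammaSum_le (τ : ℝ) :
    digammaSum τ ≤ √|τ| * ∑' n : ℕ, 1 / ((n : ℝ) + 1) ^ (3 / 2 : ℝ) := by
  rw [← tsum_mul_left]
  exact (hasSum_digammaTerm τ).summable.tsum_le_tsum (digammaTerm_le τ)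
    (summable_one_div_nat_add_one_rpow.mul_left _)

lemma continuous_digammaTerm (n : ℕ) : Continuous fun τ ↦ digammaTerm τ n :=
  continuous_const.sub ((continuous_poissonKer (by positivity)).const_mul 2)

lemma measurable_digammaSum : Measurable digammaSum :=
  measurable_of_tendsto_metrizable (f := fun k τ ↦ ∑ n ∈ Finset.range k, digammaTerm τ n)
    (fun _ ↦ Finset.measurable_sum _ fun n _ ↦ (continuous_digammaTerm n).measurable)
    (tendsto_pi_nhds.2 fun τ ↦ (hasSum_digammaTerm τ).summable.hasSum.tendsto_sum_nat)

lemma integrable_testKernel_mul_sqrt {A : ℝ} (hA : 0 < A) (l t : ℝ) :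
    Integrable fun s ↦ testKernel A l s * √|s + t| := by
  set C := 4 * A * Real.exp (A * |l|) * (1 + A * |l|) ^ 2
  have hC : 0 ≤ C := by positivity
  have hcont := continuous_testKernel A l
  have hbase : Integrable fun s : ℝ ↦ (1 + ‖s‖) ^ (-(3 / 2) : ℝ) :=
    integrable_one_add_norm (by norm_num [Module.finrank_self])
  refine (hbase.const_mul (2 * (1 + (A ^ 2)⁻¹) * C * √(1 + |t|))).mono' (by fun_prop)
    (Eventually.of_forall fun s ↦ ?_)
  have hs : 0 < 1 + |s| := by positivity
  have hpow : (1 + ‖s‖) ^ (-(3 / 2) : ℝ) = √(1 + |s|) / (1 + |s|) ^ 2 := by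
    rw [Real.norm_eq_abs, Real.sqrt_eq_rpow, ← Real.rpow_natCast, ← Real.rpow_sub hs]
    norm_num
  have hdecay : C / (1 + (A * s) ^ 2) ≤ 2 * (1 + (A ^ 2)⁻¹) * C / (1 + |s|) ^ 2 := by
    have hsq : (1 + |s|) ^ 2 ≤ 2 * (1 + (A ^ 2)⁻¹) * (1 + (A * s) ^ 2) := by
      have hexpand : (1 + (A ^ 2)⁻¹) * (1 + (A * s) ^ 2) =
          1 + s ^ 2 + ((A ^ 2)⁻¹ + (A * s) ^ 2) := by field_simp; ring
      rw [mul_assoc, hexpand]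
      nlinarith [sq_abs s, sq_nonneg (1 - |s|), inv_nonneg.2 (sq_nonneg A), sq_nonneg (A * s)]
    rw [div_le_div_iff₀ (by positivity) (by positivity)]
    calc C * (1 + |s|) ^ 2 ≤ C * (2 * (1 + (A ^ 2)⁻¹) * (1 + (A * s) ^ 2)) :=
          mul_le_mul_of_nonneg_left hsq hC
      _ = 2 * (1 + (A ^ 2)⁻¹) * C * (1 + (A * s) ^ 2) := by ring
  have hsqrt : √|s + t| ≤ √(1 + |t|) * √(1 + |s|) := by
    rw [← Real.sqrt_mul (by positivity)]
    exact Real.sqrt_le_sqrt ((abs_add_le _ _).trans (by nlinarith [abs_nonneg t, abs_nonneg s]))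
  rw [norm_mul, Real.norm_eq_abs, Real.norm_of_nonneg (Real.sqrt_nonneg _), hpow]
  calc |testKernel A l s| * √|s + t|
      ≤ 2 * (1 + (A ^ 2)⁻¹) * C / (1 + |s|) ^ 2 * (√(1 + |t|) * √(1 + |s|)) := by
        gcongr
        exact (abs_testKernel_le_div hA l s).trans hdecay
    _ = 2 * (1 + (A ^ 2)⁻¹) * C * √(1 + |t|) * (√(1 + |s|) / (1 + |s|) ^ 2) := by ring

lemma integrable_testKernel_mul_digammaSum {A : ℝ} (hA : 0 < A) (l t : ℝ) :
    Integrable fun s ↦ testKernel A l s * digammaSum (s + t) := by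
  have hmeas := measurable_digammaSum.comp (measurable_id.add_const t)
  refine ((integrable_testKernel_mul_sqrt hA l t).mul_const
    (∑' n : ℕ, 1 / ((n : ℝ) + 1) ^ (3 / 2 : ℝ))).mono
    ((continuous_testKernel A l).measurable.mul hmeas).aestronglyMeasurable
    (Eventually.of_forall fun s ↦ ?_)
  rw [mul_assoc, norm_mul, norm_mul, Real.norm_of_nonneg (digammaSum_nonneg _)]
  gcongr
  exact (digammaSum_le _).trans (le_abs_self _)

/-- The contribution `∑ (1 / (n + 1) - 2 testKernel A (2n + 1/2) t)` of the Gamma factor to the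
explicit formula. -/
noncomputable def gammaSum (A t : ℝ) : ℝ :=
  ∑' n : ℕ, (2 / (2 * (n : ℝ) + 2) - 2 * testKernel A (2 * n + 1 / 2) t)

lemma hasSum_gammaSum {A : ℝ} (hA : 0 < A) (t : ℝ) :
    HasSum (fun n : ℕ ↦ Real.pi * (2 / (2 * (n : ℝ) + 2) - 2 * testKernel A (2 * n + 1 / 2) t))
      (∫ s, testKernel A (-3 / 2) s * digammaSum (s + t)) := by
  refine (hasSum_integral_mul_of_nonneg (f := fun (n : ℕ) s ↦ digammaTerm (s + t) n)
    (continuous_testKernel A _).aestronglyMeasurable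
    (fun n ↦ ((continuous_digammaTerm n).comp (continuous_add_const t)).aestronglyMeasurable)
    (fun n s ↦ digammaTerm_nonneg _ n) (fun s ↦ (hasSum_digammaTerm (s + t)).summable.hasSum)
    (integrable_testKernel_mul_digammaSum hA _ t)).congr_fun fun n ↦ ?_
  have hb : (0 : ℝ) < 2 * n + 2 := by positivity
  calc Real.pi * (2 / (2 * (n : ℝ) + 2) - 2 * testKernel A (2 * n + 1 / 2) t)
      = Real.pi * (2 / (2 * (n : ℝ) + 2)) -
          2 * (Real.pi * testKernel A (-3 / 2 + (2 * n + 2)) (-t)) := by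
        rw [testKernel_neg]; ring_nf
    _ = ∫ s, (testKernel A (-3 / 2) s * (2 / (2 * (n : ℝ) + 2)) -
          2 * (testKernel A (-3 / 2) s * poissonKer (2 * n + 2) (-t - s))) := by
        rw [integral_sub ((integrable_testKernel hA _).mul_const _)
          ((integrable_testKernel_mul_poissonKer hA _ hb _).const_mul 2), integral_mul_const,
          integral_const_mul, integral_testKernel_mul_poissonKer hA _ hb, integral_testKernel hA]
    _ = ∫ s, testKernel A (-3 / 2) s * digammaTerm (s + t) n := by
        congr with s
        rw [digammaTerm, poissonKer_add]; ring

lemma gammaSum_eq_integral {A : ℝ} (hA : 0 < A) (t : ℝ) :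
    Real.pi * gammaSum A t = ∫ s, testKernel A (-3 / 2) s * digammaSum (s + t) := by
  rw [gammaSum, ← tsum_mul_left, (hasSum_gammaSum hA t).tsum_eq]

lemma summable_vonMangoldt_div_sq : Summable fun n : ℕ ↦ Λ n / (n : ℝ) ^ 2 := by
  simpa using (hasSum_vonMangoldt_mul_cos one_lt_two 0).summable

lemma vonMangoldt_div_nonneg (n : ℕ) {x : ℝ} (hx : 0 ≤ x) : 0 ≤ Λ n / x :=
  div_nonneg ArithmeticFunction.vonMangoldt_nonneg hx

lemma norm_vonMangoldt_div_sq_mul_cos_le (n : ℕ) (x : ℝ) :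
    ‖Λ n / (n : ℝ) ^ 2 * Real.cos x‖ ≤ Λ n / (n : ℝ) ^ 2 := by
  rw [norm_mul, Real.norm_of_nonneg (vonMangoldt_div_nonneg n (by positivity))]
  exact mul_le_of_le_one_right (vonMangoldt_div_nonneg n (by positivity)) (Real.abs_cos_le_one _)

lemma continuous_primeCosSum : Continuous primeCosSum :=
  continuous_tsum (fun n ↦ by fun_prop) summable_vonMangoldt_div_sq
    fun n τ ↦ norm_vonMangoldt_div_sq_mul_cos_le n _

lemma abs_primeCosSum_le (τ : ℝ) : |primeCosSum τ| ≤ ∑' n : ℕ, Λ n / (n : ℝ) ^ 2 :=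
  tsum_of_norm_bounded summable_vonMangoldt_div_sq.hasSum
    fun n ↦ norm_vonMangoldt_div_sq_mul_cos_le n _

lemma integrable_testKernel_mul_primeCosSum {A : ℝ} (hA : 0 < A) (l t : ℝ) :
    Integrable fun s ↦ testKernel A l s * primeCosSum (s + t) := by
  have hcont := continuous_primeCosSum
  exact (integrable_testKernel hA l).mul_bdd (by fun_prop)
    (Eventually.of_forall fun s ↦ abs_primeCosSum_le (s + t))

/-- The coefficient of `cos (t log n)` in the contribution of the primes to the explicit formula
with test kernel of length `A`. -/
noncomputable def primeCoeff (A : ℝ) (n : ℕ) : ℝ := Λ n / √(n : ℝ) * testBump (Real.log n / A)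

/-- The Dirichlet polynomial through which the primes contribute to the explicit formula. -/
noncomputable def primeSum (A t : ℝ) : ℝ := ∑' n : ℕ, primeCoeff A n * Real.cos (t * Real.log n)

lemma integral_testKernel_mul_cos_log {A : ℝ} (hA : 0 < A) (t : ℝ) (n : ℕ) :
    ∫ s, testKernel A (-3 / 2) s * (Λ n / (n : ℝ) ^ 2 * Real.cos ((s + t) * Real.log n)) =
      Real.pi * (primeCoeff A n * Real.cos (t * Real.log n)) := by
  rcases n.eq_zero_or_pos with rfl | hn
  · simp [primeCoeff]
  have hn0 : (0 : ℝ) < n := by exact_mod_cast hn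
  have hexp : Real.exp (-(-3 / 2) * Real.log n) = (n : ℝ) ^ 2 / √n := by
    rw [Real.sqrt_eq_rpow, ← Real.rpow_natCast, ← Real.rpow_sub hn0, Real.rpow_def_of_pos hn0]
    norm_num [mul_comm]
  calc ∫ s, testKernel A (-3 / 2) s * (Λ n / (n : ℝ) ^ 2 * Real.cos ((s + t) * Real.log n))
      = Λ n / (n : ℝ) ^ 2 * ∫ s, testKernel A (-3 / 2) s * Real.cos (Real.log n * (s + t)) := by
        rw [← integral_const_mul]
        congr with s
        rw [mul_comm (s + t)]; ring
    _ = Real.pi * (primeCoeff A n * Real.cos (t * Real.log n)) := by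
        rw [integral_testKernel_mul_cos_add hA,
          testWindow_of_nonneg _ _ (Real.log_natCast_nonneg n), hexp, primeCoeff, mul_comm t]
        field_simp

lemma primeSum_eq_integral {A : ℝ} (hA : 0 < A) (t : ℝ) :
    Real.pi * primeSum A t = ∫ s, testKernel A (-3 / 2) s * primeCosSum (s + t) := by
  have hcont := continuous_testKernel A (-3 / 2)
  have h := hasSum_integral_of_dominated_convergence (μ := volume)
    (F := fun (n : ℕ) s ↦ testKernel A (-3 / 2) s *
      (Λ n / (n : ℝ) ^ 2 * Real.cos ((s + t) * Real.log n)))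
    (f := fun s ↦ testKernel A (-3 / 2) s * primeCosSum (s + t))
    (fun n s ↦ ‖testKernel A (-3 / 2) s‖ * (Λ n / (n : ℝ) ^ 2)) (fun n ↦ by fun_prop)
    (fun n ↦ Eventually.of_forall fun s ↦ by
      rw [norm_mul]; gcongr; exact norm_vonMangoldt_div_sq_mul_cos_le n _)
    (Eventually.of_forall fun s ↦ summable_vonMangoldt_div_sq.mul_left _)
    (by simpa only [tsum_mul_left] using (integrable_testKernel hA _).norm.mul_const _)
    (Eventually.of_forall fun s ↦ (Summable.of_norm_bounded summable_vonMangoldt_div_sq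
      fun n ↦ norm_vonMangoldt_div_sq_mul_cos_le n _).hasSum.mul_left _)
  simp only [integral_testKernel_mul_cos_log hA] at h
  rw [primeSum, ← tsum_mul_left, h.tsum_eq]

lemma countable_xiMult_ne_zero : Countable {ρ : ℂ // xiMult ρ ≠ 0} := by
  refine ((hasSum_xiMult_mul_poissonKer_eq 0).summable.countable_support.mono
    fun ρ hρ ↦ ?_).to_subtype
  have hre := re_mem_Ioo_of_xiMult_ne_zero hρ
  exact mul_ne_zero (by exact_mod_cast hρ) (add_pos (poissonKer_pos (by linarith [hre.2]) _)
    (poissonKer_pos (by linarith [hre.1]) _)).ne'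

lemma integral_testKernel_mul_poissonKer_zero {A : ℝ} (hA : 0 < A) (t : ℝ) {ρ : ℂ}
    (hρ : ρ.re ∈ Ioo (0 : ℝ) 1) :
    ∫ s, testKernel A (-3 / 2) s * (poissonKer (2 - ρ.re) (ρ.im - (s + t)) +
        poissonKer (1 + ρ.re) (ρ.im - (s + t))) =
      Real.pi * symmKernel A (ρ.re - 1 / 2) (ρ.im - t) := by
  have hl : 0 < 2 - ρ.re := by linarith [hρ.2]
  have hr : 0 < 1 + ρ.re := by linarith [hρ.1]
  simp only [mul_add, ← sub_sub, sub_right_comm ρ.im _ t]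
  rw [integral_add (integrable_testKernel_mul_poissonKer hA _ hl _)
    (integrable_testKernel_mul_poissonKer hA _ hr _), integral_testKernel_mul_poissonKer hA _ hl,
    integral_testKernel_mul_poissonKer hA _ hr, symmKernel]
  ring_nf

lemma hasSum_xiMult_mul_symmKernel_integral {A : ℝ} (hA : 0 < A) (t : ℝ) {R : ℝ → ℝ}
    (hR : ∀ τ, HasSum (fun ρ : ℂ ↦ (xiMult ρ : ℝ) *
      (poissonKer (2 - ρ.re) (ρ.im - τ) + poissonKer (1 + ρ.re) (ρ.im - τ))) (R τ))
    (hint : Integrable fun s ↦ testKernel A (-3 / 2) s * R (s + t)) :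
    HasSum (fun ρ : ℂ ↦ (xiMult ρ : ℝ) * (Real.pi * symmKernel A (ρ.re - 1 / 2) (ρ.im - t)))
      (∫ s, testKernel A (-3 / 2) s * R (s + t)) := by
  have := countable_xiMult_ne_zero
  have hsupp (g : ℂ → ℝ) :
      Function.support (fun ρ ↦ (xiMult ρ : ℝ) * g ρ) ⊆ {ρ | xiMult ρ ≠ 0} :=
    fun ρ hρ ↦ Nat.cast_ne_zero.1 (left_ne_zero_of_mul hρ)
  rw [← hasSum_subtype_iff_of_support_subset (hsupp _)]
  have hpos (ρ : {ρ : ℂ // xiMult ρ ≠ 0}) : 0 < 2 - ρ.1.re ∧ 0 < 1 + ρ.1.re := by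
    have := re_mem_Ioo_of_xiMult_ne_zero ρ.2
    constructor <;> linarith [this.1, this.2]
  refine (hasSum_integral_mul_of_nonneg (f := fun (ρ : {ρ : ℂ // xiMult ρ ≠ 0}) s ↦
      (xiMult ρ : ℝ) * (poissonKer (2 - ρ.1.re) (ρ.1.im - (s + t)) +
        poissonKer (1 + ρ.1.re) (ρ.1.im - (s + t))))
    (continuous_testKernel A _).aestronglyMeasurable (fun ρ ↦ ?_) (fun ρ s ↦ ?_)
    (fun s ↦ (hasSum_subtype_iff_of_support_subset (hsupp _)).2 (hR (s + t))) hint).congr_fun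
    fun ρ ↦ ?_
  · have hleft := continuous_poissonKer (hpos ρ).1
    have hright := continuous_poissonKer (hpos ρ).2
    fun_prop
  · exact mul_nonneg (Nat.cast_nonneg _) (add_nonneg (poissonKer_nonneg (hpos ρ).1.le _)
      (poissonKer_nonneg (hpos ρ).2.le _))
  · simp only [mul_left_comm _ (xiMult ρ.1 : ℝ), integral_const_mul, Function.comp_apply,
      integral_testKernel_mul_poissonKer_zero hA t (re_mem_Ioo_of_xiMult_ne_zero ρ.2)]

theorem hasSum_xiMult_mul_symmKernel {A : ℝ} (hA : 0 < A) (t : ℝ) :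
    HasSum (fun ρ : ℂ ↦ (xiMult ρ : ℝ) * symmKernel A (ρ.re - 1 / 2) (ρ.im - t))
      (2 * testKernel A (1 / 2) t + 2 * testKernel A (-1 / 2) t + archimedeanConst +
        gammaSum A t - 2 * primeSum A t) := by
  have hR (s : ℝ) : testKernel A (-3 / 2) s * (2 * poissonKer 2 (s + t) + 2 * poissonKer 1 (s + t) +
      archimedeanConst + digammaSum (s + t) - 2 * primeCosSum (s + t)) =
      2 * (testKernel A (-3 / 2) s * poissonKer 2 (-t - s)) +
        2 * (testKernel A (-3 / 2) s * poissonKer 1 (-t - s)) +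
        testKernel A (-3 / 2) s * archimedeanConst +
        testKernel A (-3 / 2) s * digammaSum (s + t) -
        2 * (testKernel A (-3 / 2) s * primeCosSum (s + t)) := by
    rw [poissonKer_add 2, poissonKer_add 1]; ring
  have h2 := (integrable_testKernel_mul_poissonKer hA (-3 / 2) two_pos (-t)).const_mul 2
  have h1 := (integrable_testKernel_mul_poissonKer hA (-3 / 2) one_pos (-t)).const_mul 2
  have hconst := (integrable_testKernel hA (-3 / 2)).mul_const archimedeanConst
  have hψ := integrable_testKernel_mul_digammaSum hA (-3 / 2) t
  have hprime := (integrable_testKernel_mul_primeCosSum hA (-3 / 2) t).const_mul 2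
  have h21 := h2.fun_add h1
  have h21const := h21.fun_add hconst
  have h21constψ := h21const.fun_add hψ
  have h := hasSum_xiMult_mul_symmKernel_integral hA t hasSum_xiMult_mul_poissonKer_eq
    ((h21constψ.sub hprime).congr (Eventually.of_forall fun s ↦ (hR s).symm))
  simp only [hR] at h
  rw [integral_sub h21constψ hprime, integral_add h21const hψ, integral_add h21 hconst,
    integral_add h2 h1, integral_const_mul, integral_const_mul, integral_const_mul,
    integral_mul_const, integral_testKernel_mul_poissonKer hA _ two_pos,
    integral_testKernel_mul_poissonKer hA _ one_pos, integral_testKernel hA,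
    ← gammaSum_eq_integral hA, ← primeSum_eq_integral hA, testKernel_neg, testKernel_neg,
    show (-3 / 2 + 2 : ℝ) = 1 / 2 by norm_num, show (-3 / 2 + 1 : ℝ) = -1 / 2 by norm_num] at h
  simp only [mul_left_comm _ Real.pi] at h
  rw [← hasSum_mul_left_iff Real.pi_ne_zero]
  simpa only [mul_add, mul_sub] using h

/-! ### The size of the archimedean terms -/

lemma digammaTerm_two_mul (s : ℝ) (n : ℕ) :
    digammaTerm (2 * s) n = s ^ 2 / (((n : ℝ) + 1) * (((n : ℝ) + 1) ^ 2 + s ^ 2)) := by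
  rw [digammaTerm, poissonKer]
  field_simp
  ring

lemma antitoneOn_sq_div_mul (s : ℝ) :
    AntitoneOn (fun x : ℝ ↦ s ^ 2 / (x * (x ^ 2 + s ^ 2))) (Ioi 0) := by
  intro x (hx : 0 < x) y _ hxy
  have hy : 0 ≤ y := hx.le.trans hxy
  dsimp only
  gcongr

lemma integral_sq_div_mul (s : ℝ) {b : ℝ} (hb : 1 ≤ b) :
    ∫ x in (1 : ℝ)..b, s ^ 2 / (x * (x ^ 2 + s ^ 2)) =
      1 / 2 * Real.log (1 + s ^ 2) - 1 / 2 * Real.log (1 + s ^ 2 / b ^ 2) := by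
  have hpos {x : ℝ} (hx : x ∈ uIcc 1 b) : 0 < x :=
    one_pos.trans_le (by rw [uIcc_of_le hb] at hx; exact hx.1)
  have hderiv {x : ℝ} (hx : 0 < x) :
      HasDerivAt (fun x : ℝ ↦ -(1 / 2 * Real.log (1 + s ^ 2 / x ^ 2)))
        (s ^ 2 / (x * (x ^ 2 + s ^ 2))) x := by
    have hsq : HasDerivAt (fun x : ℝ ↦ s ^ 2 / x ^ 2) (s ^ 2 * (-(2 * x) / (x ^ 2) ^ 2)) x := by
      simpa [div_eq_mul_inv] using
        ((hasDerivAt_pow 2 x).fun_inv (by positivity : x ^ 2 ≠ 0)).const_mul (s ^ 2)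
    refine (((hsq.const_add 1).log (by positivity)).const_mul (1 / 2)).neg.congr_deriv ?_
    field_simp
  rw [intervalIntegral.integral_eq_sub_of_hasDerivAt (fun x hx ↦ hderiv (hpos hx))]
  · simp only [one_pow, div_one]
    ring
  · refine ContinuousOn.intervalIntegrable fun x hx ↦ ContinuousAt.continuousWithinAt ?_
    have := hpos hx
    exact ContinuousAt.div (by fun_prop) (by fun_prop) (by positivity)

lemma half_log_le_digammaSum (s : ℝ) : 1 / 2 * Real.log (1 + s ^ 2) ≤ digammaSum (2 * s) := by
  have hlim : Tendsto (fun N : ℕ ↦ 1 / 2 * Real.log (1 + s ^ 2) -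
      1 / 2 * Real.log (1 + s ^ 2 / (1 + N : ℝ) ^ 2)) atTop (𝓝 (1 / 2 * Real.log (1 + s ^ 2))) := by
    have hsq : Tendsto (fun N : ℕ ↦ (1 + N : ℝ) ^ 2) atTop atTop :=
      (tendsto_pow_atTop two_ne_zero).comp
        (tendsto_atTop_add_const_left _ 1 tendsto_natCast_atTop_atTop)
    have hlog := (((tendsto_const_nhds (x := s ^ 2)).div_atTop hsq).const_add 1).log (by norm_num)
    simpa only [add_zero, Real.log_one, mul_zero, sub_zero] using
      (hlog.const_mul (1 / 2)).const_sub (1 / 2 * Real.log (1 + s ^ 2))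
  refine le_of_tendsto_of_tendsto' hlim
    (hasSum_digammaTerm (2 * s)).summable.hasSum.tendsto_sum_nat fun N ↦ ?_
  have h := AntitoneOn.integral_le_sum (a := N)
    ((antitoneOn_sq_div_mul s).mono fun x hx ↦ one_pos.trans_le hx.1)
  rw [integral_sq_div_mul s (by simp)] at h
  simpa only [digammaTerm_two_mul, add_comm (1 : ℝ)] using h

lemma digammaSum_le_half_log (s : ℝ) :
    digammaSum (2 * s) ≤ 1 + 1 / 2 * Real.log (1 + s ^ 2) := by
  rw [digammaSum, (hasSum_digammaTerm (2 * s)).summable.tsum_eq_zero_add]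
  refine add_le_add ?_ (Real.tsum_le_of_sum_range_le (fun n ↦ digammaTerm_nonneg _ _) fun N ↦ ?_)
  · rw [digammaTerm_two_mul, div_le_one (by positivity)]
    norm_num
  · have h := AntitoneOn.sum_le_integral (a := N)
      ((antitoneOn_sq_div_mul s).mono fun x hx ↦ one_pos.trans_le hx.1)
    rw [integral_sq_div_mul s (by simp)] at h
    have hlog : 0 ≤ Real.log (1 + s ^ 2 / (1 + N : ℝ) ^ 2) :=
      Real.log_nonneg (le_add_of_nonneg_right (by positivity))
    refine le_trans (le_of_eq ?_) (h.trans (by linarith))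
    exact Finset.sum_congr rfl fun n _ ↦ by rw [digammaTerm_two_mul, add_comm 1]

lemma abs_digammaSum_sub_log_le {t : ℝ} (ht : 1 ≤ t) : |digammaSum t - Real.log t| ≤ 2 := by
  have hlower := half_log_le_digammaSum (t / 2)
  have hupper := digammaSum_le_half_log (t / 2)
  rw [mul_div_cancel₀ t two_ne_zero] at hlower hupper
  have hlog_two := Real.log_two_lt_d9
  have hlog_le : Real.log (1 + (t / 2) ^ 2) ≤ 2 * Real.log t + Real.log 2 := by
    rw [← Nat.cast_two, ← Real.log_pow, ← Real.log_mul (by positivity) (by positivity)]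
    exact Real.log_le_log (by positivity) (by push_cast; nlinarith)
  have hle_log : 2 * Real.log t - 2 * Real.log 2 ≤ Real.log (1 + (t / 2) ^ 2) := by
    rw [← mul_sub, ← Real.log_div (by positivity) two_ne_zero, ← Nat.cast_two, ← Real.log_pow]
    exact Real.log_le_log (by positivity) (by simp)
  rw [abs_le]
  constructor <;> linarith

lemma abs_testBump_sub_one_le {v : ℝ} (hv : 0 ≤ v) : |testBump v - 1| ≤ v := by
  have hle := testBump_le_one v
  rw [abs_of_nonpos (by linarith)]
  rcases le_total v 1 with h | h
  · rw [testBump_eq_testProfile ⟨hv, h⟩, testProfile]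
    nlinarith
  · linarith [testBump_nonneg v]

lemma integral_mul_exp_neg_mul {l : ℝ} (hl : 0 < l) :
    ∫ u in Ioi (0 : ℝ), u * Real.exp (-l * u) = 1 / l ^ 2 := by
  simpa [show (2 : ℝ) - 1 = 1 by norm_num] using
    Real.integral_rpow_mul_exp_neg_mul_Ioi (a := 2) two_pos hl

lemma integrableOn_mul_exp_neg_mul {l : ℝ} (hl : 0 < l) :
    IntegrableOn (fun u : ℝ ↦ u * Real.exp (-l * u)) (Ioi 0) := by
  simpa using integrableOn_rpow_mul_exp_neg_mul_rpow (s := 1) (p := 1) (by norm_num) one_pos hl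

lemma abs_testKernel_sub_poissonKer_le {A l : ℝ} (hA : 0 < A) (hl : 0 < l) (t : ℝ) :
    |testKernel A l t - poissonKer l t| ≤ 1 / (A * l ^ 2) := by
  have hwindow : IntegrableOn (fun u ↦ testWindow A l u * Real.cos (u * t)) (Ioi 0) := by
    simpa only [mul_comm t, add_zero] using
      (integrable_mul_cos (integrable_testWindow hA l) t 0).integrableOn
  have hexp : IntegrableOn (fun u ↦ Real.exp (-l * u) * Real.cos (u * t)) (Ioi 0) :=
    (integrableOn_exp_mul_Ioi (neg_neg_of_pos hl) 0).mul_bdd (c := 1) (by fun_prop)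
      (Eventually.of_forall fun _ ↦ Real.abs_cos_le_one _)
  have hbound : 1 / (A * l ^ 2) = ∫ u in Ioi (0 : ℝ), 1 / A * (u * Real.exp (-l * u)) := by
    rw [integral_const_mul, integral_mul_exp_neg_mul hl]
    field_simp
  rw [← setIntegral_testWindow_mul_cos hA l t, ← integral_exp_neg_mul_mul_cos hl t,
    ← integral_sub hwindow hexp, hbound, ← Real.norm_eq_abs]
  refine norm_integral_le_of_norm_le ((integrableOn_mul_exp_neg_mul hl).const_mul _) ?_
  filter_upwards [ae_restrict_mem measurableSet_Ioi] with u (hu : 0 < u)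
  rw [testWindow_of_nonneg A l hu.le, ← sub_mul, ← sub_one_mul, norm_mul, norm_mul,
    Real.norm_eq_abs, Real.norm_eq_abs, Real.norm_eq_abs, abs_of_pos (Real.exp_pos _)]
  calc |testBump (u / A) - 1| * Real.exp (-l * u) * |Real.cos (u * t)|
      ≤ u / A * Real.exp (-l * u) * 1 := by
        gcongr
        · exact abs_testBump_sub_one_le (by positivity)
        · exact Real.abs_cos_le_one _
    _ = 1 / A * (u * Real.exp (-l * u)) := by ring

lemma abs_poissonKer_sub_poissonKer_le {b c : ℝ} (hb : 0 < b) (hbc : b ≤ c) (t : ℝ) :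
    |poissonKer b t - poissonKer c t| ≤ (c - b) / b ^ 2 := by
  have hc : 0 < c := hb.trans_le hbc
  have hfactor : poissonKer b t - poissonKer c t =
      (c - b) * ((b * c - t ^ 2) / ((b ^ 2 + t ^ 2) * (c ^ 2 + t ^ 2))) := by
    unfold poissonKer
    field_simp
    ring
  have hnum : |b * c - t ^ 2| ≤ c ^ 2 + t ^ 2 := by
    rw [abs_le]
    constructor <;> nlinarith [sq_nonneg t]
  rw [hfactor, abs_mul, abs_of_nonneg (sub_nonneg.2 hbc), div_eq_mul_one_div (c - b), abs_div,
    abs_of_pos (by positivity : 0 < (b ^ 2 + t ^ 2) * (c ^ 2 + t ^ 2))]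
  refine mul_le_mul_of_nonneg_left ?_ (sub_nonneg.2 hbc)
  rw [div_le_div_iff₀ (by positivity) (by positivity), one_mul, mul_comm]
  gcongr
  exact le_add_of_nonneg_right (sq_nonneg t)

lemma abs_gammaTerm_sub_digammaTerm_le {A : ℝ} (hA : 1 ≤ A) (t : ℝ) (n : ℕ) :
    |2 / (2 * (n : ℝ) + 2) - 2 * testKernel A (2 * n + 1 / 2) t - digammaTerm t n| ≤
      5 / (2 * (n : ℝ) + 1 / 2) ^ 2 := by
  have hb : (0 : ℝ) < 2 * n + 1 / 2 := by positivity
  have hker := abs_testKernel_sub_poissonKer_le (one_pos.trans_le hA) hb t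
  have hshift := abs_poissonKer_sub_poissonKer_le hb (by linarith : _ ≤ 2 * (n : ℝ) + 2) t
  have hA' : 1 / (A * (2 * (n : ℝ) + 1 / 2) ^ 2) ≤ 1 / (2 * (n : ℝ) + 1 / 2) ^ 2 :=
    one_div_le_one_div_of_le (by positivity) (le_mul_of_one_le_left (by positivity) hA)
  have htri := abs_add_le (testKernel A (2 * n + 1 / 2) t - poissonKer (2 * n + 1 / 2) t)
    (poissonKer (2 * n + 1 / 2) t - poissonKer (2 * n + 2) t)
  have hsum : 5 / (2 * (n : ℝ) + 1 / 2) ^ 2 = 2 * (1 / (2 * (n : ℝ) + 1 / 2) ^ 2 +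
      (2 * n + 2 - (2 * n + 1 / 2)) / (2 * (n : ℝ) + 1 / 2) ^ 2) := by
    rw [← add_div, ← mul_div_assoc]
    ring
  rw [show 2 / (2 * (n : ℝ) + 2) - 2 * testKernel A (2 * n + 1 / 2) t - digammaTerm t n =
    -2 * ((testKernel A (2 * n + 1 / 2) t - poissonKer (2 * n + 1 / 2) t) +
      (poissonKer (2 * n + 1 / 2) t - poissonKer (2 * n + 2) t)) by rw [digammaTerm]; ring,
    abs_mul, abs_neg, abs_two, hsum]
  linarith

lemma summable_five_div_sq : Summable fun n : ℕ ↦ 5 / (2 * (n : ℝ) + 1 / 2) ^ 2 := by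
  have hsq := ((summable_nat_add_iff 1).2
    (Real.summable_one_div_nat_pow (p := 2).2 one_lt_two)).mul_left 20
  refine Summable.of_nonneg_of_le (fun n ↦ by positivity) (fun n ↦ ?_) hsq
  rw [mul_one_div, div_le_div_iff₀ (by positivity) (by positivity)]
  push_cast
  nlinarith [n.cast_nonneg (α := ℝ)]

lemma abs_gammaSum_sub_digammaSum_le {A : ℝ} (hA : 1 ≤ A) (t : ℝ) :
    |gammaSum A t - digammaSum t| ≤ ∑' n : ℕ, 5 / (2 * (n : ℝ) + 1 / 2) ^ 2 := by
  have hsum := (summable_mul_left_iff Real.pi_ne_zero).1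
    (hasSum_gammaSum (one_pos.trans_le hA) t).summable
  rw [gammaSum, digammaSum, ← hsum.tsum_sub (hasSum_digammaTerm t).summable, ← Real.norm_eq_abs]
  exact tsum_of_norm_bounded summable_five_div_sq.hasSum (abs_gammaTerm_sub_digammaTerm_le hA t)

lemma abs_testKernel_neg_half_le {A t : ℝ} (hA : 1 ≤ A) (ht : Real.exp A ≤ t) :
    |testKernel A (-1 / 2) t| ≤ 9 := by
  have ht0 : 0 ≤ t := (Real.exp_pos A).le.trans ht
  have hAt : A ≤ t := by linarith [Real.add_one_le_exp A]
  have hexp : Real.exp (A * (1 / 2)) ≤ t := (Real.exp_le_exp.2 (by linarith)).trans ht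
  have hsq : (1 + A * (1 / 2)) ^ 2 ≤ 9 / 4 * A ^ 2 := by nlinarith
  refine (abs_testKernel_le_div (one_pos.trans_le hA) (-1 / 2) t).trans ?_
  rw [show |(-1 / 2 : ℝ)| = 1 / 2 by norm_num [abs_of_neg], div_le_iff₀ (by positivity)]
  calc 4 * A * Real.exp (A * (1 / 2)) * (1 + A * (1 / 2)) ^ 2
      ≤ 4 * t * t * (9 / 4 * A ^ 2) := by gcongr
    _ ≤ 9 * (1 + (A * t) ^ 2) := by linarith

lemma abs_testKernel_half_le {A : ℝ} (hA : 1 ≤ A) (t : ℝ) : |testKernel A (1 / 2) t| ≤ 6 := by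
  have hker := abs_le.1
    (abs_testKernel_sub_poissonKer_le (one_pos.trans_le hA) one_half_pos (t := t))
  have hle := poissonKer_le_one_div one_half_pos t
  have hnonneg := poissonKer_nonneg one_half_pos.le t
  have hA' : 1 / (A * (1 / 2) ^ 2) ≤ 4 := by
    rw [div_le_iff₀ (by positivity)]
    linarith
  rw [abs_le]
  constructor <;> linarith [hker.1, hker.2]

/-- The zero side of the explicit formula: the sum over all nontrivial zeros of the kernel
`symmKernel A` centred at height `t`. -/
noncomputable def zeroSum (A t : ℝ) : ℝ :=
  ∑' ρ : ℂ, (xiMult ρ : ℝ) * symmKernel A (ρ.re - 1 / 2) (ρ.im - t)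

theorem exists_abs_zeroSum_sub_le : ∃ C, 0 ≤ C ∧ ∀ A t : ℝ, 1 ≤ A → Real.exp A ≤ t →
    |zeroSum A t - (Real.log t - 2 * primeSum A t)| ≤ C := by
  have hS : 0 ≤ ∑' n : ℕ, 5 / (2 * (n : ℝ) + 1 / 2) ^ 2 := tsum_nonneg fun n ↦ by positivity
  refine ⟨32 + |archimedeanConst| + ∑' n : ℕ, 5 / (2 * (n : ℝ) + 1 / 2) ^ 2,
    add_nonneg (by positivity) hS, fun A t hA ht ↦ ?_⟩
  have hA0 : 0 < A := one_pos.trans_le hA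
  rw [zeroSum, (hasSum_xiMult_mul_symmKernel hA0 t).tsum_eq]
  have hγ := abs_le.1 (abs_gammaSum_sub_digammaSum_le hA t)
  have hψ := abs_le.1 (abs_digammaSum_sub_log_le ((Real.one_le_exp hA0.le).trans ht))
  have hhalf := abs_le.1 (abs_testKernel_half_le hA t)
  have hneg := abs_le.1 (abs_testKernel_neg_half_le hA ht)
  have hconst := abs_le.1 (le_refl |archimedeanConst|)
  rw [abs_le]
  constructor <;> linarith [hγ.1, hγ.2, hψ.1, hψ.2, hhalf.1, hhalf.2, hneg.1, hneg.2]

/-! ### The local density of zeros -/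

lemma xiMult_div_le (ρ : ℂ) (t : ℝ) :
    (xiMult ρ : ℝ) / (1 + (ρ.im - t) ^ 2) ≤ 4 * ((xiMult ρ : ℝ) *
      (poissonKer (2 - ρ.re) (ρ.im - t) + poissonKer (1 + ρ.re) (ρ.im - t))) := by
  rcases eq_or_ne (xiMult ρ) 0 with h0 | h0
  · simp [h0]
  obtain ⟨hre0, hre1⟩ := re_mem_Ioo_of_xiMult_ne_zero h0
  have hb : 0 < 2 - ρ.re := by linarith
  have hleft : 1 / (1 + (ρ.im - t) ^ 2) ≤ 4 * poissonKer (2 - ρ.re) (ρ.im - t) := by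
    rw [poissonKer, ← mul_div_assoc, div_le_div_iff₀ (by positivity) (by positivity)]
    nlinarith [sq_nonneg (ρ.im - t)]
  have hright := poissonKer_nonneg (by linarith : 0 ≤ 1 + ρ.re) (ρ.im - t)
  rw [div_eq_mul_one_div, mul_left_comm]
  gcongr
  linarith

lemma summable_xiMult_div (t : ℝ) :
    Summable fun ρ : ℂ ↦ (xiMult ρ : ℝ) / (1 + (ρ.im - t) ^ 2) :=
  Summable.of_nonneg_of_le (fun ρ ↦ by positivity) (fun ρ ↦ xiMult_div_le ρ t)
    ((hasSum_xiMult_mul_poissonKer_eq t).summable.mul_left 4)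

/-- The number of nontrivial zeros near height `t`, smoothed by a Cauchy weight. -/
noncomputable def zeroWeight (t : ℝ) : ℝ :=
  ∑' ρ : ℂ, (xiMult ρ : ℝ) / (1 + (ρ.im - t) ^ 2)

lemma zeroWeight_nonneg (t : ℝ) : 0 ≤ zeroWeight t :=
  tsum_nonneg fun ρ ↦ by positivity

theorem exists_zeroWeight_le :
    ∃ C, 0 < C ∧ ∀ t, zeroWeight t ≤ C * (1 + Real.log (1 + t ^ 2)) := by
  obtain ⟨V, hV⟩ : ∃ V, ∀ τ, |primeCosSum τ| ≤ V := ⟨_, abs_primeCosSum_le⟩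
  have hV0 : 0 ≤ V := (abs_nonneg _).trans (hV 0)
  refine ⟨4 * (4 + |archimedeanConst| + 2 * V), by positivity, fun t ↦ ?_⟩
  have hz := hasSum_xiMult_mul_poissonKer_eq t
  refine ((summable_xiMult_div t).tsum_le_tsum (fun ρ ↦ xiMult_div_le ρ t)
    (hz.summable.mul_left 4)).trans ?_
  rw [tsum_mul_left, hz.tsum_eq, mul_assoc]
  refine mul_le_mul_of_nonneg_left ?_ zero_le_four
  have hψ := digammaSum_le_half_log (t / 2)
  rw [mul_div_cancel₀ t two_ne_zero] at hψ
  have hlog_half : Real.log (1 + (t / 2) ^ 2) ≤ Real.log (1 + t ^ 2) :=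
    Real.log_le_log (by positivity) (by nlinarith [sq_nonneg t])
  have hlog : 0 ≤ Real.log (1 + t ^ 2) := Real.log_nonneg (by nlinarith [sq_nonneg t])
  have hprime := neg_le_of_abs_le (hV t)
  have htwo := poissonKer_le_one_div two_pos t
  have hone := poissonKer_le_one_div one_pos t
  nlinarith [le_abs_self archimedeanConst, abs_nonneg archimedeanConst,
    mul_nonneg (by positivity : 0 ≤ |archimedeanConst| + 2 * V) hlog]

/-! ### Mertens' estimate -/

/-- The sum `∑ Λ(n) / n` over `n ≤ N` of Mertens' first theorem. -/
noncomputable def mertensSum (N : ℕ) : ℝ := ∑ n ∈ Finset.Ioc 0 N, Λ n / n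

lemma sum_vonMangoldt_mul_natDiv (N : ℕ) :
    ∑ n ∈ Finset.Ioc 0 N, Λ n * ((N / n : ℕ) : ℝ) = Real.log N.factorial := by
  have hsum (k : ℕ) : ∑ n ∈ Finset.Ioc 0 k, Λ n * ((k / n : ℕ) : ℝ) =
      ∑ n ∈ Finset.Ioc 0 k, Real.log n := by
    rw [← ArithmeticFunction.sum_Ioc_mul_zeta_eq_sum, ArithmeticFunction.vonMangoldt_mul_zeta]
    rfl
  rw [hsum]
  induction N with
  | zero => simp
  | succ k ih =>
    rw [Finset.sum_Ioc_succ_top k.zero_le, ih, Nat.factorial_succ, Nat.cast_mul,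
      Real.log_mul (by positivity) (by positivity), add_comm]

lemma log_factorial_le_mul_mertensSum (N : ℕ) : Real.log N.factorial ≤ N * mertensSum N := by
  rw [← sum_vonMangoldt_mul_natDiv, mertensSum, Finset.mul_sum]
  refine Finset.sum_le_sum fun n _ ↦ ?_
  rw [mul_div_left_comm]
  exact mul_le_mul_of_nonneg_left Nat.cast_div_le ArithmeticFunction.vonMangoldt_nonneg

lemma mul_mertensSum_le_log_factorial_add_psi (N : ℕ) :
    N * mertensSum N ≤ Real.log N.factorial + Chebyshev.psi N := by
  rw [← sum_vonMangoldt_mul_natDiv, mertensSum, Chebyshev.psi, Nat.floor_natCast, Finset.mul_sum,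
    ← Finset.sum_add_distrib]
  refine Finset.sum_le_sum fun n _ ↦ ?_
  rw [mul_div_left_comm, ← mul_add_one, ← Nat.floor_div_eq_div (K := ℝ)]
  exact mul_le_mul_of_nonneg_left (Nat.lt_floor_add_one _).le ArithmeticFunction.vonMangoldt_nonneg

lemma log_sub_one_le_mertensSum {N : ℕ} (hN : N ≠ 0) : Real.log N - 1 ≤ mertensSum N := by
  have hstirling := Stirling.le_log_factorial_stirling hN
  have hlog : 0 ≤ Real.log N := Real.log_natCast_nonneg N
  have hlog_pi : 0 ≤ Real.log (2 * Real.pi) := Real.log_nonneg (by linarith [Real.pi_gt_three])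
  refine le_of_mul_le_mul_left ?_ (Nat.cast_pos.2 (Nat.pos_of_ne_zero hN))
  linarith [log_factorial_le_mul_mertensSum N]

lemma mertensSum_le_log_add_six {N : ℕ} (hN : N ≠ 0) : mertensSum N ≤ Real.log N + 6 := by
  have hpsi := Chebyshev.psi_le_const_mul_self (x := N) (Nat.cast_nonneg N)
  have hfour : Real.log 4 ≤ 2 := by
    rw [show (4 : ℝ) = 2 ^ 2 by norm_num, Real.log_pow, Nat.cast_two]
    linarith [Real.log_two_lt_d9]
  have hfactorial : Real.log N.factorial ≤ N * Real.log N := by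
    rw [← Real.log_pow]
    exact Real.log_le_log (by positivity) (mod_cast N.factorial_le_pow)
  refine le_of_mul_le_mul_left ?_ (Nat.cast_pos.2 (Nat.pos_of_ne_zero hN))
  nlinarith [mul_mertensSum_le_log_factorial_add_psi N]

lemma abs_mertensSum_floor_exp_sub_le {u : ℝ} (hu : 0 ≤ u) :
    |mertensSum ⌊Real.exp u⌋₊ - u| ≤ 6 := by
  have hN : ⌊Real.exp u⌋₊ ≠ 0 := (Nat.floor_pos.2 (Real.one_le_exp hu)).ne'
  have hN0 : (0 : ℝ) < ⌊Real.exp u⌋₊ := Nat.cast_pos.2 (Nat.pos_of_ne_zero hN)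
  have hle : Real.log ⌊Real.exp u⌋₊ ≤ u :=
    (Real.log_le_iff_le_exp hN0).2 (Nat.floor_le (Real.exp_pos u).le)
  have hlt : u ≤ Real.log 2 + Real.log ⌊Real.exp u⌋₊ := by
    rw [← Real.log_mul two_ne_zero hN0.ne', Real.le_log_iff_exp_le (by positivity), two_mul]
    exact (Nat.lt_floor_add_one _).le.trans
      (add_le_add_right (mod_cast Nat.one_le_iff_ne_zero.2 hN) _)
  have hlog_two := Real.log_two_lt_d9
  rw [abs_le]
  constructor <;> linarith [log_sub_one_le_mertensSum hN, mertensSum_le_log_add_six hN]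

lemma le_floor_exp_iff {n : ℕ} (hn : 0 < n) {u : ℝ} :
    n ≤ ⌊Real.exp u⌋₊ ↔ Real.log n ≤ u := by
  rw [Nat.le_floor_iff (Real.exp_pos u).le, Real.log_le_iff_le_exp (Nat.cast_pos.2 hn)]

/-! ### The mean square of the prime sum -/

lemma sum_mul_comp_log (c : ℕ → ℝ) {A : ℝ} (hA : 0 ≤ A) {W W' : ℝ → ℝ}
    (hW : ∀ u, HasDerivAt W (W' u) u) (hW' : Continuous W') (hWA : W A = 0) :
    ∑ n ∈ Finset.Ioc 0 ⌊Real.exp A⌋₊, c n * W (Real.log n) =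
      ∫ u in 0..A, -W' u * ∑ n ∈ Finset.Ioc 0 ⌊Real.exp u⌋₊, c n := by
  have hlayer {n : ℕ} (hn : n ∈ Finset.Ioc 0 ⌊Real.exp A⌋₊) : W (Real.log n) =
      ∫ u in Ioc 0 A, (Ici (Real.log n)).indicator (fun u ↦ -W' u) u := by
    obtain ⟨hn, hnA⟩ := Finset.mem_Ioc.1 hn
    have hle : Real.log n ≤ A := (le_floor_exp_iff hn).1 hnA
    have hae : (Ioc 0 A ∩ Ici (Real.log n) : Set ℝ) =ᵐ[volume] Ioc (Real.log n) A := by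
      have h := ae_eq_set_inter (ae_eq_refl (Ioc 0 A))
        (Ioi_ae_eq_Ici (μ := volume) (a := Real.log n)).symm
      rwa [Ioc_inter_Ioi, max_eq_right (Real.log_natCast_nonneg n)] at h
    rw [setIntegral_indicator measurableSet_Ici, setIntegral_congr_set hae,
      ← intervalIntegral.integral_of_le hle, intervalIntegral.integral_neg,
      intervalIntegral.integral_eq_sub_of_hasDerivAt
        (fun u _ ↦ hW u) (hW'.intervalIntegrable _ _), hWA, zero_sub, neg_neg]
  have hint (n : ℕ) : IntegrableOn
      (fun u ↦ c n * (Ici (Real.log n)).indicator (fun u ↦ -W' u) u) (Ioc 0 A) :=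
    (hW'.neg.integrableOn_Ioc.indicator measurableSet_Ici).const_mul _
  rw [Finset.sum_congr rfl fun n hn ↦ by rw [hlayer hn, ← integral_const_mul],
    ← integral_finsetSum _ fun n _ ↦ hint n, intervalIntegral.integral_of_le hA]
  refine setIntegral_congr_fun measurableSet_Ioc fun u hu ↦ ?_
  have hfilter : (Finset.Ioc 0 ⌊Real.exp A⌋₊).filter (fun n : ℕ ↦ u ∈ Ici (Real.log n)) =
      Finset.Ioc 0 ⌊Real.exp u⌋₊ := by
    ext n
    rw [Finset.mem_filter, Finset.mem_Ioc, Finset.mem_Ioc, and_assoc]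
    refine and_congr_right fun hn ↦ ?_
    rw [le_floor_exp_iff hn, le_floor_exp_iff hn, mem_Ici, and_iff_right_iff_imp]
    exact fun h ↦ h.trans hu.2
  simp only [indicator_apply, mul_ite, mul_zero]
  rw [← Finset.sum_filter, hfilter, Finset.mul_sum]
  simp only [mul_comm]

lemma hasDerivAt_mul_testProfile_sq (v : ℝ) : HasDerivAt (fun v ↦ v * testProfile v ^ 2)
    (1 - 3 * v + 3 / 16 * v ^ 2 + 3 / 2 * v ^ 3 + 5 / 16 * v ^ 4) v := by
  have hprofile : HasDerivAt testProfile (-(1 + v / 4) + (1 - v) * (1 / 4)) v := by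
    exact (((hasDerivAt_id v).const_sub 1).fun_mul
      (((hasDerivAt_id v).div_const 4).const_add 1)).congr_deriv (by simp only [neg_one_mul, id])
  refine ((hasDerivAt_id v).fun_mul (hprofile.fun_pow 2)).congr_deriv ?_
  simp only [testProfile, id]
  ring

lemma integral_mul_testProfile_sq : ∫ v in (0 : ℝ)..1, v * testProfile v ^ 2 = 97 / 960 := by
  have hexpand (v : ℝ) : v * testProfile v ^ 2 =
      v ^ 1 - 3 / 2 * v ^ 2 + 1 / 16 * v ^ 3 + 3 / 8 * v ^ 4 + 1 / 16 * v ^ 5 := by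
    rw [testProfile]
    ring
  simp only [hexpand]
  rw [intervalIntegral.integral_add, intervalIntegral.integral_add, intervalIntegral.integral_add,
    intervalIntegral.integral_sub]
  · simp only [intervalIntegral.integral_const_mul, integral_pow]
    norm_num
  all_goals exact Continuous.intervalIntegrable (by fun_prop) _ _

lemma sum_vonMangoldt_div_mul_comp_log_le {A : ℝ} (hA : 0 ≤ A) {W W' : ℝ → ℝ}
    (hW : ∀ u, HasDerivAt W (W' u) u) (hW' : Continuous W') (hWA : W A = 0) {M : ℝ}
    (hM : ∀ u ∈ Icc 0 A, |W' u| ≤ M) :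
    ∑ n ∈ Finset.Ioc 0 ⌊Real.exp A⌋₊, Λ n / n * W (Real.log n) ≤
      (∫ u in 0..A, W u) + 6 * M * A := by
  have hmono : Monotone fun u : ℝ ↦ mertensSum ⌊Real.exp u⌋₊ := fun u v huv ↦
    Finset.sum_le_sum_of_subset_of_nonneg
      (Finset.Ioc_subset_Ioc_right (Nat.floor_mono (Real.exp_le_exp.2 huv)))
      fun n _ _ ↦ vonMangoldt_div_nonneg n n.cast_nonneg
  have hparts : ∫ u in 0..A, -W' u * u = ∫ u in 0..A, W u := by
    have h := intervalIntegral.integral_mul_deriv_eq_deriv_mul (fun u _ ↦ hasDerivAt_id u)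
      (fun u _ ↦ hW u) intervalIntegrable_const (hW'.intervalIntegrable 0 A)
    simp only [id, hWA, mul_zero, zero_mul, sub_zero, zero_sub, one_mul] at h
    simp only [neg_mul, mul_comm (W' _)]
    rw [intervalIntegral.integral_neg, h, neg_neg]
  rw [sum_mul_comp_log _ hA hW hW' hWA]
  calc ∫ u in 0..A, -W' u * mertensSum ⌊Real.exp u⌋₊
      ≤ ∫ u in 0..A, (-W' u * u + M * 6) := by
        refine intervalIntegral.integral_mono_on hA
          (hmono.intervalIntegrable.continuousOn_mul hW'.neg.continuousOn)
          (Continuous.intervalIntegrable (by fun_prop) _ _) fun u hu ↦ ?_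
        have herror : |W' u * (mertensSum ⌊Real.exp u⌋₊ - u)| ≤ M * 6 := by
          rw [abs_mul]
          exact mul_le_mul (hM u hu) (abs_mertensSum_floor_exp_sub_le hu.1) (abs_nonneg _)
            ((abs_nonneg _).trans (hM u hu))
        linarith [neg_le_of_abs_le herror]
    _ = (∫ u in 0..A, W u) + 6 * M * A := by
        rw [intervalIntegral.integral_add (Continuous.intervalIntegrable (by fun_prop) _ _)
          intervalIntegrable_const, hparts, intervalIntegral.integral_const, smul_eq_mul]
        ring

theorem sum_primeCoeff_sq_le {A : ℝ} (hA : 0 < A) :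
    ∑ n ∈ Finset.Ioc 0 ⌊Real.exp A⌋₊, primeCoeff A n ^ 2 ≤ 97 / 960 * A ^ 2 + 36 * A := by
  set W : ℝ → ℝ := fun u ↦ A * (u / A * testProfile (u / A) ^ 2) with hWdef
  have hW (u : ℝ) : HasDerivAt W
      (1 - 3 * (u / A) + 3 / 16 * (u / A) ^ 2 + 3 / 2 * (u / A) ^ 3 + 5 / 16 * (u / A) ^ 4) u := by
    have h := ((hasDerivAt_mul_testProfile_sq (u / A)).comp u
      ((hasDerivAt_id u).div_const A)).const_mul A
    exact h.congr_deriv (by rw [mul_one_div, mul_div_cancel₀ _ hA.ne'])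
  have hbound (u : ℝ) (hu : u ∈ Icc 0 A) : |1 - 3 * (u / A) + 3 / 16 * (u / A) ^ 2 +
      3 / 2 * (u / A) ^ 3 + 5 / 16 * (u / A) ^ 4| ≤ 6 := by
    have hv0 : 0 ≤ u / A := div_nonneg hu.1 hA.le
    have hv1 : u / A ≤ 1 := (div_le_one hA).2 hu.2
    have hpow (k : ℕ) : 0 ≤ (u / A) ^ k ∧ (u / A) ^ k ≤ 1 :=
      ⟨pow_nonneg hv0 k, pow_le_one₀ hv0 hv1⟩
    rw [abs_le]
    constructor <;> linarith [hpow 2, hpow 3, hpow 4]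
  have hintegral : ∫ u in 0..A, W u = 97 / 960 * A ^ 2 := by
    rw [hWdef, intervalIntegral.integral_comp_div (fun v ↦ A * (v * testProfile v ^ 2)) hA.ne',
      zero_div, div_self hA.ne', intervalIntegral.integral_const_mul, integral_mul_testProfile_sq,
      smul_eq_mul]
    ring
  have hWA : W A = 0 := by simp [hWdef, testProfile, div_self hA.ne']
  have h := sum_vonMangoldt_div_mul_comp_log_le hA.le hW (by fun_prop) hWA hbound
  rw [hintegral] at h
  refine (Finset.sum_le_sum fun n hn ↦ ?_).trans (h.trans (by linarith))
  obtain ⟨hn0, hnA⟩ := Finset.mem_Ioc.1 hn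
  have hlog : Real.log n / A ∈ Icc (0 : ℝ) 1 :=
    ⟨div_nonneg (Real.log_natCast_nonneg n) hA.le, (div_le_one hA).2 ((le_floor_exp_iff hn0).1 hnA)⟩
  calc primeCoeff A n ^ 2 = Λ n / n * (Λ n * testProfile (Real.log n / A) ^ 2) := by
        rw [primeCoeff, testBump_eq_testProfile hlog, mul_pow, div_pow, Real.sq_sqrt n.cast_nonneg]
        ring
    _ ≤ Λ n / n * (Real.log n * testProfile (Real.log n / A) ^ 2) := by
        refine mul_le_mul_of_nonneg_left ?_ (vonMangoldt_div_nonneg n n.cast_nonneg)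
        gcongr
        exact ArithmeticFunction.vonMangoldt_le_log
    _ = Λ n / n * W (Real.log n) := by
        simp only [hWdef]
        rw [← mul_assoc A, mul_div_cancel₀ _ hA.ne']

lemma primeSum_eq_sum {A : ℝ} (hA : 0 < A) (t : ℝ) : primeSum A t =
    ∑ n ∈ Finset.Ioc 1 ⌊Real.exp A⌋₊, primeCoeff A n * Real.cos (t * Real.log n) := by
  refine tsum_eq_sum fun n hn ↦ mul_eq_zero_of_left ?_ _
  rcases Nat.lt_or_ge 1 n with h1 | h1
  · have hlog : A < Real.log n := lt_of_not_ge fun h ↦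
      hn (Finset.mem_Ioc.2 ⟨h1, (le_floor_exp_iff (one_pos.trans h1)).2 h⟩)
    rw [primeCoeff, testBump_div_eq_zero hA hlog, mul_zero]
  · interval_cases n <;> simp [primeCoeff]

lemma continuous_primeSum {A : ℝ} (hA : 0 < A) : Continuous (primeSum A) := by
  rw [funext (primeSum_eq_sum hA)]
  fun_prop

lemma abs_integral_cos_mul_le (a b : ℝ) {m : ℝ} (hm : m ≠ 0) :
    |∫ t in a..b, Real.cos (t * m)| ≤ 2 / |m| := by
  rw [intervalIntegral.integral_comp_mul_right Real.cos hm, integral_cos, smul_eq_mul, abs_mul,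
    abs_inv, inv_mul_eq_div]
  gcongr
  exact (abs_sub _ _).trans
    (by linarith [Real.abs_sin_le_one (b * m), Real.abs_sin_le_one (a * m)])

lemma abs_sub_div_le_abs_log_sub_log {x y X : ℝ} (hx : 0 < x) (hy : 0 < y) (hxX : x ≤ X)
    (hyX : y ≤ X) : |x - y| / X ≤ |Real.log x - Real.log y| := by
  wlog hyx : y ≤ x generalizing x y
  · rw [abs_sub_comm x, abs_sub_comm (Real.log x)]
    exact this hy hx hyX hxX (le_of_not_ge hyx)
  rw [abs_of_nonneg (sub_nonneg.2 hyx)]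
  calc (x - y) / X ≤ (x - y) / x := div_le_div_of_nonneg_left (sub_nonneg.2 hyx) hx hxX
    _ = 1 - (x / y)⁻¹ := by rw [inv_div, one_sub_div hx.ne']
    _ ≤ Real.log (x / y) := Real.one_sub_inv_le_log_of_pos (div_pos hx hy)
    _ = Real.log x - Real.log y := Real.log_div hx.ne' hy.ne'
    _ ≤ |Real.log x - Real.log y| := le_abs_self _

lemma sum_range_one_div_add_one_le {k N : ℕ} (hk : k ≤ N) :
    ∑ j ∈ Finset.range k, 1 / ((j : ℝ) + 1) ≤ 1 + Real.log N := by
  have hharmonic : ∑ j ∈ Finset.range N, 1 / ((j : ℝ) + 1) ≤ 1 + Real.log N := by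
    simpa [harmonic] using harmonic_le_one_add_log N
  exact (Finset.sum_le_sum_of_subset_of_nonneg (Finset.range_subset_range.2 hk)
    fun j _ _ ↦ by positivity).trans hharmonic

-- The diagonal term `n = m` is `1 / 0 = 0`.
lemma sum_range_one_div_abs_sub_le {m N : ℕ} (hm : m ≤ N) :
    ∑ n ∈ Finset.range (N + 1), 1 / |(m : ℝ) - n| ≤ 2 * (1 + Real.log N) := by
  have hbelow : ∑ n ∈ Finset.range m, 1 / |(m : ℝ) - n| =
      ∑ j ∈ Finset.range m, 1 / ((j : ℝ) + 1) := by
    rw [← Finset.sum_range_reflect]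
    refine Finset.sum_congr rfl fun j hj ↦ ?_
    have hj : j + 1 ≤ m := Finset.mem_range.1 hj
    rw [Nat.sub_sub, add_comm 1 j, Nat.cast_sub hj, sub_sub_cancel, Nat.cast_add_one,
      abs_of_pos (by positivity)]
  have habove (k : ℕ) : ∑ n ∈ Finset.range k, 1 / |(m : ℝ) - (m + (n + 1) : ℕ)| =
      ∑ j ∈ Finset.range k, 1 / ((j : ℝ) + 1) := by
    refine Finset.sum_congr rfl fun j _ ↦ ?_
    rw [Nat.cast_add, sub_add_cancel_left, abs_neg, Nat.cast_add_one, abs_of_pos (by positivity)]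
  obtain ⟨k, rfl⟩ := Nat.exists_eq_add_of_le hm
  rw [add_assoc, Finset.sum_range_add, Finset.sum_range_succ', hbelow, habove]
  simp only [add_zero, sub_self, abs_zero, div_zero]
  linarith [sum_range_one_div_add_one_le hm,
    sum_range_one_div_add_one_le (Nat.le_add_left k m)]

lemma sum_sum_abs_mul_mul_le {ι : Type*} (s : Finset ι) (c : ι → ℝ) {K : ι → ι → ℝ}
    (hK : ∀ i j, 0 ≤ K i j) (hsymm : ∀ i j, K i j = K j i) {B : ℝ}
    (hB : ∀ i ∈ s, ∑ j ∈ s, K i j ≤ B) :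
    ∑ i ∈ s, ∑ j ∈ s, |c i * c j| * K i j ≤ B * ∑ i ∈ s, c i ^ 2 := by
  have hrow (i : ι) (hi : i ∈ s) : ∑ j ∈ s, c i ^ 2 * K i j ≤ B * c i ^ 2 := by
    rw [← Finset.mul_sum, mul_comm B]
    exact mul_le_mul_of_nonneg_left (hB i hi) (sq_nonneg _)
  have hdiag : ∑ i ∈ s, ∑ j ∈ s, c i ^ 2 * K i j ≤ B * ∑ i ∈ s, c i ^ 2 := by
    rw [Finset.mul_sum]
    exact Finset.sum_le_sum hrow
  calc ∑ i ∈ s, ∑ j ∈ s, |c i * c j| * K i j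
      ≤ ∑ i ∈ s, ∑ j ∈ s, (1 / 2 * (c i ^ 2 * K i j) + 1 / 2 * (c j ^ 2 * K j i)) := by
        refine Finset.sum_le_sum fun i _ ↦ Finset.sum_le_sum fun j _ ↦ ?_
        rw [hsymm j i, abs_mul, ← sq_abs (c i), ← sq_abs (c j)]
        nlinarith [mul_nonneg (sq_nonneg (|c i| - |c j|)) (hK i j)]
    _ = ∑ i ∈ s, ∑ j ∈ s, c i ^ 2 * K i j := by
        simp only [Finset.sum_add_distrib]
        rw [Finset.sum_comm (f := fun i j ↦ 1 / 2 * (c j ^ 2 * K j i)), ← Finset.sum_add_distrib]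
        refine Finset.sum_congr rfl fun i _ ↦ ?_
        rw [← Finset.mul_sum, ← add_mul, add_halves, one_mul]
    _ ≤ B * ∑ i ∈ s, c i ^ 2 := hdiag

lemma half_le_log_natCast {n : ℕ} (hn : 2 ≤ n) : 1 / 2 ≤ Real.log n := by
  have h := Real.log_le_log two_pos (by exact_mod_cast hn : (2 : ℝ) ≤ n)
  linarith [Real.log_two_gt_d9]

lemma abs_integral_cos_log_mul_cos_log_sub_le (a b : ℝ) {m n N : ℕ} (hm : 2 ≤ m) (hn : 2 ≤ n)
    (hmN : m ≤ N) (hnN : n ≤ N) :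
    |(∫ t in a..b, Real.cos (t * Real.log m) * Real.cos (t * Real.log n)) -
      if m = n then (b - a) / 2 else 0| ≤ 1 + N * (1 / |(m : ℝ) - n|) := by
  have hprod (t : ℝ) : Real.cos (t * Real.log m) * Real.cos (t * Real.log n) =
      1 / 2 * Real.cos (t * (Real.log m - Real.log n)) +
        1 / 2 * Real.cos (t * (Real.log m + Real.log n)) := by
    rw [mul_sub, mul_add, Real.cos_sub, Real.cos_add]
    ring
  simp only [hprod]
  rw [intervalIntegral.integral_add (Continuous.intervalIntegrable (by fun_prop) _ _)
    (Continuous.intervalIntegrable (by fun_prop) _ _), intervalIntegral.integral_const_mul,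
    intervalIntegral.integral_const_mul]
  have hsum_pos : 1 ≤ Real.log m + Real.log n := by
    linarith [half_le_log_natCast hm, half_le_log_natCast hn]
  have hsum : |∫ t in a..b, Real.cos (t * (Real.log m + Real.log n))| ≤ 2 := by
    refine (abs_integral_cos_mul_le a b (by linarith)).trans ?_
    rw [abs_of_pos (by linarith)]
    exact div_le_self zero_le_two hsum_pos
  rcases eq_or_ne m n with rfl | hmn
  · simp only [sub_self, mul_zero, Real.cos_zero, intervalIntegral.integral_const, smul_eq_mul,
      if_true, abs_zero, div_zero, add_zero]
    rw [mul_one, one_div_mul_eq_div, add_sub_cancel_left, abs_mul, abs_of_pos one_half_pos]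
    linarith
  · have hm0 : (0 : ℝ) < m := by positivity
    have hn0 : (0 : ℝ) < n := by positivity
    have hN0 : (0 : ℝ) < N := hm0.trans_le (mod_cast hmN)
    have hsub : 0 < |(m : ℝ) - n| := abs_pos.2 (sub_ne_zero.2 (Nat.cast_injective.ne hmn))
    have hgap : |(m : ℝ) - n| / N ≤ |Real.log m - Real.log n| :=
      abs_sub_div_le_abs_log_sub_log hm0 hn0 (mod_cast hmN) (mod_cast hnN)
    have hgap_pos : 0 < |(m : ℝ) - n| / N := by positivity
    have hdiff : |∫ t in a..b, Real.cos (t * (Real.log m - Real.log n))| ≤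
        2 * (N * (1 / |(m : ℝ) - n|)) := by
      refine (abs_integral_cos_mul_le a b (abs_pos.1 (hgap_pos.trans_le hgap))).trans ?_
      refine (div_le_div_of_nonneg_left zero_le_two hgap_pos hgap).trans (le_of_eq ?_)
      field_simp
    rw [if_neg hmn, sub_zero]
    refine (abs_add_le _ _).trans ?_
    rw [abs_mul, abs_mul, abs_of_pos one_half_pos]
    linarith

lemma integral_sq_sum_mul_cos_log (c : ℕ → ℝ) (s : Finset ℕ) (a b : ℝ) :
    ∫ t in a..b, (∑ n ∈ s, c n * Real.cos (t * Real.log n)) ^ 2 =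
      ∑ m ∈ s, ∑ n ∈ s,
        c m * c n * ∫ t in a..b, Real.cos (t * Real.log m) * Real.cos (t * Real.log n) := by
  have hsq (t : ℝ) : (∑ n ∈ s, c n * Real.cos (t * Real.log n)) ^ 2 =
      ∑ m ∈ s, ∑ n ∈ s, c m * c n * (Real.cos (t * Real.log m) * Real.cos (t * Real.log n)) := by
    rw [sq, Finset.sum_mul_sum]
    exact Finset.sum_congr rfl fun m _ ↦ Finset.sum_congr rfl fun n _ ↦ mul_mul_mul_comm _ _ _ _
  simp only [hsq]
  rw [intervalIntegral.integral_finsetSum fun m _ ↦ Continuous.intervalIntegrable (by fun_prop) _ _]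
  refine Finset.sum_congr rfl fun m _ ↦ ?_
  rw [intervalIntegral.integral_finsetSum fun n _ ↦ Continuous.intervalIntegrable (by fun_prop) _ _]
  exact Finset.sum_congr rfl fun n _ ↦ intervalIntegral.integral_const_mul _ _

lemma sum_Ioc_one_add_mul_one_div_abs_sub_le {m N : ℕ} (hm : m ≤ N) :
    ∑ n ∈ Finset.Ioc 1 N, (1 + N * (1 / |(m : ℝ) - n|)) ≤ N * (3 + 2 * Real.log N) := by
  have hsub : ∑ n ∈ Finset.Ioc 1 N, 1 / |(m : ℝ) - n| ≤ 2 * (1 + Real.log N) := by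
    refine le_trans (Finset.sum_le_sum_of_subset_of_nonneg (fun n hn ↦ ?_) fun n _ _ ↦ ?_)
      (sum_range_one_div_abs_sub_le hm)
    · exact Finset.mem_range.2 (Nat.lt_succ_of_le (Finset.mem_Ioc.1 hn).2)
    · positivity
  have hcard : ((N - 1 : ℕ) : ℝ) ≤ N := mod_cast N.sub_le 1
  rw [Finset.sum_add_distrib, ← Finset.mul_sum, Finset.sum_const, Nat.card_Ioc, nsmul_one]
  linarith [mul_le_mul_of_nonneg_left hsub (N.cast_nonneg (α := ℝ))]

theorem integral_sq_sum_mul_cos_log_le (c : ℕ → ℝ) (N : ℕ) (a b : ℝ) :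
    ∫ t in a..b, (∑ n ∈ Finset.Ioc 1 N, c n * Real.cos (t * Real.log n)) ^ 2 ≤
      ((b - a) / 2 + N * (3 + 2 * Real.log N)) * ∑ n ∈ Finset.Ioc 1 N, c n ^ 2 := by
  have hpair (m : ℕ) (hm : m ∈ Finset.Ioc 1 N) (n : ℕ) (hn : n ∈ Finset.Ioc 1 N) :
      c m * c n * (∫ t in a..b, Real.cos (t * Real.log m) * Real.cos (t * Real.log n)) ≤
        (if m = n then (b - a) / 2 * c m ^ 2 else 0) +
          |c m * c n| * (1 + N * (1 / |(m : ℝ) - n|)) := by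
    obtain ⟨hm1, hmN⟩ := Finset.mem_Ioc.1 hm
    obtain ⟨hn1, hnN⟩ := Finset.mem_Ioc.1 hn
    have hoff := mul_le_mul_of_nonneg_left
      (abs_integral_cos_log_mul_cos_log_sub_le a b hm1 hn1 hmN hnN) (abs_nonneg (c m * c n))
    rw [← abs_mul, mul_sub] at hoff
    have hdiag : c m * c n * (if m = n then (b - a) / 2 else 0) =
        if m = n then (b - a) / 2 * c m ^ 2 else 0 := by
      split_ifs with h
      · rw [h]
        ring
      · rw [mul_zero]
    rw [← hdiag]
    linarith [le_of_abs_le hoff]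
  have hschur := sum_sum_abs_mul_mul_le (Finset.Ioc 1 N) c
    (K := fun m n : ℕ ↦ 1 + N * (1 / |(m : ℝ) - n|)) (fun m n ↦ by positivity)
    (fun m n ↦ by rw [abs_sub_comm])
    fun m hm ↦ sum_Ioc_one_add_mul_one_div_abs_sub_le (Finset.mem_Ioc.1 hm).2
  rw [integral_sq_sum_mul_cos_log]
  refine (Finset.sum_le_sum fun m hm ↦ Finset.sum_le_sum fun n hn ↦ hpair m hm n hn).trans ?_
  simp only [Finset.sum_add_distrib, Finset.sum_ite_eq]
  rw [Finset.sum_congr rfl fun m hm ↦ if_pos hm, ← Finset.mul_sum, add_mul]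
  exact add_le_add_right hschur _

lemma log_floor_exp_le {A : ℝ} (hA : 0 ≤ A) : Real.log ⌊Real.exp A⌋₊ ≤ A :=
  (le_floor_exp_iff (Nat.floor_pos.2 (Real.one_le_exp hA))).1 le_rfl

theorem integral_primeSum_sq_le {A a b : ℝ} (hA : 0 < A) (hab : a ≤ b) :
    ∫ t in a..b, primeSum A t ^ 2 ≤
      ((b - a) / 2 + Real.exp A * (3 + 2 * A)) * (97 / 960 * A ^ 2 + 36 * A) := by
  have hsum : ∑ n ∈ Finset.Ioc 1 ⌊Real.exp A⌋₊, primeCoeff A n ^ 2 ≤ 97 / 960 * A ^ 2 + 36 * A :=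
    (Finset.sum_le_sum_of_subset_of_nonneg (Finset.Ioc_subset_Ioc_left zero_le_one)
      fun _ _ _ ↦ sq_nonneg _).trans (sum_primeCoeff_sq_le hA)
  simp only [primeSum_eq_sum hA]
  refine (integral_sq_sum_mul_cos_log_le _ _ a b).trans ?_
  refine mul_le_mul ?_ hsum (Finset.sum_nonneg fun _ _ ↦ sq_nonneg _)
    (add_nonneg (by linarith) (by positivity))
  gcongr
  · exact Nat.floor_le (Real.exp_pos A).le
  · exact log_floor_exp_le hA.le

theorem abs_integral_primeSum_le {A : ℝ} (hA : 0 < A) (a b : ℝ) :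
    |∫ t in a..b, primeSum A t| ≤ 2 * Real.exp A := by
  have hterm (n : ℕ) (hn : n ∈ Finset.Ioc 1 ⌊Real.exp A⌋₊) :
      |∫ t in a..b, primeCoeff A n * Real.cos (t * Real.log n)| ≤ 2 := by
    obtain ⟨hn1, -⟩ := Finset.mem_Ioc.1 hn
    have hlog : 0 < Real.log n := Real.log_pos (mod_cast hn1)
    have hcoeff : |primeCoeff A n| ≤ Real.log n := by
      rw [primeCoeff, abs_of_nonneg (mul_nonneg (vonMangoldt_div_nonneg n (Real.sqrt_nonneg _))
        (testBump_nonneg _))]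
      have hsqrt : 1 ≤ √(n : ℝ) := Real.one_le_sqrt.2 (mod_cast hn1.le)
      calc Λ n / √n * testBump (Real.log n / A) ≤ Λ n / √n :=
            mul_le_of_le_one_right (vonMangoldt_div_nonneg n (Real.sqrt_nonneg _))
              (testBump_le_one _)
        _ ≤ Λ n := div_le_self ArithmeticFunction.vonMangoldt_nonneg hsqrt
        _ ≤ Real.log n := ArithmeticFunction.vonMangoldt_le_log
    rw [intervalIntegral.integral_const_mul, abs_mul]
    calc |primeCoeff A n| * |∫ t in a..b, Real.cos (t * Real.log n)|
        ≤ Real.log n * (2 / |Real.log n|) := by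
          gcongr
          exact abs_integral_cos_mul_le a b hlog.ne'
      _ = 2 := by rw [abs_of_pos hlog, mul_div_cancel₀ _ hlog.ne']
  simp only [primeSum_eq_sum hA]
  rw [intervalIntegral.integral_finsetSum fun n _ ↦ Continuous.intervalIntegrable (by fun_prop) _ _]
  refine (Finset.abs_sum_le_sum_abs _ _).trans ((Finset.sum_le_card_nsmul _ _ _ hterm).trans ?_)
  rw [Nat.card_Ioc, nsmul_eq_mul, mul_comm]
  gcongr
  exact (Nat.cast_le.2 (Nat.sub_le _ 1)).trans (Nat.floor_le (Real.exp_pos A).le)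

/-! ### Zeros in the band `T < γ ≤ 2T` -/

lemma zeroBand_finite (T : ℝ) : (zeroBand T).Finite := by
  have hcompact : IsCompact (Icc (0 : ℝ) 1 ×ℂ Icc T (2 * T)) := isCompact_Icc.reProdIm isCompact_Icc
  refine hcompact.inter_riemannZetaZeros_finite.subset ?_
  rintro ρ ⟨⟨hzero, hre, hre'⟩, him, him'⟩
  exact ⟨⟨⟨hre.le, hre'.le⟩, him.le, him'⟩, hzero⟩

/-- The zeros in `zeroBand T`, as a finite set. -/
noncomputable def bandZeros (T : ℝ) : Finset ℂ := (zeroBand_finite T).toFinset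

lemma mem_bandZeros {T : ℝ} {ρ : ℂ} :
    ρ ∈ bandZeros T ↔ xiMult ρ ≠ 0 ∧ T < ρ.im ∧ ρ.im ≤ 2 * T := by
  rw [bandZeros, Set.Finite.mem_toFinset, xiMult_ne_zero_iff]
  rfl

lemma Ntot_eq_sum (T : ℝ) : Ntot T = ∑ ρ ∈ bandZeros T, (xiMult ρ : ℝ) := by
  rw [Ntot, finsum_mem_eq_finite_toFinset_sum _ (zeroBand_finite T)]
  refine Finset.sum_congr rfl fun ρ hρ ↦ ?_
  rw [zetaMult_eq_xiMult ((zeroBand_finite T).mem_toFinset.1 hρ).1]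

open Classical in
lemma NlineSimple_eq_sum (T : ℝ) :
    NlineSimple T = ∑ ρ ∈ bandZeros T, if ρ.re = 1 / 2 ∧ xiMult ρ = 1 then (1 : ℝ) else 0 := by
  have hset : {ρ ∈ zeroBand T | ρ.re = 1 / 2 ∧ zetaMult ρ = 1} =
      ((bandZeros T).filter fun ρ ↦ ρ.re = 1 / 2 ∧ xiMult ρ = 1 : Finset ℂ) := by
    ext ρ
    rw [Finset.mem_coe, Finset.mem_filter, bandZeros, Set.Finite.mem_toFinset]
    refine and_congr_right fun hρ ↦ ?_
    rw [zetaMult_eq_xiMult hρ.1]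
  rw [NlineSimple, hset, finsum_mem_coe_finset, Finset.sum_filter]

open Classical in
/-- The number of pairs of zeros in `zeroBand T` with equal ordinates, counted with
multiplicity. -/
noncomputable def levelPairCount (T : ℝ) : ℝ :=
  ∑ ρ ∈ bandZeros T, ∑ ρ' ∈ bandZeros T,
    if ρ.im = ρ'.im then (xiMult ρ : ℝ) * xiMult ρ' else 0

lemma one_sub_conj_mem_bandZeros {T : ℝ} {ρ : ℂ} (hρ : ρ ∈ bandZeros T) :
    1 - starRingEnd ℂ ρ ∈ bandZeros T := by
  simpa [mem_bandZeros, xiMult_one_sub, xiMult_conj] using mem_bandZeros.1 hρ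

open Classical in
lemma two_mul_xiMult_le_sum_level {T : ℝ} {ρ : ℂ} (hρ : ρ ∈ bandZeros T) :
    2 * (xiMult ρ : ℝ) - (if ρ.re = 1 / 2 ∧ xiMult ρ = 1 then 1 else 0) ≤
      ∑ ρ' ∈ bandZeros T, if ρ.im = ρ'.im then (xiMult ρ : ℝ) * xiMult ρ' else 0 := by
  have hnonneg (ρ' : ℂ) : 0 ≤ if ρ.im = ρ'.im then (xiMult ρ : ℝ) * xiMult ρ' else 0 := by
    split_ifs <;> positivity
  have hself := Finset.single_le_sum (fun ρ' _ ↦ hnonneg ρ') hρ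
  rw [if_pos rfl] at hself
  by_cases hsimple : xiMult ρ = 1
  · by_cases hre : ρ.re = 1 / 2
    · rw [if_pos ⟨hre, hsimple⟩]
      simp only [hsimple, Nat.cast_one] at hself ⊢
      linarith
    · have hne : ρ ≠ 1 - starRingEnd ℂ ρ := fun h ↦ hre <| by
        have h := congrArg Complex.re h
        simp only [Complex.sub_re, Complex.one_re, Complex.conj_re] at h
        linarith
      have hpair := Finset.sum_le_sum_of_subset_of_nonneg (s := {ρ, 1 - starRingEnd ℂ ρ})
        (Finset.insert_subset hρ (Finset.singleton_subset_iff.2 (one_sub_conj_mem_bandZeros hρ)))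
        fun ρ' _ _ ↦ hnonneg ρ'
      rw [Finset.sum_pair hne, if_pos rfl, if_pos (by simp), xiMult_one_sub, xiMult_conj] at hpair
      rw [if_neg fun h ↦ hre h.1]
      simp only [hsimple, Nat.cast_one] at hpair ⊢
      linarith
  · have hmult : (2 : ℝ) ≤ xiMult ρ := by
      have := (mem_bandZeros.1 hρ).1
      exact_mod_cast (by omega : 2 ≤ xiMult ρ)
    rw [if_neg fun h ↦ hsimple h.2, sub_zero]
    exact (mul_le_mul_of_nonneg_right hmult (Nat.cast_nonneg _)).trans hself

-- A zero off the critical line shares its ordinate with its reflection, and a multiple zero with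
-- itself, so every zero that is not both simple and critical is counted at least twice.
theorem two_mul_Ntot_sub_NlineSimple_le (T : ℝ) :
    2 * Ntot T - NlineSimple T ≤ levelPairCount T := by
  classical
  rw [Ntot_eq_sum, NlineSimple_eq_sum, levelPairCount, Finset.mul_sum, ← Finset.sum_sub_distrib]
  exact Finset.sum_le_sum fun ρ hρ ↦ two_mul_xiMult_le_sum_level hρ

/-- The contribution of the zeros in `zeroBand T` to `zeroSum A t`. -/
noncomputable def bandSum (A T t : ℝ) : ℝ :=
  ∑ ρ ∈ bandZeros T, (xiMult ρ : ℝ) * symmKernel A (ρ.re - 1 / 2) (ρ.im - t)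

/-- The contribution of the zeros in `zeroBand T` to `zeroWeight t`. -/
noncomputable def bandWeight (T t : ℝ) : ℝ :=
  ∑ ρ ∈ bandZeros T, (xiMult ρ : ℝ) / (1 + (ρ.im - t) ^ 2)

lemma bandWeight_nonneg (T t : ℝ) : 0 ≤ bandWeight T t := by
  unfold bandWeight
  positivity

lemma integrable_xiMult_mul_symmKernel {A : ℝ} (hA : 0 < A) (ρ : ℂ) :
    Integrable fun t ↦ (xiMult ρ : ℝ) * symmKernel A (ρ.re - 1 / 2) (ρ.im - t) :=
  ((integrable_symmKernel hA _).comp_sub_left _).const_mul _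

lemma integrable_bandSum {A : ℝ} (hA : 0 < A) (T : ℝ) : Integrable (bandSum A T) :=
  integrable_finsetSum _ fun ρ _ ↦ integrable_xiMult_mul_symmKernel hA ρ

theorem integral_bandSum {A : ℝ} (hA : 0 < A) (T : ℝ) :
    ∫ t, bandSum A T t = 2 * Real.pi * Ntot T := by
  unfold bandSum
  rw [integral_finsetSum _ fun ρ _ ↦ integrable_xiMult_mul_symmKernel hA ρ, Ntot_eq_sum,
    Finset.mul_sum]
  refine Finset.sum_congr rfl fun ρ _ ↦ ?_
  rw [integral_const_mul, integral_sub_left_eq_self (symmKernel A (ρ.re - 1 / 2)),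
    integral_symmKernel hA, mul_comm]

lemma bandSum_sq (A T t : ℝ) : bandSum A T t ^ 2 = ∑ ρ ∈ bandZeros T, ∑ ρ' ∈ bandZeros T,
    (xiMult ρ : ℝ) * xiMult ρ' *
      (symmKernel A (ρ.re - 1 / 2) (ρ.im - t) * symmKernel A (ρ'.re - 1 / 2) (ρ'.im - t)) := by
  rw [bandSum, sq, Finset.sum_mul_sum]
  exact Finset.sum_congr rfl fun ρ _ ↦ Finset.sum_congr rfl fun ρ' _ ↦ mul_mul_mul_comm _ _ _ _

lemma integrable_bandSum_sq {A : ℝ} (hA : 0 < A) (T : ℝ) :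
    Integrable fun t ↦ bandSum A T t ^ 2 := by
  simp only [bandSum_sq]
  exact integrable_finsetSum _ fun ρ _ ↦ integrable_finsetSum _ fun ρ' _ ↦
    (integrable_symmKernel_mul_symmKernel hA _ _ _ _).const_mul _

theorem le_integral_bandSum_sq {A T : ℝ} (hA : 0 < A)
    (hre : ∀ ρ ∈ bandZeros T, A * |ρ.re - 1 / 2| ≤ 1 / 100) :
    4 * Real.pi * (A * (181 / 480)) * levelPairCount T ≤ ∫ t, bandSum A T t ^ 2 := by
  have hint (ρ ρ' : ℂ) := (integrable_symmKernel_mul_symmKernel hA (ρ.re - 1 / 2) (ρ'.re - 1 / 2)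
    ρ.im ρ'.im).const_mul ((xiMult ρ : ℝ) * xiMult ρ')
  simp only [bandSum_sq]
  rw [levelPairCount, integral_finsetSum _ fun ρ _ ↦ integrable_finsetSum _ fun ρ' _ ↦ hint ρ ρ',
    Finset.mul_sum]
  refine Finset.sum_le_sum fun ρ hρ ↦ ?_
  rw [integral_finsetSum _ fun ρ' _ ↦ hint ρ ρ', Finset.mul_sum]
  refine Finset.sum_le_sum fun ρ' hρ' ↦ ?_
  rw [integral_const_mul]
  split_ifs with him
  · rw [← him, mul_comm]
    exact mul_le_mul_of_nonneg_left (le_integral_symmKernel_mul_symmKernel_self hA _ _ _)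
      (by positivity)
  · rw [mul_zero]
    exact mul_nonneg (by positivity)
      (integral_symmKernel_mul_symmKernel_nonneg hA (hre ρ hρ) (hre ρ' hρ') _ _)

lemma integrable_bandWeight (T : ℝ) : Integrable (bandWeight T) := by
  refine integrable_finsetSum _ fun ρ _ ↦ ?_
  simpa only [div_eq_mul_inv] using
    (integrable_inv_one_add_sq.comp_sub_left ρ.im).const_mul (xiMult ρ : ℝ)

theorem integral_bandWeight (T : ℝ) : ∫ t, bandWeight T t = Real.pi * Ntot T := by
  have hint (ρ : ℂ) : Integrable fun t ↦ (xiMult ρ : ℝ) * (1 + (ρ.im - t) ^ 2)⁻¹ :=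
    (integrable_inv_one_add_sq.comp_sub_left ρ.im).const_mul _
  simp only [bandWeight, div_eq_mul_inv]
  rw [integral_finsetSum _ fun ρ _ ↦ hint ρ, Ntot_eq_sum, Finset.mul_sum]
  refine Finset.sum_congr rfl fun ρ _ ↦ ?_
  rw [integral_const_mul, integral_sub_left_eq_self (fun y : ℝ ↦ (1 + y ^ 2)⁻¹),
    integral_univ_inv_one_add_sq, mul_comm]

/-! ### Comparison with the explicit formula -/

/-- `A` is an admissible length of the test function for the zeros at height `T`: it is comparable
to `log T`, the bound for `symmKernel A` valid in the whole critical strip is beaten by `T`, and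
the zeros of height more than `√T` are so close to the critical line that `symmKernel A` hardly sees
their distance from it. -/
structure AdmissibleLength (A T : ℝ) : Prop where
  one_le : 1 ≤ A
  le_log : A ≤ Real.log T
  log_le : Real.log T ≤ 2 * A
  exp_half_le : 64 * A * Real.exp (A / 2) * (1 + A) ^ 2 ≤ T
  mul_abs_re_sub_le : ∀ ρ : ℂ, xiMult ρ ≠ 0 → √T < |ρ.im| → A * |ρ.re - 1 / 2| ≤ 1 / 100

/-- The number of endpoints of `[T, 2T]` at distance at most one from `t`. -/
noncomputable def endpointCount (T t : ℝ) : ℝ :=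
  (Icc (T - 1) (T + 1)).indicator 1 t + (Icc (2 * T - 1) (2 * T + 1)).indicator 1 t

/-- A bound, relative to the Cauchy weight `1 / (1 + y ^ 2)`, for the kernel `symmKernel A` at a
zero which is separated from `t` by an endpoint of `[T, 2T]`. -/
noncomputable def leakage (A T t : ℝ) : ℝ := 18 / A + 9 * A * endpointCount T t

lemma endpointCount_nonneg (T t : ℝ) : 0 ≤ endpointCount T t :=
  add_nonneg (indicator_nonneg (fun _ _ ↦ zero_le_one) _)
    (indicator_nonneg (fun _ _ ↦ zero_le_one) _)

lemma endpointCount_le_two (T t : ℝ) : endpointCount T t ≤ 2 := by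
  have h (s : Set ℝ) : s.indicator (1 : ℝ → ℝ) t ≤ 1 :=
    indicator_le_self' (fun _ _ ↦ zero_le_one) t
  unfold endpointCount
  linarith [h (Icc (T - 1) (T + 1)), h (Icc (2 * T - 1) (2 * T + 1))]

lemma one_le_endpointCount {T t : ℝ} (h : |t - T| ≤ 1 ∨ |t - 2 * T| ≤ 1) :
    1 ≤ endpointCount T t := by
  have hnonneg (s : Set ℝ) : 0 ≤ s.indicator (1 : ℝ → ℝ) t :=
    indicator_nonneg (fun _ _ ↦ zero_le_one) t
  have hone {a : ℝ} (ha : |t - a| ≤ 1) : (Icc (a - 1) (a + 1)).indicator (1 : ℝ → ℝ) t = 1 := by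
    rw [abs_sub_comm, mem_Icc_iff_abs_le] at ha
    exact indicator_of_mem ha 1
  unfold endpointCount
  rcases h with h | h <;> rw [hone h]
  · exact le_add_of_nonneg_right (hnonneg _)
  · exact le_add_of_nonneg_left (hnonneg _)

lemma leakage_nonneg {A : ℝ} (hA : 0 ≤ A) (T t : ℝ) : 0 ≤ leakage A T t :=
  add_nonneg (by positivity) (mul_nonneg (by positivity) (endpointCount_nonneg T t))

lemma abs_symmKernel_le_of_mul_abs_le {A x : ℝ} (hA : 0 < A) (hx : A * |x| ≤ 1 / 100) (y : ℝ) :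
    |symmKernel A x y| ≤ 9 * A / (1 + (A * y) ^ 2) := by
  refine (abs_symmKernel_le_div hA x y).trans (div_le_div_of_nonneg_right ?_ (by positivity))
  have hexp : Real.exp (A * |x|) ≤ 100 / 99 := by
    have h := Real.one_sub_le_exp_neg (A * |x|)
    rw [Real.exp_neg, le_inv_comm₀ (by linarith) (Real.exp_pos _)] at h
    exact h.trans ((inv_anti₀ (by norm_num) (by linarith : (99 / 100 : ℝ) ≤ _)).trans (by norm_num))
  have hsq : (1 + A * |x|) ^ 2 ≤ (101 / 100) ^ 2 := by
    gcongr
    linarith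
  calc 8 * A * Real.exp (A * |x|) * (1 + A * |x|) ^ 2
      ≤ 8 * A * (100 / 99) * (101 / 100) ^ 2 := by gcongr
    _ ≤ 9 * A := by linarith

lemma abs_symmKernel_le_leakage {A x y T t : ℝ} (hA : 1 ≤ A) (hx : A * |x| ≤ 1 / 100)
    (h : |t - T| ≤ |y| ∨ |t - 2 * T| ≤ |y|) :
    |symmKernel A x y| ≤ leakage A T t / (1 + y ^ 2) := by
  have hA0 : 0 < A := one_pos.trans_le hA
  refine (abs_symmKernel_le_of_mul_abs_le hA0 hx y).trans ?_
  rcases le_or_gt 1 |y| with hy | hy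
  · have hy2 : 1 ≤ y ^ 2 := (one_le_sq_iff_one_le_abs y).2 hy
    calc 9 * A / (1 + (A * y) ^ 2) ≤ 18 / A / (1 + y ^ 2) := by
          rw [div_div, div_le_div_iff₀ (by positivity) (by positivity)]
          nlinarith [mul_le_mul_of_nonneg_left hy2 (sq_nonneg A)]
      _ ≤ leakage A T t / (1 + y ^ 2) := by
          gcongr
          exact le_add_of_nonneg_right (mul_nonneg (by positivity) (endpointCount_nonneg T t))
  · have hnear : 1 ≤ endpointCount T t :=
      one_le_endpointCount (h.imp (fun h ↦ h.trans hy.le) fun h ↦ h.trans hy.le)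
    calc 9 * A / (1 + (A * y) ^ 2) ≤ 9 * A / (1 + y ^ 2) := by
          rw [mul_pow]
          gcongr
          exact le_mul_of_one_le_left (sq_nonneg y) (one_le_pow₀ hA)
      _ ≤ leakage A T t / (1 + y ^ 2) := by
          gcongr
          exact (le_mul_of_one_le_right (by positivity) hnear).trans
            (le_add_of_nonneg_left (by positivity))

lemma abs_symmKernel_le_one_div_of_low {A x y g T : ℝ} (hA : 1 ≤ A) (hx : |x| ≤ 1 / 2)
    (hg : g ^ 2 ≤ T) (hy : T / 2 ≤ |y|) (hT : 64 * A * Real.exp (A / 2) * (1 + A) ^ 2 ≤ T) :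
    |symmKernel A x y| ≤ 1 / (1 + g ^ 2) := by
  have hA0 : 0 < A := one_pos.trans_le hA
  have hAx : A * |x| ≤ A / 2 := by nlinarith
  have hT1 : 1 ≤ T := by
    have h : 1 * 1 * 1 ≤ A * Real.exp (A / 2) * (1 + A) ^ 2 := by
      gcongr
      · exact Real.one_le_exp (by positivity)
      · exact one_le_pow₀ (by linarith)
    linarith
  have hcoeff : 8 * A * Real.exp (A * |x|) * (1 + A * |x|) ^ 2 ≤ T / 8 := by
    have h : 8 * A * Real.exp (A * |x|) * (1 + A * |x|) ^ 2 ≤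
        8 * A * Real.exp (A / 2) * (1 + A) ^ 2 := by
      gcongr
      linarith
    linarith
  have hAy : (T / 2) ^ 2 ≤ (A * y) ^ 2 := by
    refine sq_le_sq.2 ?_
    rw [abs_mul, abs_of_pos hA0, abs_of_nonneg (by positivity)]
    exact hy.trans (le_mul_of_one_le_left (abs_nonneg y) hA)
  refine (abs_symmKernel_le_div hA0 x y).trans ?_
  rw [div_le_div_iff₀ (by positivity) (by positivity)]
  calc 8 * A * Real.exp (A * |x|) * (1 + A * |x|) ^ 2 * (1 + g ^ 2) ≤ T / 8 * (2 * T) := by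
        gcongr
        linarith
    _ ≤ 1 * (1 + (A * y) ^ 2) := by linarith

namespace AdmissibleLength

variable {A T : ℝ}

lemma pos (h : AdmissibleLength A T) : 0 < A := one_pos.trans_le h.one_le

lemma one_le_log (h : AdmissibleLength A T) : 1 ≤ Real.log T := h.one_le.trans h.le_log

lemma sixteen_le (h : AdmissibleLength A T) : 16 ≤ T := by
  have hA := h.pos
  have hpos : 1 * 1 * 1 ≤ A * Real.exp (A / 2) * (1 + A) ^ 2 := by
    gcongr
    · exact h.one_le
    · exact Real.one_le_exp (by positivity)
    · exact one_le_pow₀ (by linarith)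
  linarith [h.exp_half_le]

lemma exp_le (h : AdmissibleLength A T) : Real.exp A ≤ T :=
  (Real.le_log_iff_exp_le (by linarith [h.sixteen_le])).1 h.le_log

lemma mul_abs_re_sub_le_of_mem (h : AdmissibleLength A T) {ρ : ℂ} (hρ : ρ ∈ bandZeros T) :
    A * |ρ.re - 1 / 2| ≤ 1 / 100 := by
  obtain ⟨hmult, him, -⟩ := mem_bandZeros.1 hρ
  have hT := h.sixteen_le
  refine h.mul_abs_re_sub_le ρ hmult (lt_of_le_of_lt ?_ (him.trans_le (le_abs_self _)))
  exact (Real.sqrt_le_left (by linarith)).2 (by nlinarith)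

lemma abs_bandSum_le (h : AdmissibleLength A T) {t : ℝ} (ht : t ∉ Icc T (2 * T)) :
    |bandSum A T t| ≤ leakage A T t * bandWeight T t := by
  rw [bandSum, bandWeight, Finset.mul_sum]
  refine (Finset.abs_sum_le_sum_abs _ _).trans (Finset.sum_le_sum fun ρ hρ ↦ ?_)
  obtain ⟨-, him, him'⟩ := mem_bandZeros.1 hρ
  have hsep : |t - T| ≤ |ρ.im - t| ∨ |t - 2 * T| ≤ |ρ.im - t| := by
    rcases lt_or_ge t T with htT | htT
    · left
      rw [abs_of_neg (by linarith), abs_of_pos (by linarith)]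
      linarith
    · have htT' : 2 * T < t := lt_of_not_ge fun h' ↦ ht ⟨htT, h'⟩
      right
      rw [abs_of_pos (by linarith), abs_of_neg (by linarith)]
      linarith
  rw [abs_mul, Nat.abs_cast, mul_div_left_comm]
  gcongr
  exact abs_symmKernel_le_leakage h.one_le (h.mul_abs_re_sub_le_of_mem hρ) hsep

lemma abs_symmKernel_le_of_notMem (h : AdmissibleLength A T) {t : ℝ} (ht : t ∈ Icc T (2 * T))
    {ρ : ℂ} (hmult : xiMult ρ ≠ 0) (hρ : ρ ∉ bandZeros T) :
    |symmKernel A (ρ.re - 1 / 2) (ρ.im - t)| ≤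
      leakage A T t / (1 + (ρ.im - t) ^ 2) + 1 / (1 + ρ.im ^ 2) := by
  have hT := h.sixteen_le
  have hsqrt : √T ≤ T / 2 := (Real.sqrt_le_left (by linarith)).2 (by nlinarith)
  have hleak := leakage_nonneg h.pos.le T t
  rcases le_or_gt |ρ.im| (√T) with hlow | hhigh
  · obtain ⟨hre, hre'⟩ := re_mem_Ioo_of_xiMult_ne_zero hmult
    have hsq : ρ.im ^ 2 ≤ T := by
      rw [← sq_abs, ← Real.sq_sqrt (by linarith : 0 ≤ T)]
      gcongr
    refine le_add_of_nonneg_of_le (by positivity) ?_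
    refine abs_symmKernel_le_one_div_of_low h.one_le ?_ hsq ?_ h.exp_half_le
    · exact abs_le.2 ⟨by linarith, by linarith⟩
    · rw [abs_sub_comm]
      linarith [le_abs_self (t - ρ.im), le_abs_self ρ.im, ht.1]
  · refine le_add_of_le_of_nonneg ?_ (by positivity)
    refine abs_symmKernel_le_leakage h.one_le (h.mul_abs_re_sub_le ρ hmult hhigh) ?_
    rcases le_or_gt ρ.im T with him | him
    · left
      rw [abs_of_nonneg (by linarith [ht.1]), abs_of_nonpos (by linarith [ht.1])]
      linarith
    · have him' : 2 * T < ρ.im := lt_of_not_ge fun h' ↦ hρ (mem_bandZeros.2 ⟨hmult, him, h'⟩)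
      right
      rw [abs_of_nonpos (by linarith [ht.2]), abs_of_pos (by linarith [ht.2])]
      linarith

theorem abs_zeroSum_sub_bandSum_le (h : AdmissibleLength A T) {t : ℝ} (ht : t ∈ Icc T (2 * T)) :
    |zeroSum A t - bandSum A T t| ≤ leakage A T t * zeroWeight t + zeroWeight 0 := by
  have hleak := leakage_nonneg h.pos.le T t
  have hzero := (hasSum_xiMult_mul_symmKernel h.pos t).summable
  have hweight := (summable_xiMult_div t).mul_left (leakage A T t)
  have hweight0 := summable_xiMult_div 0
  rw [zeroSum, ← hzero.sum_add_tsum_subtype_compl (bandZeros T), ← bandSum, add_sub_cancel_left,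
    zeroWeight, zeroWeight, ← tsum_mul_left, ← hweight.tsum_add hweight0, ← Real.norm_eq_abs]
  refine (tsum_of_norm_bounded ((hweight.add hweight0).subtype _).hasSum fun ρ ↦ ?_).trans
    ((hweight.add hweight0).tsum_subtype_le _ _ fun ρ ↦ by positivity)
  obtain ⟨ρ, hρ⟩ := ρ
  rcases eq_or_ne (xiMult ρ) 0 with h0 | h0
  · simp [h0]
  simp only [Function.comp_apply, sub_zero, Real.norm_eq_abs, abs_mul, Nat.abs_cast]
  rw [mul_div_left_comm, div_eq_mul_one_div (xiMult ρ : ℝ) (1 + ρ.im ^ 2), ← mul_add]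
  gcongr
  exact h.abs_symmKernel_le_of_notMem ht h0 hρ

end AdmissibleLength

lemma bandWeight_le_zeroWeight (T t : ℝ) : bandWeight T t ≤ zeroWeight t :=
  (summable_xiMult_div t).sum_le_tsum _ fun ρ _ ↦ by positivity

lemma exists_bandWeight_le_bandWeight {T : ℝ} (hT : 0 ≤ T) (t : ℝ) :
    ∃ s ∈ Icc T (2 * T), bandWeight T t ≤ bandWeight T s := by
  have hle {s : ℝ} (hs : ∀ ρ ∈ bandZeros T, |ρ.im - s| ≤ |ρ.im - t|) :
      bandWeight T t ≤ bandWeight T s := by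
    refine Finset.sum_le_sum fun ρ hρ ↦ ?_
    have hsq := sq_le_sq.2 (hs ρ hρ)
    gcongr
  rcases lt_or_ge t T with hlt | hge
  · refine ⟨T, left_mem_Icc.2 (by linarith), hle fun ρ hρ ↦ ?_⟩
    have him := (mem_bandZeros.1 hρ).2.1
    rw [abs_of_pos (by linarith), abs_of_pos (by linarith)]
    linarith
  rcases lt_or_ge (2 * T) t with hlt | hge'
  · refine ⟨2 * T, right_mem_Icc.2 (by linarith), hle fun ρ hρ ↦ ?_⟩
    have him := (mem_bandZeros.1 hρ).2.2
    rw [abs_of_nonpos (by linarith), abs_of_neg (by linarith)]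
    linarith
  · exact ⟨t, ⟨hge, hge'⟩, le_rfl⟩

lemma exists_zeroWeight_le_mul_log :
    ∃ K, 0 ≤ K ∧ ∀ T, 16 ≤ T → ∀ t ∈ Icc T (2 * T), zeroWeight t ≤ K * Real.log T := by
  obtain ⟨C, hC, hweight⟩ := exists_zeroWeight_le
  refine ⟨4 * C, by positivity, fun T hT t ht ↦ (hweight t).trans ?_⟩
  have hlog : 1 ≤ Real.log T := by
    rw [Real.le_log_iff_exp_le (by linarith)]
    linarith [Real.exp_one_lt_d9]
  have hlog_t : Real.log (1 + t ^ 2) ≤ 3 * Real.log T := by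
    have hcube : 3 * Real.log T = Real.log (T ^ 3) := by simp
    rw [hcube]
    refine Real.log_le_log (by positivity) ?_
    nlinarith [mul_le_mul_of_nonneg_left hT (sq_nonneg T),
      pow_le_pow_left₀ (by linarith [ht.1]) ht.2 2]
  rw [mul_right_comm, mul_comm C]
  gcongr
  linarith

lemma exists_bandWeight_le_mul_log :
    ∃ K, 0 ≤ K ∧ ∀ T, 16 ≤ T → ∀ t, bandWeight T t ≤ K * Real.log T := by
  obtain ⟨K, hK, hweight⟩ := exists_zeroWeight_le_mul_log
  refine ⟨K, hK, fun T hT t ↦ ?_⟩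
  obtain ⟨s, hs, hle⟩ := exists_bandWeight_le_bandWeight (by linarith : 0 ≤ T) t
  exact hle.trans ((bandWeight_le_zeroWeight T s).trans (hweight T hT s hs))

/-- The approximation to `bandSum A T` provided by the explicit formula. -/
noncomputable def bandModel (A T t : ℝ) : ℝ :=
  (Icc T (2 * T)).indicator (fun t ↦ Real.log T - 2 * primeSum A t) t

/-- The shape of the majorants for the difference between `bandSum A T` and `bandModel A T`: bounded
on `[T, 2T]`, of size `M` near its endpoints, and decaying with the distance to `[T, 2T]`. -/
noncomputable def bandError (A T M t : ℝ) : ℝ :=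
  (Icc T (2 * T)).indicator 1 t + bandWeight T t / A + M * endpointCount T t

lemma AdmissibleLength.leakage_mul_le {A T : ℝ} (h : AdmissibleLength A T) {K w : ℝ} (hw : 0 ≤ w)
    (hwK : w ≤ K * Real.log T) (t : ℝ) :
    leakage A T t * w ≤ 18 * (w / A) + 9 * K * (Real.log T ^ 2 * endpointCount T t) := by
  have hAw : A * w ≤ Real.log T * (K * Real.log T) :=
    mul_le_mul h.le_log hwK hw (zero_le_one.trans h.one_le_log)
  calc leakage A T t * w = 18 * (w / A) + 9 * (A * w) * endpointCount T t := by
        unfold leakage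
        ring
    _ ≤ 18 * (w / A) + 9 * (Real.log T * (K * Real.log T)) * endpointCount T t := by
        gcongr
        exact endpointCount_nonneg T t
    _ = 18 * (w / A) + 9 * K * (Real.log T ^ 2 * endpointCount T t) := by ring

lemma abs_log_sub_log_le_one {T t : ℝ} (hT : 0 < T) (ht : t ∈ Icc T (2 * T)) :
    |Real.log t - Real.log T| ≤ 1 := by
  rw [← Real.log_div (hT.trans_le ht.1).ne' hT.ne', abs_of_nonneg]
  · refine (Real.log_le_sub_one_of_pos (div_pos (hT.trans_le ht.1) hT)).trans ?_
    rw [sub_le_iff_le_add, div_le_iff₀ hT, one_add_one_eq_two]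
    exact ht.2
  · exact Real.log_nonneg ((one_le_div hT).2 ht.1)

lemma exists_abs_bandSum_sub_bandModel_le : ∃ K, 0 ≤ K ∧ ∀ A T, AdmissibleLength A T → ∀ t,
    |bandSum A T t - bandModel A T t| ≤ K * bandError A T (Real.log T ^ 2) t := by
  obtain ⟨C, hC, hexplicit⟩ := exists_abs_zeroSum_sub_le
  obtain ⟨K₀, hK₀, hzeroWeight⟩ := exists_zeroWeight_le_mul_log
  obtain ⟨K₁, hK₁, hbandWeight⟩ := exists_bandWeight_le_mul_log
  have hweight0 := zeroWeight_nonneg 0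
  refine ⟨C + 36 * K₀ + zeroWeight 0 + 19 + 9 * K₀ + 9 * K₁, by positivity, fun A T h t ↦ ?_⟩
  have hT := h.sixteen_le
  have hA := h.pos
  have hcount : 0 ≤ Real.log T ^ 2 * endpointCount T t :=
    mul_nonneg (sq_nonneg _) (endpointCount_nonneg T t)
  have hquot : 0 ≤ bandWeight T t / A := div_nonneg (bandWeight_nonneg T t) hA.le
  by_cases ht : t ∈ Icc T (2 * T)
  · have hW := hzeroWeight T hT t ht
    have hleak := h.leakage_mul_le (zeroWeight_nonneg t) hW t
    have hWA : zeroWeight t / A ≤ 2 * K₀ := by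
      rw [div_le_iff₀ hA]
      nlinarith [mul_le_mul_of_nonneg_left h.log_le hK₀]
    have hformula := hexplicit A t h.one_le (h.exp_le.trans ht.1)
    have hband := h.abs_zeroSum_sub_bandSum_le ht
    have hlog := abs_log_sub_log_le_one (by linarith) ht
    rw [bandModel, bandError, indicator_of_mem ht, indicator_of_mem ht, Pi.one_apply]
    have htri : |bandSum A T t - (Real.log T - 2 * primeSum A t)| ≤
        C + (leakage A T t * zeroWeight t + zeroWeight 0) + 1 := by
      rw [abs_le] at hformula hband hlog ⊢
      constructor <;> linarith [hformula.1, hformula.2, hband.1, hband.2, hlog.1, hlog.2]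
    nlinarith
  · have hleak := h.leakage_mul_le (bandWeight_nonneg T t) (hbandWeight T hT t) t
    rw [bandModel, bandError, indicator_of_notMem ht, indicator_of_notMem ht, sub_zero, zero_add]
    nlinarith [h.abs_bandSum_le ht]

lemma bandError_sq_le {A T K : ℝ} (hA : 0 ≤ A) {t : ℝ} (hK : bandWeight T t / A ≤ K) (M : ℝ) :
    bandError A T M t ^ 2 ≤ 3 * (2 + K) * bandError A T (M ^ 2) t := by
  have hcount := endpointCount_nonneg T t
  have hcount2 := endpointCount_le_two T t
  have hquot : 0 ≤ bandWeight T t / A := div_nonneg (bandWeight_nonneg T t) hA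
  have hind0 : 0 ≤ (Icc T (2 * T)).indicator (1 : ℝ → ℝ) t :=
    indicator_nonneg (fun _ _ ↦ zero_le_one) t
  have hind1 : (Icc T (2 * T)).indicator (1 : ℝ → ℝ) t ≤ 1 :=
    indicator_le_self' (fun _ _ ↦ zero_le_one) t
  unfold bandError
  set i := (Icc T (2 * T)).indicator (1 : ℝ → ℝ) t
  set q := bandWeight T t / A
  set e := endpointCount T t
  have hM : 0 ≤ M ^ 2 * e := by positivity
  calc (i + q + M * e) ^ 2 ≤ 3 * (i ^ 2 + q ^ 2 + (M * e) ^ 2) := by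
        linarith [sq_nonneg (i - q), sq_nonneg (i - M * e), sq_nonneg (q - M * e)]
    _ = 3 * (i * i + q * q + M ^ 2 * e * e) := by ring
    _ ≤ 3 * (1 * i + K * q + M ^ 2 * e * 2) := by gcongr
    _ ≤ 3 * (2 + K) * (i + q + M ^ 2 * e) := by
        nlinarith [mul_nonneg (hquot.trans hK) hind0, mul_nonneg (hquot.trans hK) hM]

lemma integrable_indicator_one_Icc (a b : ℝ) : Integrable ((Icc a b).indicator (1 : ℝ → ℝ)) :=
  (integrableOn_const measure_Icc_lt_top.ne).integrable_indicator measurableSet_Icc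

lemma integral_indicator_one_Icc {a b : ℝ} (hab : a ≤ b) :
    ∫ t, (Icc a b).indicator (1 : ℝ → ℝ) t = b - a := by
  rw [integral_indicator_one measurableSet_Icc, Real.volume_real_Icc_of_le hab]

lemma integrable_endpointCount (T : ℝ) : Integrable (endpointCount T) :=
  (integrable_indicator_one_Icc _ _).add (integrable_indicator_one_Icc _ _)

lemma integral_endpointCount (T : ℝ) : ∫ t, endpointCount T t = 4 := by
  unfold endpointCount
  rw [integral_add (integrable_indicator_one_Icc _ _) (integrable_indicator_one_Icc _ _),
    integral_indicator_one_Icc (by linarith), integral_indicator_one_Icc (by linarith)]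
  ring

lemma integrable_bandError (A T M : ℝ) : Integrable (bandError A T M) :=
  ((integrable_indicator_one_Icc _ _).add ((integrable_bandWeight T).div_const A)).add
    ((integrable_endpointCount T).const_mul M)

lemma integral_bandError (A : ℝ) {T : ℝ} (hT : 0 ≤ T) (M : ℝ) :
    ∫ t, bandError A T M t = T + Real.pi * Ntot T / A + 4 * M := by
  have hind := integrable_indicator_one_Icc T (2 * T)
  have hweight := (integrable_bandWeight T).div_const A
  unfold bandError
  rw [integral_add (hind.fun_add hweight) ((integrable_endpointCount T).const_mul M),
    integral_add hind hweight, integral_indicator_one_Icc (by linarith), integral_div,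
    integral_bandWeight, integral_const_mul, integral_endpointCount]
  ring

lemma integrable_bandModel {A : ℝ} (hA : 0 < A) (T : ℝ) : Integrable (bandModel A T) :=
  (continuous_const.sub ((continuous_primeSum hA).const_mul 2)).integrableOn_Icc
    |>.integrable_indicator measurableSet_Icc

lemma abs_integral_bandModel_sub_le {A T : ℝ} (hA : 0 < A) (hT : 0 ≤ T) :
    |(∫ t, bandModel A T t) - T * Real.log T| ≤ 4 * Real.exp A := by
  have hcont := (continuous_primeSum hA).const_mul 2
  unfold bandModel
  rw [integral_indicator measurableSet_Icc, integral_Icc_eq_integral_Ioc,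
    ← intervalIntegral.integral_of_le (by linarith), intervalIntegral.integral_sub
      (continuous_const.intervalIntegrable _ _) (hcont.intervalIntegrable _ _),
    intervalIntegral.integral_const, intervalIntegral.integral_const_mul, smul_eq_mul, two_mul T,
    add_sub_cancel_right, sub_sub_cancel_left, abs_neg, abs_mul, abs_two]
  linarith [abs_integral_primeSum_le hA T (T + T)]

lemma bandModel_sq (A T : ℝ) : (fun t ↦ bandModel A T t ^ 2) =
    (Icc T (2 * T)).indicator fun t ↦ (Real.log T - 2 * primeSum A t) ^ 2 := by
  ext t
  by_cases ht : t ∈ Icc T (2 * T) <;> simp [bandModel, ht]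

lemma integrable_bandModel_sq {A : ℝ} (hA : 0 < A) (T : ℝ) :
    Integrable fun t ↦ bandModel A T t ^ 2 := by
  rw [bandModel_sq]
  exact ((continuous_const.sub ((continuous_primeSum hA).const_mul 2)).pow 2).integrableOn_Icc
    |>.integrable_indicator measurableSet_Icc

lemma integral_bandModel_sq_le {A T : ℝ} (hA : 0 < A) (hT : 1 ≤ T) :
    ∫ t, bandModel A T t ^ 2 ≤ T * Real.log T ^ 2 + 8 * Real.log T * Real.exp A +
      4 * ((T / 2 + Real.exp A * (3 + 2 * A)) * (97 / 960 * A ^ 2 + 36 * A)) := by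
  have hcont := continuous_primeSum hA
  have hexpand (t : ℝ) : (Real.log T - 2 * primeSum A t) ^ 2 =
      Real.log T ^ 2 - 4 * Real.log T * primeSum A t + 4 * primeSum A t ^ 2 := by ring
  have hlinear : Continuous fun t ↦ 4 * Real.log T * primeSum A t := hcont.const_mul _
  have hsquare : Continuous fun t ↦ 4 * primeSum A t ^ 2 := (hcont.pow 2).const_mul 4
  have haffine : Continuous fun t ↦ Real.log T ^ 2 - 4 * Real.log T * primeSum A t :=
    continuous_const.sub hlinear
  rw [bandModel_sq, integral_indicator measurableSet_Icc, integral_Icc_eq_integral_Ioc,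
    ← intervalIntegral.integral_of_le (by linarith)]
  simp only [hexpand]
  rw [intervalIntegral.integral_add (haffine.intervalIntegrable _ _)
      (hsquare.intervalIntegrable _ _),
    intervalIntegral.integral_sub (continuous_const.intervalIntegrable _ _)
      (hlinear.intervalIntegrable _ _),
    intervalIntegral.integral_const, intervalIntegral.integral_const_mul,
    intervalIntegral.integral_const_mul, smul_eq_mul, two_mul T, add_sub_cancel_right]
  have hmean := (abs_le.1 (abs_integral_primeSum_le hA T (T + T))).1
  have hsq := integral_primeSum_sq_le hA (by linarith : T ≤ T + T)
  rw [add_sub_cancel_right] at hsq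
  linarith [mul_le_mul_of_nonneg_left hmean (Real.log_nonneg hT)]

theorem exists_abs_two_pi_mul_Ntot_sub_le : ∃ K, 0 ≤ K ∧ ∀ A T, AdmissibleLength A T →
    |2 * Real.pi * Ntot T - T * Real.log T| ≤
      4 * Real.exp A + K * (T + Real.pi * Ntot T / A + 4 * Real.log T ^ 2) := by
  obtain ⟨K, hK, hclose⟩ := exists_abs_bandSum_sub_bandModel_le
  refine ⟨K, hK, fun A T h ↦ ?_⟩
  have hT : 0 ≤ T := by linarith [h.sixteen_le]
  have herror := norm_integral_le_of_norm_le ((integrable_bandError A T _).const_mul K)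
    (Eventually.of_forall fun t ↦ (Real.norm_eq_abs _).trans_le (hclose A T h t))
  rw [integral_sub (integrable_bandSum h.pos T) (integrable_bandModel h.pos T),
    integral_bandSum h.pos, integral_const_mul, integral_bandError A hT, Real.norm_eq_abs] at herror
  refine (abs_sub_le _ (∫ t, bandModel A T t) _).trans ?_
  linarith [abs_integral_bandModel_sub_le h.pos hT]

lemma exists_bandSum_sq_le : ∃ K, 0 ≤ K ∧ ∀ A T, AdmissibleLength A T → ∀ t,
    bandSum A T t ^ 2 ≤
      101 / 100 * bandModel A T t ^ 2 + K * bandError A T (Real.log T ^ 4) t := by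
  obtain ⟨K, -, hclose⟩ := exists_abs_bandSum_sub_bandModel_le
  obtain ⟨K₁, hK₁, hweight⟩ := exists_bandWeight_le_mul_log
  refine ⟨101 * K ^ 2 * (3 * (2 + 2 * K₁)), by positivity, fun A T h t ↦ ?_⟩
  have hquot : bandWeight T t / A ≤ 2 * K₁ := by
    rw [div_le_iff₀ h.pos]
    linarith [hweight T h.sixteen_le t, mul_le_mul_of_nonneg_left h.log_le hK₁]
  have hsq : (bandSum A T t - bandModel A T t) ^ 2 ≤
      K ^ 2 * (3 * (2 + 2 * K₁) * bandError A T ((Real.log T ^ 2) ^ 2) t) := by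
    rw [← sq_abs]
    refine (pow_le_pow_left₀ (abs_nonneg _) (hclose A T h t) 2).trans ?_
    rw [mul_pow]
    gcongr
    exact bandError_sq_le h.pos.le hquot _
  rw [← pow_mul] at hsq
  linarith [sq_nonneg (bandModel A T t - 100 * (bandSum A T t - bandModel A T t))]

theorem exists_mul_levelPairCount_le : ∃ K, 0 ≤ K ∧ ∀ A T, AdmissibleLength A T →
    4 * Real.pi * (A * (181 / 480)) * levelPairCount T ≤
      101 / 100 * (T * Real.log T ^ 2 + 8 * Real.log T * Real.exp A +
        4 * ((T / 2 + Real.exp A * (3 + 2 * A)) * (97 / 960 * A ^ 2 + 36 * A))) +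
      K * (T + Real.pi * Ntot T / A + 4 * Real.log T ^ 4) := by
  obtain ⟨K, hK, hle⟩ := exists_bandSum_sq_le
  refine ⟨K, hK, fun A T h ↦ ?_⟩
  have hT := h.sixteen_le
  have hmodel := (integrable_bandModel_sq h.pos T).const_mul (101 / 100)
  have herror := (integrable_bandError A T (Real.log T ^ 4)).const_mul K
  have hint := integral_mono (integrable_bandSum_sq h.pos T) (hmodel.fun_add herror) (hle A T h)
  rw [integral_add hmodel herror, integral_const_mul, integral_const_mul,
    integral_bandError A (by linarith)] at hint
  linarith [le_integral_bandSum_sq h.pos fun ρ hρ ↦ h.mul_abs_re_sub_le_of_mem hρ,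
    integral_bandModel_sq_le h.pos (by linarith : 1 ≤ T)]

/-! ### The limit -/

lemma eventually_log_mul_abs_re_sub_le_of_abs_im_eq {ε : ℝ}
    (hbox : ∀ᶠ T in atTop, ∀ ρ ∈ zeroBand T, Real.log T * |ρ.re - 1 / 2| ≤ ε) :
    ∀ᶠ y in atTop, ∀ ρ : ℂ, xiMult ρ ≠ 0 → |ρ.im| = y →
      Real.log y * |ρ.re - 1 / 2| ≤ 2 * ε := by
  have hhalf : Tendsto (fun y : ℝ ↦ y / 2) atTop atTop := tendsto_id.atTop_div_const two_pos
  filter_upwards [hhalf.eventually hbox, eventually_ge_atTop 4] with y hbox hy ρ hρ him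
  have hlog : Real.log y ≤ 2 * Real.log (y / 2) := by
    have hsq : 2 * Real.log (y / 2) = Real.log ((y / 2) ^ 2) := by simp
    rw [hsq]
    exact Real.log_le_log (by linarith) (by nlinarith)
  have habove {ρ : ℂ} (hρ : xiMult ρ ≠ 0) (him : ρ.im = y) :
      Real.log y * |ρ.re - 1 / 2| ≤ 2 * ε := by
    have hre := hbox ρ ⟨xiMult_ne_zero_iff.1 hρ, by linarith, by linarith⟩
    linarith [mul_le_mul_of_nonneg_right hlog (abs_nonneg (ρ.re - 1 / 2))]
  rcases abs_eq (by linarith) |>.1 him with him | him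
  · exact habove hρ him
  · simpa using habove (ρ := starRingEnd ℂ ρ) (by rwa [xiMult_conj]) (by simp [him])

lemma eventually_log_mul_abs_re_sub_le {ε : ℝ}
    (hbox : ∀ᶠ T in atTop, ∀ ρ ∈ zeroBand T, Real.log T * |ρ.re - 1 / 2| ≤ ε) :
    ∀ᶠ T in atTop, ∀ ρ : ℂ, xiMult ρ ≠ 0 → √T < |ρ.im| →
      Real.log T * |ρ.re - 1 / 2| ≤ 4 * ε := by
  obtain ⟨y₀, hy₀⟩ := eventually_atTop.1 (eventually_log_mul_abs_re_sub_le_of_abs_im_eq hbox)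
  filter_upwards [Real.tendsto_sqrt_atTop.eventually_ge_atTop y₀, eventually_gt_atTop 0]
    with T hT hT0 ρ hρ him
  have hlog := Real.log_le_log (Real.sqrt_pos.2 hT0) him.le
  rw [Real.log_sqrt hT0.le] at hlog
  linarith [hy₀ _ (hT.trans him.le) ρ hρ rfl,
    mul_le_mul_of_nonneg_right hlog (abs_nonneg (ρ.re - 1 / 2))]

lemma eventually_exp_mul_log_pow_le {a : ℝ} (ha : a < 1) (k : ℕ) :
    ∀ᶠ T in atTop, Real.exp (a * Real.log T) * Real.log T ^ k ≤ T := by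
  have hlittle := (isLittleO_pow_exp_pos_mul_atTop k (sub_pos.2 ha)).bound one_pos
  filter_upwards [Real.tendsto_log_atTop.eventually hlittle, eventually_gt_atTop 0] with T hT hT0
  rw [one_mul, Real.norm_of_nonneg (Real.exp_pos _).le] at hT
  calc Real.exp (a * Real.log T) * Real.log T ^ k
      ≤ Real.exp (a * Real.log T) * Real.exp ((1 - a) * Real.log T) := by
        gcongr
        exact (Real.le_norm_self _).trans hT
    _ = T := by rw [← Real.exp_add, ← add_mul, add_sub_cancel, one_mul, Real.exp_log hT0]

theorem eventually_admissibleLength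
    (hbox : ∀ᶠ T in atTop, ∀ ρ ∈ zeroBand T, Real.log T * |ρ.re - 1 / 2| ≤ 1 / 400) :
    ∀ᶠ T in atTop, AdmissibleLength (24 / 25 * Real.log T) T := by
  filter_upwards [eventually_log_mul_abs_re_sub_le hbox,
    eventually_exp_mul_log_pow_le (by norm_num : (24 / 25 : ℝ) < 1) 4,
    Real.tendsto_log_atTop.eventually_ge_atTop 256] with T hre hexp hlog
  have hone : 1 ≤ 24 / 25 * Real.log T := by linarith
  refine ⟨hone, by linarith, by linarith, ?_, fun ρ hρ him ↦ ?_⟩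
  · calc 64 * (24 / 25 * Real.log T) * Real.exp (24 / 25 * Real.log T / 2) *
          (1 + 24 / 25 * Real.log T) ^ 2
        ≤ 64 * Real.log T * Real.exp (24 / 25 * Real.log T) * (2 * Real.log T) ^ 2 := by
          gcongr <;> linarith
      _ = Real.exp (24 / 25 * Real.log T) * (256 * Real.log T ^ 3) := by ring
      _ ≤ Real.exp (24 / 25 * Real.log T) * (Real.log T * Real.log T ^ 3) := by gcongr
      _ ≤ T := by rwa [← pow_succ']
  · linarith [hre ρ hρ him, mul_nonneg (zero_le_one.trans hone) (abs_nonneg (ρ.re - 1 / 2))]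

lemma linear_mul_quadratic_le {A L : ℝ} (hA : 0 ≤ A) (hAL : A ≤ L) (hL : 1 ≤ L) :
    (3 + 2 * A) * (97 / 960 * A ^ 2 + 36 * A) ≤ 185 * L ^ 3 := by
  have hlinear : 3 + 2 * A ≤ 5 * L := by linarith
  have hquadratic : 97 / 960 * A ^ 2 + 36 * A ≤ 37 * L ^ 2 := by nlinarith
  calc (3 + 2 * A) * (97 / 960 * A ^ 2 + 36 * A) ≤ 5 * L * (37 * L ^ 2) := by gcongr
    _ = 185 * L ^ 3 := by ring

section

variable (hadm : ∀ᶠ T in atTop, AdmissibleLength (24 / 25 * Real.log T) T)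

include hadm

theorem exists_eventually_abs_two_pi_mul_Ntot_sub_le :
    ∃ C, 0 ≤ C ∧ ∀ᶠ T in atTop, |2 * Real.pi * Ntot T - T * Real.log T| ≤ C * T := by
  obtain ⟨K, hK, hN⟩ := exists_abs_two_pi_mul_Ntot_sub_le
  refine ⟨8 + 12 * K, by positivity, ?_⟩
  filter_upwards [hadm, eventually_exp_mul_log_pow_le one_pos 2,
    Real.tendsto_log_atTop.eventually_ge_atTop (2 * K)] with T h hlog_sq hlog
  have hN := hN _ T h
  have hL := h.one_le_log
  rw [zero_mul, Real.exp_zero, one_mul] at hlog_sq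
  set d := |2 * Real.pi * Ntot T - T * Real.log T|
  have hquot : K * (Real.pi * Ntot T / (24 / 25 * Real.log T)) ≤ d / 2 + K * T := by
    rw [← mul_div_assoc, div_le_iff₀ h.pos]
    have hd : 2 * Real.pi * Ntot T ≤ d + T * Real.log T := by
      linarith [le_abs_self (2 * Real.pi * Ntot T - T * Real.log T)]
    nlinarith [mul_le_mul_of_nonneg_left hd hK, abs_nonneg (2 * Real.pi * Ntot T - T * Real.log T),
      mul_nonneg hK (mul_nonneg (by linarith [h.sixteen_le] : 0 ≤ T) (zero_le_one.trans hL))]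
  linarith [h.exp_le, mul_le_mul_of_nonneg_left hlog_sq hK]

theorem exists_eventually_mul_levelPairCount_le :
    ∃ C, ∀ᶠ T in atTop, 2 * Real.pi * (181 / 250 * levelPairCount T) ≤
      101 / 100 * (1 + 2 * (24 / 25) ^ 2 * (97 / 960)) * (T * Real.log T) + C * T := by
  obtain ⟨C, hC, hN⟩ := exists_eventually_abs_two_pi_mul_Ntot_sub_le hadm
  obtain ⟨K, hK, hpair⟩ := exists_mul_levelPairCount_le
  refine ⟨829 + K * (6 + C), ?_⟩
  filter_upwards [hadm, hN, eventually_exp_mul_log_pow_le (by norm_num : (24 / 25 : ℝ) < 1) 3,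
    eventually_exp_mul_log_pow_le one_pos 4] with T h hN hexp_log hlog_pow
  have hpair := hpair _ T h
  have hL := h.one_le_log
  have hA := h.pos
  have hT : 0 ≤ T := by linarith [h.sixteen_le]
  rw [zero_mul, Real.exp_zero, one_mul] at hlog_pow
  set L := Real.log T
  set A := 24 / 25 * L with hAL
  have hTL : T ≤ T * L := le_mul_of_one_le_right hT hL
  have hexp_one : L * Real.exp A ≤ T := by
    rw [mul_comm]
    refine le_trans ?_ hexp_log
    gcongr
    exact le_self_pow₀ hL three_ne_zero
  have hexp_poly : Real.exp A * (3 + 2 * A) * (97 / 960 * A ^ 2 + 36 * A) ≤ 185 * T := by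
    calc Real.exp A * (3 + 2 * A) * (97 / 960 * A ^ 2 + 36 * A)
        = Real.exp A * ((3 + 2 * A) * (97 / 960 * A ^ 2 + 36 * A)) := by ring
      _ ≤ Real.exp A * (185 * L ^ 3) := by
          gcongr _ * ?_
          exact linear_mul_quadratic_le hA.le h.le_log hL
      _ ≤ 185 * T := by linarith
  have hquot : Real.pi * Ntot T / A ≤ (1 + C) * T := by
    rw [div_le_iff₀ hA]
    nlinarith [(abs_le.1 hN).2, mul_nonneg hC (hT.trans hTL), mul_le_mul_of_nonneg_left hTL hC]
  have herror : K * (T + Real.pi * Ntot T / A + 4 * L ^ 4) ≤ K * ((6 + C) * (T * L)) := by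
    gcongr
    nlinarith
  have hmain : T / 2 * (97 / 960 * A ^ 2 + 36 * A) ≤
      (24 / 25) ^ 2 * (97 / 960) / 2 * (T * L * L) + 18 * (T * L) := by
    rw [hAL]
    nlinarith
  have hleft : 4 * Real.pi * (A * (181 / 480)) * levelPairCount T =
      2 * Real.pi * (181 / 250 * levelPairCount T) * L := by
    rw [hAL]
    ring
  refine le_of_mul_le_mul_right ?_ (one_pos.trans_le hL)
  linarith

theorem eventually_levelPairCount_le : ∀ᶠ T in atTop, levelPairCount T ≤ 5 / 3 * Ntot T := by
  obtain ⟨C₁, -, hN⟩ := exists_eventually_abs_two_pi_mul_Ntot_sub_le hadm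
  obtain ⟨C₂, hpair⟩ := exists_eventually_mul_levelPairCount_le hadm
  filter_upwards [hN, hpair, eventually_ge_atTop 1,
    Real.tendsto_log_atTop.eventually_ge_atTop (200 * (C₂ + 181 / 150 * C₁))]
    with T hN hpair hT hlog
  refine le_of_mul_le_mul_left ?_ Real.two_pi_pos
  linarith [neg_le_of_abs_le hN, mul_le_mul_of_nonneg_left hlog (zero_le_one.trans hT),
    mul_nonneg (zero_le_one.trans hT) (Real.log_nonneg hT)]

end

theorem one_third_simple_critical_general
    (hbox : ∀ᶠ T in atTop, ∀ ρ ∈ zeroBand T, Real.log T * |ρ.re - 1 / 2| ≤ 1 / 400) :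
    ∀ᶠ T in atTop, 1 / 3 * Ntot T ≤ NlineSimple T := by
  filter_upwards [eventually_levelPairCount_le (eventually_admissibleLength hbox)] with T hT
  linarith [two_mul_Ntot_sub_NlineSimple_le T]

/-- If all nontrivial zeros with `T < γ ≤ 2T` lie in the box of width `b T / log T`
centered at the critical line, with `b T → 0`, then at least `1/3 + o(1)` of the zeros
(counted with multiplicity) are simple and on the critical line. -/
theorem one_third_simple_critical (b : ℝ → ℝ) (hbpos : ∀ T, 0 < b T)
    (hblim : Tendsto b atTop (nhds 0))
    (hbox : ∀ᶠ T in atTop, ∀ ρ ∈ zeroBand T, |ρ.re - 1/2| < b T / (2 * Real.log T)) :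
    ∃ ε : ℝ → ℝ, Tendsto ε atTop (nhds 0) ∧
      ∀ᶠ T in atTop, (1/3 + ε T) * Ntot T ≤ NlineSimple T := by
  refine ⟨fun _ ↦ 0, tendsto_const_nhds, ?_⟩
  simp only [add_zero]
  refine one_third_simple_critical_general ?_
  filter_upwards [hbox, hblim.eventually (gt_mem_nhds (by norm_num : (0 : ℝ) < 1 / 200)),
    Real.tendsto_log_atTop.eventually_gt_atTop 0] with T hbox hb hlog ρ hρ
  have hre := hbox ρ hρ
  rw [lt_div_iff₀' (by positivity)] at hre
  linarith
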